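/- arXiv:1511.05540 — 8 statements merged into one kernel-verified Lean document; each statement's English description precedes it below -/
import Mathlib

section
/- Let R be a commutative ring, m ≥ 0 and n ≥ 1. Let A be an n×n matrix over the Grassmann algebra E^m, let A₀ ∈ M_n(R) be the matrix of degree-zero homogeneous components of the entries of A, and let f(x) ∈ R[x] be the characteristic polynomial of A₀. Then f(A)^(⌈m/2⌉+1) = 0, where f is applied to A by mapping its coefficients into E^m via the structure map R → E^m and evaluating at A. -/
section Filtration

variable {S : Type*} [Ring S]

/-- The filtration of a ring generated by a filtration `D` and an element `f` of weight two. -/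
def weightedFiltration (D : ℕ → AddSubgroup S) (f : S) (s : ℕ) : AddSubgroup S :=
  AddSubgroup.closure {y | ∃ a b, s ≤ 2 * a + b ∧ ∃ z ∈ D b, y = f ^ a * z}

variable {D : ℕ → AddSubgroup S} {f : S}

lemma weightedFiltration_antitone : Antitone (weightedFiltration D f) := by
  intro s t hst
  apply AddSubgroup.closure_mono
  rintro y ⟨a, b, h, hy⟩
  exact ⟨a, b, hst.trans h, hy⟩

lemma mem_weightedFiltration {s : ℕ} {z : S} (hz : z ∈ D s) : z ∈ weightedFiltration D f s :=
  AddSubgroup.subset_closure ⟨0, s, by simp, z, hz, by simp⟩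

lemma mul_mem_weightedFiltration_add_two {s : ℕ} {z : S} (hz : z ∈ D s) :
    f * z ∈ weightedFiltration D f (s + 2) :=
  AddSubgroup.subset_closure ⟨1, s, by omega, z, hz, by simp⟩

lemma mul_mem_weightedFiltration (hf : ∀ y, Commute f y)
    (hD : ∀ a b x y, x ∈ D a → y ∈ D b → x * y ∈ D (a + b)) {s t r : ℕ} (hr : r ≤ s + t) {x y : S}
    (hx : x ∈ weightedFiltration D f s) (hy : y ∈ weightedFiltration D f t) :
    x * y ∈ weightedFiltration D f r := by
  refine weightedFiltration_antitone hr ?_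
  clear hr
  induction hx using AddSubgroup.closure_induction with
  | zero => simp
  | add u v _ _ hu hv => rw [add_mul]; exact add_mem hu hv
  | neg u _ hu => rw [neg_mul]; exact neg_mem hu
  | mem u hu =>
    obtain ⟨a, b, hab, z, hz, rfl⟩ := hu
    induction hy using AddSubgroup.closure_induction with
    | zero => simp
    | add u v _ _ hu hv => rw [mul_add]; exact add_mem hu hv
    | neg u _ hu => rw [mul_neg]; exact neg_mem hu
    | mem u hu =>
      obtain ⟨c, d, hcd, w, hw, rfl⟩ := hu
      refine AddSubgroup.subset_closure ⟨a + c, b + d, by omega, z * w, hD _ _ _ _ hz hw, ?_⟩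
      rw [mul_assoc, ← mul_assoc z, ← ((hf z).pow_left c).eq, pow_add]
      simp only [mul_assoc]

/-- The words `(P N)^j P` lie deep in the weighted filtration: although `N` has weight one only,
`P N₁ P` is `t P` up to weight three with `t S t = 0`. -/
lemma pow_mul_mem_weightedFiltration (hf : ∀ y, Commute f y)
    (hD : ∀ a b x y, x ∈ D a → y ∈ D b → x * y ∈ D (a + b)) (hD0 : ∀ x, x ∈ D 0)
    {P N₁ N₂ t G : S} (hN₁ : N₁ ∈ D 1) (hN₂ : N₂ ∈ D 1) (hN₂' : N₂ ∈ D 2) (ht : t ∈ D 1)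
    (hG : G ∈ D 1)
    (htt : ∀ y, t * y * t = 0) (hP : P * N₁ * P = t * P + f * G) (j : ℕ) :
    (P * (N₁ + N₂)) ^ j * P ∈ weightedFiltration D f (2 * j - 1) := by
  set F := weightedFiltration D f
  set N := N₁ + N₂ with hN
  have mulF : ∀ {s t : ℕ} (r : ℕ) {x y : S}, x ∈ F s → y ∈ F t → r ≤ s + t → x * y ∈ F r :=
    fun r _ _ hx hy h => mul_mem_weightedFiltration hf hD h hx hy
  have F0 : ∀ x, x ∈ F 0 := fun x => mem_weightedFiltration (hD0 x)
  have FN : N ∈ F 1 := mem_weightedFiltration (add_mem hN₁ hN₂)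
  have Ft : t ∈ F 1 := mem_weightedFiltration ht
  have FfG : f * G ∈ F 3 := mul_mem_weightedFiltration_add_two hG
  have FPN₂ : P * N₂ ∈ F 2 := mulF 2 (F0 P) (mem_weightedFiltration hN₂') le_rfl
  have hPNP : P * N * P = t * P + f * G + P * N₂ * P := by
    rw [hN, mul_add, add_mul, hP]
  have key : ∀ j, ((P * N) ^ j * P ∈ F (2 * j - 1) ∧
        ∀ s y, y ∈ F s → t * y * ((P * N) ^ j * P) ∈ F (s + 2 * j + 1)) ∧
      ((P * N) ^ (j + 1) * P ∈ F (2 * (j + 1) - 1) ∧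
        ∀ s y, y ∈ F s → t * y * ((P * N) ^ (j + 1) * P) ∈ F (s + 2 * (j + 1) + 1)) := by
    intro j
    induction j with
    | zero =>
      refine ⟨⟨F0 _, fun s y hy => ?_⟩, ?_, fun s y hy => ?_⟩
      · exact mulF _ (mulF (s + 1) Ft hy (by omega)) (F0 _) (by omega)
      · simpa using mulF 1 (mulF 1 (F0 P) FN (by omega)) (F0 P) (by omega)
      · rw [zero_add, pow_one, hPNP]
        have : t * y * (t * P + f * G + P * N₂ * P) =
            t * y * t * P + t * y * (f * G) + t * y * (P * N₂) * P := by noncomm_ring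
        rw [this, htt, zero_mul, zero_add]
        have hty := mulF (s + 1) Ft hy (by omega)
        exact add_mem (mulF _ hty FfG (by omega))
          (mulF _ (mulF (s + 3) hty FPN₂ (by omega)) (F0 P) (by omega))
    | succ j ih =>
      obtain ⟨⟨a₀, b₀⟩, a₁, b₁⟩ := ih
      refine ⟨⟨a₁, b₁⟩, ?_⟩
      set W₀ := (P * N) ^ j * P with hW₀
      set W₁ := (P * N) ^ (j + 1) * P with hW₁
      have h₁ : W₁ = P * N * W₀ := by rw [hW₁, hW₀, pow_succ', mul_assoc]
      have h₂ : (P * N) ^ (j + 1 + 1) * P = t * W₁ + f * G * N * W₀ + P * N₂ * W₁ := by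
        have e : (P * N) ^ (j + 1 + 1) * P = P * N * P * (N * W₀) := by
          rw [pow_succ', mul_assoc, ← hW₁, h₁]; noncomm_ring
        rw [e, hPNP, h₁]; noncomm_ring
      rw [h₂]
      constructor
      · refine add_mem (add_mem ?_ ?_) ?_
        · have := b₁ 0 1 (F0 1)
          rw [mul_one] at this
          exact weightedFiltration_antitone (by omega) this
        · exact mulF _ (mulF 4 FfG FN (by omega)) a₀ (by omega)
        · exact mulF _ FPN₂ a₁ (by omega)
      · intro s y hy
        have e : t * y * (t * W₁ + f * G * N * W₀ + P * N₂ * W₁) =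
            t * y * t * W₁ + t * (y * (f * G * N)) * W₀ + t * (y * (P * N₂)) * W₁ := by
          noncomm_ring
        rw [e, htt, zero_mul, zero_add]
        refine add_mem ?_ ?_
        · exact weightedFiltration_antitone (by omega)
            (b₀ (s + 4) _ (mulF _ hy (mulF 4 FfG FN (by omega)) (by omega)))
        · exact weightedFiltration_antitone (by omega)
            (b₁ (s + 2) _ (mulF _ hy FPN₂ (by omega)))
  exact (key j).1.1

lemma exists_pow_mul_eq_of_mem_weightedFiltration {m : ℕ} (hDm : ∀ b, m < b → ∀ x ∈ D b, x = 0)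
    {c e s : ℕ} (hc : ∀ a b, s ≤ 2 * a + b → b ≤ m → e ≤ c + a) {x : S}
    (hx : x ∈ weightedFiltration D f s) : ∃ q, f ^ c * x = f ^ e * q := by
  induction hx using AddSubgroup.closure_induction with
  | zero => exact ⟨0, by simp⟩
  | add u v _ _ hu hv =>
    obtain ⟨p, hp⟩ := hu
    obtain ⟨q, hq⟩ := hv
    exact ⟨p + q, by rw [mul_add, mul_add, hp, hq]⟩
  | neg u _ hu =>
    obtain ⟨p, hp⟩ := hu
    exact ⟨-p, by rw [mul_neg, mul_neg, hp]⟩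
  | mem u hu =>
    obtain ⟨a, b, hab, z, hz, rfl⟩ := hu
    rcases lt_or_ge m b with h | h
    · exact ⟨0, by rw [hDm b h z hz]; simp⟩
    · refine ⟨f ^ (c + a - e) * z, ?_⟩
      rw [← mul_assoc, ← mul_assoc, ← pow_add, ← pow_add, Nat.add_sub_cancel' (hc a b hab h)]

lemma exists_pow_eq_mul_sub (hf : ∀ y, Commute f y) (hreg : IsLeftRegular f)
    (hD : ∀ a b x y, x ∈ D a → y ∈ D b → x * y ∈ D (a + b)) (hD0 : ∀ x, x ∈ D 0)
    {m : ℕ} (hDm : ∀ b, m < b → ∀ x ∈ D b, x = 0)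
    {P B N₁ N₂ t G : S} (hPB : P * B = f) (hN₁ : N₁ ∈ D 1) (hN₂ : N₂ ∈ D 1) (hN₂' : N₂ ∈ D 2)
    (ht : t ∈ D 1) (hG : G ∈ D 1) (htt : ∀ y, t * y * t = 0)
    (hP : P * N₁ * P = t * P + f * G) :
    ∃ Q, f ^ ((m + 1) / 2 + 1) = Q * (B - (N₁ + N₂)) := by
  set N := N₁ + N₂
  set e := m - (m + 1) / 2 with he
  have hW : ∀ j, ∃ q, j ≤ m → f ^ (m - j) * ((P * N) ^ j * P) = f ^ e * q := by
    intro j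
    by_cases hj : j ≤ m
    · obtain ⟨q, hq⟩ := exists_pow_mul_eq_of_mem_weightedFiltration (c := m - j) (e := e) hDm
        (fun a b _ _ => by omega)
        (pow_mul_mem_weightedFiltration hf hD hD0 hN₁ hN₂ hN₂' ht hG htt hP j)
      exact ⟨q, fun _ => hq⟩
    · exact ⟨0, fun h => absurd h hj⟩
  choose q hq using hW
  have hNpow : ∀ j, (P * N) ^ j ∈ D j := by
    intro j
    induction j with
    | zero => exact hD0 _
    | succ j ih =>
      rw [pow_succ]
      exact hD _ _ _ _ ih (by simpa using hD 0 1 _ _ (hD0 P) (add_mem hN₁ hN₂))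
  have tele : ∀ J, (∑ j ∈ Finset.range (J + 1), f ^ (J - j) * ((P * N) ^ j * P)) * (B - N) =
      f ^ (J + 1) - (P * N) ^ (J + 1) := by
    intro J
    have h : ∀ j, ((P * N) ^ j * P) * (B - N) = f * (P * N) ^ j - (P * N) ^ (j + 1) := by
      intro j
      rw [mul_sub, mul_assoc, hPB, (hf _).eq, pow_succ, mul_assoc _ P N]
    induction J with
    | zero => rw [Finset.sum_range_one, mul_assoc, h]; simp
    | succ J ih =>
      rw [Finset.sum_range_succ, add_mul]
      have : ∑ j ∈ Finset.range (J + 1), f ^ (J + 1 - j) * ((P * N) ^ j * P) =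
          f * ∑ j ∈ Finset.range (J + 1), f ^ (J - j) * ((P * N) ^ j * P) := by
        rw [Finset.mul_sum]
        refine Finset.sum_congr rfl fun j hj => ?_
        rw [← mul_assoc f, ← pow_succ', Nat.sub_add_comm (by simp at hj; omega)]
      rw [this, mul_assoc, ih, mul_assoc, h]
      simp [mul_sub, ← pow_succ']
  refine ⟨∑ j ∈ Finset.range (m + 1), q j, ?_⟩
  apply hreg.pow e
  have h := tele m
  rw [hDm (m + 1) (by omega) _ (hNpow _), sub_zero, Finset.sum_congr rfl
    fun j hj => hq j (by simp at hj; omega), ← Finset.mul_sum, mul_assoc] at h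
  simp only [h, ← pow_add]
  congr 1
  omega

end Filtration

/-- Two-by-two minors of the adjugate are divisible by the determinant. -/
lemma Matrix.exists_adjugate_mul_single_mul_adjugate {ι R : Type*} [Fintype ι] [DecidableEq ι]
    [CommRing R] (B : Matrix ι ι R) (k l : ι) :
    ∃ G : Matrix ι ι R, B.adjugate * Matrix.single k l 1 * B.adjugate =
      B.adjugate l k • B.adjugate + B.det • G := by
  suffices h : ∀ i j, ∃ g, B.adjugate i k * B.adjugate l j =
      B.adjugate l k * B.adjugate i j + B.det * g by
    choose g hg using h
    refine ⟨Matrix.of g, ?_⟩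
    ext i j
    simp [Matrix.mul_apply, Matrix.single_apply, hg, ite_and]
  intro i j
  rcases eq_or_ne k j with rfl | hkj
  · exact ⟨0, by ring⟩
  refine ⟨((B.updateRow k (Pi.single i 1)).updateRow j (Pi.single l 1)).det, ?_⟩
  have hrow : ∑ c, B.adjugate l c • B c = B.det • Pi.single l (1 : R) := by
    ext c
    simpa [Matrix.mul_apply, Matrix.one_apply, Pi.single_apply, eq_comm] using
      congrFun (congrFun B.adjugate_mul l) c
  have hd : B.det * ((B.updateRow k (Pi.single i 1)).updateRow j (Pi.single l 1)).det =
      ∑ c, B.adjugate l c * ((B.updateRow k (Pi.single i 1)).updateRow j (B c)).det := by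
    rw [← Matrix.det_updateRow_smul, ← hrow]
    exact (Matrix.detRowAlternating.map_update_sum _ _ _ _).trans
      (Finset.sum_congr rfl fun c _ => Matrix.det_updateRow_smul _ _ _ _)
  have hj : ((B.updateRow k (Pi.single i 1)).updateRow j (B j)).det = B.adjugate i k := by
    rw [Matrix.adjugate_apply]
    congr 1
    ext a b
    by_cases ha : a = j
    · subst ha; simp [hkj.symm]
    · simp [Matrix.updateRow_apply, ha]
  have hk : ((B.updateRow k (Pi.single i 1)).updateRow j (B k)).det = - B.adjugate i j := by
    have h := Matrix.det_permute (Equiv.swap k j) (B.updateRow j (Pi.single i 1))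
    rw [Equiv.Perm.sign_swap hkj] at h
    rw [Matrix.adjugate_apply, ← neg_one_mul]
    refine Eq.trans ?_ (h.trans (by simp))
    congr 1
    ext a b
    rw [Matrix.submatrix_apply, Equiv.swap_apply_def]
    by_cases haj : a = j
    · subst haj; simp [hkj, hkj.symm]
    · by_cases hak : a = k
      · subst hak; simp [haj]
      · simp [haj, hak]
  have h0 : ∀ c, c ≠ j → c ≠ k →
      ((B.updateRow k (Pi.single i 1)).updateRow j (B c)).det = 0 := by
    intro c hcj hck
    refine Matrix.det_zero_of_row_eq hcj ?_
    simp [hcj, hck]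
  rw [hd, ← Finset.add_sum_erase _ _ (Finset.mem_univ j), ← Finset.add_sum_erase _ _
    (Finset.mem_erase.2 ⟨hkj, Finset.mem_univ k⟩), Finset.sum_eq_zero, hj, hk]
  · ring
  · intro c hc
    simp only [Finset.mem_erase, Finset.mem_univ, and_true] at hc
    rw [h0 c hc.2 hc.1, mul_zero]

section Exterior

variable {R M : Type*} [CommRing R] [AddCommGroup M] [Module R M]

open ExteriorAlgebra

lemma ExteriorAlgebra.ι_mul_eq_involute_mul_ι (v : M) (y : ExteriorAlgebra R M) :
    ι R v * y = CliffordAlgebra.involute y * ι R v := by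
  induction y using ExteriorAlgebra.induction with
  | algebraMap r =>
    rw [show CliffordAlgebra.involute (algebraMap R (ExteriorAlgebra R M) r) = algebraMap R _ r from
      AlgHom.commutes _ _]
    exact (Algebra.commutes r _).symm
  | ι w =>
    rw [show CliffordAlgebra.involute (ι R w) = -ι R w from CliffordAlgebra.involute_ι _, neg_mul]
    exact eq_neg_of_add_eq_zero_left (ι_add_mul_swap v w)
  | mul a b ha hb => rw [← mul_assoc, ha, mul_assoc, hb, ← mul_assoc, map_mul]
  | add a b ha hb => rw [mul_add, ha, hb, map_add, add_mul]

lemma ExteriorAlgebra.ι_mul_mul_ι (v : M) (y : ExteriorAlgebra R M) : ι R v * y * ι R v = 0 := by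
  rw [ι_mul_eq_involute_mul_ι, mul_assoc, ι_sq_zero, mul_zero]

variable (R M) in
/-- Elements of the exterior algebra all of whose components have degree at least `b`. -/
def ExteriorAlgebra.degreeGE (b : ℕ) : Submodule R (ExteriorAlgebra R M) :=
  ⨆ i : ℕ, ⋀[R]^(b + i) M

lemma ExteriorAlgebra.exteriorPower_le_degreeGE {b i : ℕ} (h : b ≤ i) :
    ⋀[R]^i M ≤ degreeGE R M b := by
  obtain ⟨j, rfl⟩ := Nat.exists_eq_add_of_le h
  exact le_iSup (fun i : ℕ => ⋀[R]^(b + i) M) j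

lemma ExteriorAlgebra.degreeGE_mul_le (a b : ℕ) :
    degreeGE R M a * degreeGE R M b ≤ degreeGE R M (a + b) := by
  rw [degreeGE, degreeGE, Submodule.iSup_mul]
  refine iSup_le fun i => ?_
  rw [Submodule.mul_iSup]
  refine iSup_le fun j => ?_
  rw [← pow_add]
  exact exteriorPower_le_degreeGE (by omega)

lemma ExteriorAlgebra.mem_degreeGE_of_decompose {b : ℕ} {x : ExteriorAlgebra R M}
    (h : ∀ i < b, (DirectSum.decompose (fun i : ℕ => ⋀[R]^i M) x i : ExteriorAlgebra R M) = 0) :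
    x ∈ degreeGE R M b := by
  classical
  rw [← DirectSum.sum_support_decompose (fun i : ℕ => ⋀[R]^i M) x]
  refine sum_mem fun i _ => ?_
  rcases lt_or_ge i b with hi | hi
  · rw [h i hi]; exact zero_mem _
  · exact exteriorPower_le_degreeGE hi (SetLike.coe_mem _)

lemma ExteriorAlgebra.sub_decompose_mem_degreeGE_two (x : ExteriorAlgebra R M) :
    x - DirectSum.decompose (fun i : ℕ => ⋀[R]^i M) x 0 -
      DirectSum.decompose (fun i : ℕ => ⋀[R]^i M) x 1 ∈ degreeGE R M 2 := by
  refine mem_degreeGE_of_decompose fun d hd => ?_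
  rw [DirectSum.decompose_sub, DirectSum.decompose_sub, DirectSum.decompose_coe,
    DirectSum.decompose_coe]
  interval_cases d <;> simp [DirectSum.of_eq_of_ne]

lemma ExteriorAlgebra.exteriorPower_pi_eq_bot {m i : ℕ} (h : m < i) :
    ⋀[R]^i (Fin m → R) = ⊥ := by
  rw [← ιMulti_span_fixedDegree, Submodule.span_eq_bot]
  have : ExteriorAlgebra.ιMulti R (M := Fin m → R) i = 0 := by
    refine Module.Basis.ext_alternating (Pi.basisFun R (Fin m)) fun v hv => ?_
    have := Fintype.card_le_of_injective v hv
    simp at this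
    omega
  rintro _ ⟨v, rfl⟩
  rw [this]
  rfl

lemma ExteriorAlgebra.degreeGE_pi_eq_bot {m b : ℕ} (h : m < b) : degreeGE R (Fin m → R) b = ⊥ :=
  iSup_eq_bot.2 fun _ => exteriorPower_pi_eq_bot (by omega)

end Exterior

/-- If `a i * y * a i = 0` for all `i` and `a i * y * a j` is antisymmetric in `i` and `j`, then
`t * y * t = 0` for every combination `t` of the `a i` with central coefficients. -/
lemma sum_mul_mul_sum_eq_zero {S ι : Type*} [Ring S] (s : Finset ι) (p a : ι → S) (y : S)
    (hp : ∀ i z, Commute (p i) z) (ha : ∀ i, a i * y * a i = 0)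
    (hab : ∀ i j, a i * y * a j + a j * y * a i = 0) :
    (∑ i ∈ s, p i * a i) * y * ∑ i ∈ s, p i * a i = 0 := by
  classical
  have hc : ∀ i j, p i * a i * y * (p j * a j) = p i * p j * (a i * y * a j) := by
    intro i j
    rw [← mul_assoc, mul_assoc _ y, ← (hp j y).eq, mul_assoc (p i), ← mul_assoc (a i),
      ← (hp j (a i)).eq]
    noncomm_ring
  induction s using Finset.induction_on with
  | empty => simp
  | insert i s hi ih =>
    rw [Finset.sum_insert hi]
    set T := ∑ i ∈ s, p i * a i with hT
    have cross : p i * a i * y * T + T * y * (p i * a i) = 0 := by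
      rw [hT, Finset.mul_sum, Finset.sum_mul, Finset.sum_mul, ← Finset.sum_add_distrib]
      refine Finset.sum_eq_zero fun j _ => ?_
      rw [hc, hc, (hp j (p i)).eq, ← mul_add, hab, mul_zero]
    calc (p i * a i + T) * y * (p i * a i + T) = p i * a i * y * (p i * a i)
        + (p i * a i * y * T + T * y * (p i * a i)) + T * y * T := by noncomm_ring
      _ = 0 := by rw [hc, ha, cross, ih]; simp

section PolynomialMatrix

open Polynomial

variable {ι R E : Type*} [Fintype ι] [DecidableEq ι] [CommRing R] [Ring E] [Algebra R E]

/-- Polynomials with matrix coefficients whose entries lie in a given submodule. -/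
def Submodule.polynomialMatrix (D : Submodule R E) : AddSubgroup (Matrix ι ι E)[X] where
  carrier := {p | ∀ q i j, p.coeff q i j ∈ D}
  zero_mem' := by simp
  add_mem' hx hy q i j := by simpa using add_mem (hx q i j) (hy q i j)
  neg_mem' hx q i j := by simpa using hx q i j

lemma Submodule.mem_polynomialMatrix {D : Submodule R E} {p : (Matrix ι ι E)[X]} :
    p ∈ D.polynomialMatrix ↔ ∀ q i j, p.coeff q i j ∈ D := Iff.rfl

lemma Submodule.mul_mem_polynomialMatrix {D₁ D₂ D₃ : Submodule R E} (h : D₁ * D₂ ≤ D₃)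
    {x y : (Matrix ι ι E)[X]} (hx : x ∈ D₁.polynomialMatrix) (hy : y ∈ D₂.polynomialMatrix) :
    x * y ∈ D₃.polynomialMatrix := by
  intro q i j
  rw [coeff_mul, Matrix.sum_apply]
  refine sum_mem fun c _ => ?_
  rw [Matrix.mul_apply]
  exact sum_mem fun k _ => h (Submodule.mul_mem_mul (hx _ _ _) (hy _ _ _))

lemma Submodule.C_mem_polynomialMatrix {D : Submodule R E} {A : Matrix ι ι E}
    (h : ∀ i j, A i j ∈ D) : (C A : (Matrix ι ι E)[X]) ∈ D.polynomialMatrix := by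
  intro q i j
  rw [coeff_C]
  split_ifs
  · exact h i j
  · exact zero_mem _

variable (ι R E) in
/-- Extension of scalars from polynomial matrices over `R` to polynomials with matrix
coefficients over an `R`-algebra. -/
noncomputable def polynomialMatrixMap : Matrix ι ι R[X] →+* (Matrix ι ι E)[X] :=
  (mapRingHom (algebraMap R E).mapMatrix).comp (matPolyEquiv : _ ≃ₐ[R] _).toRingHom

variable (ι) in
/-- Scalars as constant polynomials with scalar matrix coefficients. -/
noncomputable def polynomialMatrixScalar : E →+* (Matrix ι ι E)[X] :=
  C.comp (Matrix.scalar ι)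

lemma coeff_polynomialMatrixMap (B : Matrix ι ι R[X]) (q : ℕ) (i j : ι) :
    (polynomialMatrixMap ι R E B).coeff q i j = algebraMap R E ((B i j).coeff q) := by
  simp [polynomialMatrixMap, matPolyEquiv_coeff_apply]

lemma polynomialMatrixMap_smul_one (p : R[X]) :
    polynomialMatrixMap ι R E (p • 1) = p.map (algebraMap R (Matrix ι ι E)) := by
  ext q i j
  rw [coeff_polynomialMatrixMap, coeff_map, Matrix.algebraMap_matrix_apply]
  by_cases h : i = j <;> simp [h]

lemma polynomialMatrixMap_charmatrix (A : Matrix ι ι R) :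
    polynomialMatrixMap ι R E A.charmatrix = X - C (A.map (algebraMap R E)) := by
  simp [polynomialMatrixMap, Matrix.matPolyEquiv_charmatrix]

lemma polynomialMatrixMap_smul_one_commute (p : R[X]) (y : (Matrix ι ι E)[X]) :
    Commute (polynomialMatrixMap ι R E (p • 1)) y := by
  rw [polynomialMatrixMap_smul_one]
  induction p using Polynomial.induction_on' with
  | add p q hp hq => rw [Polynomial.map_add]; exact hp.add_left hq
  | monomial k a =>
    rw [map_monomial, ← C_mul_X_pow_eq_monomial]
    refine Commute.mul_left ?_ (X_pow_mul)
    ext q : 1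
    rw [coeff_C_mul, coeff_mul_C]
    exact Algebra.commutes _ _

lemma polynomialMatrixScalar_commute_map (v : E) (B : Matrix ι ι R[X]) :
    Commute (polynomialMatrixScalar ι v) (polynomialMatrixMap ι R E B) := by
  ext q i j
  simp only [polynomialMatrixScalar, RingHom.comp_apply, coeff_C_mul, coeff_mul_C]
  simp [coeff_polynomialMatrixMap, Algebra.commutes]

lemma polynomialMatrixScalar_mul_mul {v w : E} (h : ∀ y, v * y * w = 0) (y : (Matrix ι ι E)[X]) :
    polynomialMatrixScalar ι v * y * polynomialMatrixScalar ι w = 0 := by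
  ext q i j
  simp only [polynomialMatrixScalar, RingHom.comp_apply, coeff_C_mul, coeff_mul_C]
  simp [h]

lemma polynomialMatrixScalar_mem {D : Submodule R E} {v : E} (hv : v ∈ D) :
    polynomialMatrixScalar ι v ∈ D.polynomialMatrix (ι := ι) := by
  refine Submodule.C_mem_polynomialMatrix fun i j => ?_
  rw [Matrix.scalar_apply, Matrix.diagonal_apply]
  split_ifs
  · exact hv
  · exact zero_mem _

lemma C_eq_sum_polynomialMatrixScalar (A : Matrix ι ι E) :
    (C A : (Matrix ι ι E)[X]) = ∑ c : ι × ι, polynomialMatrixScalar ι (A c.1 c.2) *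
      polynomialMatrixMap ι R E (Matrix.single c.1 c.2 1) := by
  have h : ∀ c : ι × ι, polynomialMatrixScalar ι (A c.1 c.2) *
      polynomialMatrixMap ι R E (Matrix.single c.1 c.2 1) = C (Matrix.single c.1 c.2 (A c.1 c.2)) := by
    intro c
    ext q i j
    simp only [polynomialMatrixScalar, RingHom.comp_apply, coeff_C_mul, coeff_C]
    rw [Matrix.scalar_apply, Matrix.diagonal_mul, coeff_polynomialMatrixMap, Matrix.single_apply]
    split_ifs <;> simp_all [coeff_one]
  rw [Finset.sum_congr rfl fun c _ => h c, ← map_sum, Fintype.sum_prod_type]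
  congr 1
  exact Matrix.matrix_eq_sum_single A

end PolynomialMatrix

section Main

open Polynomial

variable {ι R E : Type*} [Fintype ι] [DecidableEq ι] [CommRing R] [Ring E] [Algebra R E]

lemma exists_adjugate_mul_C_mul_adjugate (B : Matrix ι ι R[X]) :
    ∃ G : ι × ι → Matrix ι ι R[X], ∀ A₁ : Matrix ι ι E,
      polynomialMatrixMap ι R E B.adjugate * C A₁ * polynomialMatrixMap ι R E B.adjugate =
        (∑ c : ι × ι, polynomialMatrixMap ι R E (B.adjugate c.2 c.1 • 1) *
          polynomialMatrixScalar ι (A₁ c.1 c.2)) * polynomialMatrixMap ι R E B.adjugate +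
        polynomialMatrixMap ι R E (B.det • 1) *
          ∑ c : ι × ι, polynomialMatrixScalar ι (A₁ c.1 c.2) * polynomialMatrixMap ι R E (G c) := by
  choose G hG using fun c : ι × ι => B.exists_adjugate_mul_single_mul_adjugate c.1 c.2
  refine ⟨G, fun A₁ => ?_⟩
  rw [C_eq_sum_polynomialMatrixScalar (R := R), Finset.mul_sum, Finset.sum_mul, Finset.sum_mul,
    Finset.mul_sum, ← Finset.sum_add_distrib]
  refine Finset.sum_congr rfl fun c _ => ?_
  have h := congrArg (polynomialMatrixMap ι R E) (hG c)
  rw [← smul_one_mul (B.adjugate c.2 c.1), ← smul_one_mul B.det] at h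
  simp only [map_mul, map_add] at h
  have hs := polynomialMatrixScalar_commute_map (ι := ι) (R := R) (A₁ c.1 c.2)
  rw [← mul_assoc, ← (hs _).eq, mul_assoc, mul_assoc, ← mul_assoc (polynomialMatrixMap ι R E _), h,
    mul_add, ← mul_assoc, ← mul_assoc, (hs _).eq, (hs _).eq, mul_assoc,
    mul_assoc (polynomialMatrixMap ι R E (B.det • 1))]

/-- The Cayley–Hamilton identity over a filtered algebra in which `v E v = 0` for the entries `v`
of the degree-one part of the matrix. -/
theorem aeval_charpoly_pow_eq_zero {D : ℕ → Submodule R E} {V : Submodule R E} {m : ℕ}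
    (hD : ∀ a b, D a * D b ≤ D (a + b)) (hD0 : D 0 = ⊤) (hD21 : D 2 ≤ D 1)
    (hDm : ∀ b, m < b → D b = ⊥) (hV : V ≤ D 1) (hVV : ∀ v ∈ V, ∀ y, v * y * v = 0)
    (A₀ : Matrix ι ι R) {A₁ A₂ : Matrix ι ι E} (hA₁ : ∀ i j, A₁ i j ∈ V)
    (hA₂ : ∀ i j, A₂ i j ∈ D 2) :
    aeval (A₀.map (algebraMap R E) + A₁ + A₂) A₀.charpoly ^ ((m + 1) / 2 + 1) = 0 := by
  let D' : ℕ → AddSubgroup (Matrix ι ι E)[X] := fun b => (D b).polynomialMatrix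
  have hD' : ∀ a b x y, x ∈ D' a → y ∈ D' b → x * y ∈ D' (a + b) := fun a b x y hx hy =>
    Submodule.mul_mem_polynomialMatrix (hD a b) hx hy
  have hD0' : ∀ x, x ∈ D' 0 := fun x q i j => hD0 ▸ Submodule.mem_top
  have hDm' : ∀ b, m < b → ∀ x ∈ D' b, x = 0 := by
    intro b hb x hx
    ext q i j
    simpa [hDm b hb] using hx q i j
  have hsc : ∀ i j x, polynomialMatrixScalar ι (A₁ i j) * x ∈ D' 1 := fun i j x =>
    hD' 1 0 _ _ (polynomialMatrixScalar_mem (hV (hA₁ i j))) (hD0' x)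
  have hodd : ∀ v ∈ V, ∀ y : (Matrix ι ι E)[X],
      polynomialMatrixScalar ι v * y * polynomialMatrixScalar ι v = 0 :=
    fun v hv y => polynomialMatrixScalar_mul_mul (hVV v hv) y
  obtain ⟨G, hG⟩ := exists_adjugate_mul_C_mul_adjugate (E := E) A₀.charmatrix
  have hf := polynomialMatrixMap_smul_one_commute (ι := ι) (R := R) (E := E)
  have hreg : IsLeftRegular (polynomialMatrixMap ι R E (A₀.charmatrix.det • 1)) := by
    rw [polynomialMatrixMap_smul_one]
    exact (A₀.charpoly_monic.map _).isRegular.left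
  obtain ⟨Q, hQ⟩ := exists_pow_eq_mul_sub (B := polynomialMatrixMap ι R E A₀.charmatrix)
    (N₁ := C A₁) (N₂ := C A₂) (hf A₀.charmatrix.det) hreg hD' hD0' hDm'
    (by rw [← map_mul, Matrix.adjugate_mul])
    (Submodule.C_mem_polynomialMatrix fun i j => hV (hA₁ i j))
    (Submodule.C_mem_polynomialMatrix fun i j => hD21 (hA₂ i j))
    (Submodule.C_mem_polynomialMatrix hA₂)
    (sum_mem fun c _ => by rw [(hf _ _).eq]; exact hsc _ _ _)
    (sum_mem fun c _ => hsc _ _ _)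
    (fun y => sum_mul_mul_sum_eq_zero _ _ _ y (fun c z => hf _ _) (fun c => hodd _ (hA₁ _ _) y)
      fun c d => by
        have h := hodd _ (add_mem (hA₁ c.1 c.2) (hA₁ d.1 d.2)) y
        rw [map_add] at h
        rw [← h, add_mul, mul_add, add_mul, add_mul, hodd _ (hA₁ _ _), hodd _ (hA₁ _ _)]
        abel)
    (hG A₁)
  rw [polynomialMatrixMap_charmatrix, ← C_add, sub_sub, ← C_add, ← add_assoc,
    polynomialMatrixMap_smul_one, ← Polynomial.map_pow] at hQ
  rw [← map_pow, aeval_def, ← eval_map, Matrix.charpoly, hQ, eval_mul_X_sub_C]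

end Main

/-- **Cayley–Hamilton identity for matrices over the Grassmann algebra.**
Let `R` be a commutative ring and `E = ⋀ R^m` the Grassmann algebra of rank `m`.
If `A` is an `n × n` matrix over `E` and `A₀` is the matrix of degree-zero
homogeneous components of the entries of `A`, with characteristic polynomial
`f ∈ R[X]`, then `f(A) ^ (⌈m/2⌉ + 1) = 0`. -/
theorem grassmann_cayley_hamilton
    (R : Type*) [CommRing R] (m n : ℕ) (hn : 1 ≤ n)
    (A : Matrix (Fin n) (Fin n) (ExteriorAlgebra R (Fin m → R)))
    (A₀ : Matrix (Fin n) (Fin n) R)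
    (hA₀ : ∀ i j, (DirectSum.decompose (fun i : ℕ => ⋀[R]^i (Fin m → R)) (A i j) 0 :
        ExteriorAlgebra R (Fin m → R)) = algebraMap R _ (A₀ i j)) :
    (Polynomial.aeval A (Matrix.charpoly A₀)) ^ ((m + 1) / 2 + 1) = 0 := by
  have hodd : ∀ v ∈ ⋀[R]^1 (Fin m → R), ∀ y : ExteriorAlgebra R (Fin m → R), v * y * v = 0 := by
    intro v hv y
    obtain ⟨w, rfl⟩ := (pow_one (LinearMap.range (ExteriorAlgebra.ι R (M := Fin m → R)))).le hv
    exact ExteriorAlgebra.ι_mul_mul_ι w y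
  have hD21 : ExteriorAlgebra.degreeGE R (Fin m → R) 2 ≤ ExteriorAlgebra.degreeGE R (Fin m → R) 1 :=
    iSup_le fun i => ExteriorAlgebra.exteriorPower_le_degreeGE (by omega)
  have hD0 : ExteriorAlgebra.degreeGE R (Fin m → R) 0 = ⊤ := top_unique fun x _ =>
    ExteriorAlgebra.mem_degreeGE_of_decompose fun i hi => absurd hi (Nat.not_lt_zero i)
  let A₁ : Matrix (Fin n) (Fin n) (ExteriorAlgebra R (Fin m → R)) := Matrix.of fun i j =>
    (DirectSum.decompose (fun i : ℕ => ⋀[R]^i (Fin m → R)) (A i j) 1 : ExteriorAlgebra R _)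
  have hA₁ : ∀ i j, A₁ i j ∈ ⋀[R]^1 (Fin m → R) := fun i j => SetLike.coe_mem _
  have hA₂ : ∀ i j, (A - A₀.map (algebraMap R (ExteriorAlgebra R (Fin m → R))) - A₁) i j ∈
      ExteriorAlgebra.degreeGE R (Fin m → R) 2 := by
    intro i j
    have h := ExteriorAlgebra.sub_decompose_mem_degreeGE_two (A i j)
    rwa [hA₀ i j] at h
  have h := aeval_charpoly_pow_eq_zero ExteriorAlgebra.degreeGE_mul_le hD0 hD21
    (fun _ => ExteriorAlgebra.degreeGE_pi_eq_bot)
    (ExteriorAlgebra.exteriorPower_le_degreeGE le_rfl) hodd A₀ hA₁ hA₂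
  rwa [sub_sub, add_sub_cancel] at h
end

section
/- Let R be a field of characteristic zero, or of prime characteristic p > ⌈m/2⌉. Let λ₁,…,λ_n ∈ R be pairwise distinct, let v = v₁v₂ + v₃v₄ + … + v_{2⌊m/2⌋−1} v_{2⌊m/2⌋} ∈ E^m (with the extra summand v_m added when m is odd), and let A = diag(λ₁ + v, …, λ_n + v) ∈ M_n E^m, so that the degree-zero component of A is A₀ = diag(λ₁,…,λ_n) with characteristic polynomial f(x) = ∏_{i=1}^n (x − λ_i). Then the minimal polynomial of A over R (as an element of the R-algebra M_n E^m) equals f(x)^(⌈m/2⌉+1). -/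
/-- The binomial theorem for a commuting pair whose second entry squares to zero. -/
theorem Commute.add_pow_succ_of_mul_self_eq_zero {A : Type*} [Ring A] {w a : A}
    (h : Commute w a) (ha : a * a = 0) (N : ℕ) :
    (w + a) ^ (N + 1) = w ^ (N + 1) + ((N + 1 : ℕ) : A) * (w ^ N * a) := by
  induction N with
  | zero => simp
  | succ N ih =>
    have hc : w ^ N * a * w = w ^ (N + 1) * a := by
      rw [mul_assoc, ← h.eq, ← mul_assoc, pow_succ]
    have hz : w ^ N * a * a = 0 := by rw [mul_assoc, ha, mul_zero]
    rw [pow_succ, ih, mul_add, add_mul, add_mul, mul_assoc _ _ w, hc,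
      mul_assoc _ _ a, hz, ← pow_succ]
    push_cast
    noncomm_ring

/-- An anticommuting pair product commutes with every member of the family. -/
theorem commute_mul_of_anticommute {A : Type*} [Ring A] {e : ℕ → A}
    (hanti : ∀ i j, e i * e j = -(e j * e i)) (i j k : ℕ) : Commute (e i * e j) (e k) := by
  rw [Commute, SemiconjBy, mul_assoc, hanti j k, mul_neg, ← mul_assoc, hanti i k, neg_mul, neg_neg,
    mul_assoc]

theorem sum_pairs_pow {A : Type*} [Ring A] {e : ℕ → A} (hsq : ∀ i, e i * e i = 0)
    (hanti : ∀ i j, e i * e j = -(e j * e i)) (k : ℕ) :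
    (∑ j ∈ Finset.range k, e (2 * j) * e (2 * j + 1)) ^ k =
        (k.factorial : A) * ((List.range (2 * k)).map e).prod ∧
      (∑ j ∈ Finset.range k, e (2 * j) * e (2 * j + 1)) ^ (k + 1) = 0 := by
  induction k with
  | zero => simp
  | succ k ih =>
    obtain ⟨ih₁, ih₂⟩ := ih
    have hcomm : Commute (∑ j ∈ Finset.range k, e (2 * j) * e (2 * j + 1))
        (e (2 * k) * e (2 * k + 1)) :=
      Commute.sum_left _ _ _ fun j _ => (commute_mul_of_anticommute hanti _ _ _).mul_right
        (commute_mul_of_anticommute hanti _ _ _)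
    have ha : e (2 * k) * e (2 * k + 1) * (e (2 * k) * e (2 * k + 1)) = 0 := by
      rw [← mul_assoc, (commute_mul_of_anticommute hanti _ _ _).eq, ← mul_assoc, hsq, zero_mul,
        zero_mul]
    rw [Finset.sum_range_succ]
    constructor
    · rw [hcomm.add_pow_succ_of_mul_self_eq_zero ha, ih₁, ih₂, zero_add, Nat.factorial_succ,
        show 2 * (k + 1) = 2 * k + 1 + 1 by ring, List.range_succ, List.range_succ]
      simp [mul_assoc]
    · rw [hcomm.add_pow_succ_of_mul_self_eq_zero ha, pow_succ _ (k + 1), ih₂]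
      simp

theorem sum_pairs_add_pow {A : Type*} [Ring A] {e : ℕ → A} (hsq : ∀ i, e i * e i = 0)
    (hanti : ∀ i j, e i * e j = -(e j * e i)) (m : ℕ) :
    ((∑ j ∈ Finset.range (m / 2), e (2 * j) * e (2 * j + 1)) +
          if m % 2 = 1 then e (m - 1) else 0) ^ ((m + 1) / 2) =
        (((m + 1) / 2).factorial : A) * ((List.range m).map e).prod ∧
      ((∑ j ∈ Finset.range (m / 2), e (2 * j) * e (2 * j + 1)) +
          if m % 2 = 1 then e (m - 1) else 0) ^ ((m + 1) / 2 + 1) = 0 := by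
  obtain ⟨k, rfl | rfl⟩ := m.even_or_odd'
  · have h₁ : 2 * k / 2 = k := by omega
    have h₂ : (2 * k + 1) / 2 = k := by omega
    simpa [h₁, h₂] using sum_pairs_pow hsq hanti k
  · obtain ⟨ih₁, ih₂⟩ := sum_pairs_pow hsq hanti k
    have h₁ : (2 * k + 1) / 2 = k := by omega
    have h₂ : (2 * k + 1 + 1) / 2 = k + 1 := by omega
    have h₃ : (2 * k + 1) % 2 = 1 := by omega
    have hcomm : Commute (∑ j ∈ Finset.range k, e (2 * j) * e (2 * j + 1)) (e (2 * k)) :=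
      Commute.sum_left _ _ _ fun j _ => commute_mul_of_anticommute hanti _ _ _
    rw [h₁, h₂, if_pos h₃, Nat.add_sub_cancel]
    constructor
    · rw [hcomm.add_pow_succ_of_mul_self_eq_zero (hsq _), ih₁, ih₂, zero_add,
        Nat.factorial_succ, List.range_succ]
      simp [mul_assoc]
    · rw [hcomm.add_pow_succ_of_mul_self_eq_zero (hsq _), pow_succ _ (k + 1), ih₂]
      simp

open ExteriorAlgebra in
theorem ExteriorAlgebra.ιMulti_single_ne_zero (R : Type*) [CommRing R] [Nontrivial R] (m : ℕ) :
    ιMulti R m (fun i : Fin m => (Pi.single i 1 : Fin m → R)) ≠ 0 := by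
  intro h
  have h' := congrArg (liftAlternating
    (Pi.single m (Matrix.detRowAlternating (R := R) (n := Fin m)))) h
  rw [liftAlternating_apply_ιMulti, Pi.single_eq_same, map_zero] at h'
  have h₁ : Matrix.of (fun i : Fin m => (Pi.single i 1 : Fin m → R)) = 1 := by
    ext i j
    simp [Matrix.one_apply, Pi.single_apply, eq_comm]
  have h₂ : (1 : Matrix (Fin m) (Fin m) R).det = 0 := by rw [← h₁]; exact h'
  simp at h₂

theorem Nat.cast_factorial_ne_zero_of_char {R : Type*} [Field R] {k : ℕ}
    (hchar : CharZero R ∨ ∃ p : ℕ, p.Prime ∧ CharP R p ∧ k < p) : (k.factorial : R) ≠ 0 := by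
  rcases hchar with h | ⟨p, hp, hR, hk⟩
  · exact Nat.cast_ne_zero.2 k.factorial_ne_zero
  · rw [Ne, CharP.cast_eq_zero_iff R p, hp.dvd_factorial]
    omega

open Polynomial in
theorem minpoly_algebraMap_add_eq_pow {R A : Type*} [Field R] [Ring A] [Algebra R A] (a : R)
    {v : A} {k : ℕ} (h₀ : v ^ k ≠ 0) (h₁ : v ^ (k + 1) = 0) :
    minpoly R (algebraMap R A a + v) = (X - C a) ^ (k + 1) := by
  have hmonic : ∀ j, ((X - C a) ^ j).Monic := (monic_X_sub_C a).pow
  have hzero : aeval (algebraMap R A a + v) ((X - C a) ^ (k + 1)) = 0 := by simp [h₁]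
  obtain ⟨j, hj, hassoc⟩ := (dvd_prime_pow (prime_X_sub_C a) _).1 (minpoly.dvd R _ hzero)
  have heq := eq_of_monic_of_associated (minpoly.monic ⟨_, hmonic _, hzero⟩) (hmonic j) hassoc
  have hvj : v ^ j = 0 := by simpa [heq] using minpoly.aeval R (algebraMap R A a + v)
  have : ¬ j ≤ k := fun hle => h₀ (pow_eq_zero_of_le hle hvj)
  rw [heq, show j = k + 1 by omega]

open Polynomial in
theorem Matrix.aeval_diagonal {R A n : Type*} [CommRing R] [Ring A] [Algebra R A] [Fintype n]
    [DecidableEq n] (d : n → A) (p : R[X]) :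
    aeval (diagonal d) p = diagonal fun i => aeval (d i) p := by
  have h := aeval_algHom_apply (diagonalAlgHom R : (n → A) →ₐ[R] Matrix n n A) d p
  simp only [diagonalAlgHom_apply] at h
  rw [h]
  congr 1
  ext i
  exact (aeval_algHom_apply (Pi.evalAlgHom R (fun _ : n => A) i) d p).symm

open Polynomial in
/-- The minimal polynomial of a diagonal matrix whose entries have pairwise coprime minimal
polynomials is their product. -/
theorem minpoly_diagonal {R A n : Type*} [Field R] [Ring A] [Algebra R A] [Fintype n]
    [DecidableEq n] (d : n → A) (hint : ∀ i, IsIntegral R (d i))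
    (hcop : Pairwise fun i j => IsCoprime (minpoly R (d i)) (minpoly R (d j))) :
    minpoly R (Matrix.diagonal d) = ∏ i, minpoly R (d i) := by
  have hmonic : (∏ i, minpoly R (d i)).Monic :=
    monic_prod_of_monic _ _ fun i _ => minpoly.monic (hint i)
  have hzero : aeval (Matrix.diagonal d) (∏ i, minpoly R (d i)) = 0 := by
    rw [Matrix.aeval_diagonal, Matrix.diagonal_eq_zero]
    ext i
    exact aeval_eq_zero_of_dvd_aeval_eq_zero (Finset.dvd_prod_of_mem _ (Finset.mem_univ i))
      (minpoly.aeval R (d i))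
  refine eq_of_monic_of_associated (minpoly.monic ⟨_, hmonic, hzero⟩) hmonic
    (associated_of_dvd_dvd (minpoly.dvd R _ hzero) ?_)
  refine Fintype.prod_dvd_of_coprime hcop fun i => minpoly.dvd R _ ?_
  have h := minpoly.aeval R (Matrix.diagonal d)
  rw [Matrix.aeval_diagonal, Matrix.diagonal_eq_zero] at h
  exact congrFun h i


open ExteriorAlgebra Polynomial in
/-- Over a field of characteristic zero or of prime characteristic `p > ⌈m/2⌉`, for
distinct `λ₁, …, λₙ` and `v = v₁v₂ + ⋯ + v_{2⌊m/2⌋−1}v_{2⌊m/2⌋} (+ v_m if m odd)`, the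
minimal polynomial of `A = diag(λ₁ + v, …, λₙ + v)` over `R` is `f^(⌈m/2⌉+1)`, where
`f = ∏ᵢ (X − λᵢ)` is the characteristic polynomial of `A₀ = diag(λ₁, …, λₙ)`. -/
theorem grassmann_minimal_polynomial
    (R : Type*) [Field R] (m n : ℕ)
    (hchar : CharZero R ∨ ∃ p : ℕ, p.Prime ∧ CharP R p ∧ (m + 1) / 2 < p)
    (lam : Fin n → R) (hlam : Function.Injective lam)
    (v : ExteriorAlgebra R (Fin m → R))
    (hv : v = (∑ j : Fin (m / 2),
        ι R (Pi.single (⟨2 * j.val, by have := j.isLt; omega⟩ : Fin m) (1 : R)) *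
          ι R (Pi.single (⟨2 * j.val + 1, by have := j.isLt; omega⟩ : Fin m) (1 : R))) +
      if h : m % 2 = 1 then ι R (Pi.single (⟨m - 1, by omega⟩ : Fin m) (1 : R)) else 0)
    (A : Matrix (Fin n) (Fin n) (ExteriorAlgebra R (Fin m → R)))
    (hA : A = Matrix.diagonal (fun i => algebraMap R _ (lam i) + v)) :
    minpoly R A = (∏ i, (X - C (lam i))) ^ ((m + 1) / 2 + 1) := by
  set K := (m + 1) / 2
  let e : ℕ → ExteriorAlgebra R (Fin m → R) := fun i => ι R fun k => if k.val = i then 1 else 0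
  have he : ∀ i : Fin m, ι R (Pi.single i (1 : R)) = e i := fun i => by
    simp only [e]
    congr 1
    ext k
    simp [Pi.single_apply, Fin.ext_iff]
  have hsum : v = (∑ j ∈ Finset.range (m / 2), e (2 * j) * e (2 * j + 1)) +
      if m % 2 = 1 then e (m - 1) else 0 := by
    rw [hv, ← Fin.sum_univ_eq_sum_range fun j => e (2 * j) * e (2 * j + 1)]
    simp only [he, dite_eq_ite]
  obtain ⟨hpow, hnil⟩ := sum_pairs_add_pow (e := e) (fun i => ι_sq_zero _)
    (fun i j => eq_neg_of_add_eq_zero_left (ι_add_mul_swap _ _)) m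
  rw [← hsum] at hpow hnil
  have hprod : ((List.range m).map e).prod ≠ 0 := by
    have h := ιMulti_single_ne_zero R m
    simp only [ιMulti_apply, he] at h
    rwa [List.ofFn_eq_pmap, List.pmap_eq_map] at h
  have hne : v ^ K ≠ 0 := by
    rw [hpow, ← map_natCast (algebraMap R _), ← Algebra.smul_def]
    exact smul_ne_zero (Nat.cast_factorial_ne_zero_of_char hchar) hprod
  have hmin : ∀ i, minpoly R (algebraMap R _ (lam i) + v) = (X - C (lam i)) ^ (K + 1) :=
    fun i => minpoly_algebraMap_add_eq_pow _ hne hnil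
  have hint : ∀ i, IsIntegral R (algebraMap R _ (lam i) + v) := fun i =>
    minpoly.ne_zero_iff.1 (by rw [hmin]; exact pow_ne_zero _ (X_sub_C_ne_zero _))
  rw [hA, minpoly_diagonal _ hint]
  · simp only [hmin, Finset.prod_pow]
  · intro i j hij
    simp only [hmin]
    exact (isCoprime_X_sub_C_of_isUnit_sub (sub_ne_zero.2 (hlam.ne hij)).isUnit).pow
end

section
/- Let a₁,…,a_k be elements of a (not necessarily commutative) ring, and let [k] = {1,…,k} = M ∪ N be a partition into two disjoint subsets. Suppose a_i and a_j anticommute (a_i a_j = −a_j a_i) whenever i ≠ j both lie in M, and commute (a_i a_j = a_j a_i) otherwise. Let 𝒫 be a partition of [k] into |N| classes, each class containing exactly one element of N, and let 𝔖 ⊆ 𝔖_k be the corresponding Young subgroup (all permutations leaving each class of 𝒫 invariant). If |M| is odd, then Σ_{π ∈ 𝔖} sign(π) · a_{π(1)} a_{π(2)} ⋯ a_{π(k)} = 0. -/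
section SignedWords

open Equiv

variable {ι A : Type*} [Ring A] {a : ι → A} {M : Finset ι}

/-- Two distinct members of a list occur in it in one of the two possible orders. -/
lemma exists_eq_append_of_mem_of_mem {u v : ι} {l : List ι} (huv : u ≠ v)
    (hu : u ∈ l) (hv : v ∈ l) :
    ∃ l₁ l₂ l₃, l = l₁ ++ u :: (l₂ ++ v :: l₃) ∨ l = l₁ ++ v :: (l₂ ++ u :: l₃) := by
  obtain ⟨s, t, rfl⟩ := List.append_of_mem hu
  rcases List.mem_append.1 hv with h | h
  · obtain ⟨p, q, rfl⟩ := List.append_of_mem h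
    exact ⟨p, q, t, Or.inr (by simp)⟩
  · obtain ⟨p, q, rfl⟩ := List.append_of_mem ((List.mem_cons.1 h).resolve_left huv.symm)
    exact ⟨s, p, q, Or.inl rfl⟩

lemma map_swap_of_notMem [DecidableEq ι] {u v : ι} {l : List ι} (hu : u ∉ l) (hv : v ∉ l) :
    l.map (swap u v) = l := by
  conv_rhs => rw [← List.map_id l]
  refine List.map_congr_left fun x hx => ?_
  exact swap_apply_of_ne_of_ne (fun h => hu (h ▸ hx)) (fun h => hv (h ▸ hx))

lemma map_swap_append [DecidableEq ι] {u v : ι} {l₁ l₂ l₃ : List ι}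
    (h : (l₁ ++ u :: (l₂ ++ v :: l₃)).Nodup) :
    (l₁ ++ u :: (l₂ ++ v :: l₃)).map (swap u v) = l₁ ++ v :: (l₂ ++ u :: l₃) := by
  have h₁ : u ∉ l₁ ∧ v ∉ l₁ ∧ u ∉ l₂ ∧ v ∉ l₂ ∧ u ∉ l₃ ∧ v ∉ l₃ := by
    simp only [List.nodup_append, List.nodup_cons, List.mem_append, List.mem_cons] at h
    grind
  obtain ⟨h1, h2, h3, h4, h5, h6⟩ := h₁
  simp [map_swap_of_notMem, *]

lemma mul_prod_map_of_notMem (hcomm : ∀ i j, i ∉ M ∨ j ∉ M → a i * a j = a j * a i)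
    {x : ι} (hx : x ∉ M) (l : List ι) :
    a x * (l.map a).prod = (l.map a).prod * a x := by
  induction l with
  | nil => simp
  | cons y l ih =>
    rw [List.map_cons, List.prod_cons, ← mul_assoc, hcomm x y (Or.inl hx), mul_assoc, ih, mul_assoc]

lemma mul_prod_map_of_mem [DecidableEq ι]
    (hanti : ∀ i ∈ M, ∀ j ∈ M, i ≠ j → a i * a j = -(a j * a i))
    (hcomm : ∀ i j, i ∉ M ∨ j ∉ M → a i * a j = a j * a i)
    {x : ι} (hx : x ∈ M) (l : List ι) (hxl : x ∉ l) :
    a x * (l.map a).prod =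
      (-1 : ℤ) ^ (l.filter (· ∈ M)).length • ((l.map a).prod * a x) := by
  induction l with
  | nil => simp
  | cons y l ih =>
    simp only [List.mem_cons, not_or] at hxl
    rw [List.map_cons, List.prod_cons, ← mul_assoc]
    by_cases hy : y ∈ M
    · rw [hanti x hx y hy hxl.1, neg_mul, mul_assoc, ih hxl.2]
      simp [hy, pow_succ, mul_assoc, -zsmul_eq_mul]
    · rw [hcomm x y (Or.inr hy), mul_assoc, ih hxl.2]
      simp [hy, mul_assoc, -zsmul_eq_mul]

/-- Exchanging two anticommuting letters negates the product of a word. -/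
lemma prod_map_swap_of_mem [DecidableEq ι]
    (hanti : ∀ i ∈ M, ∀ j ∈ M, i ≠ j → a i * a j = -(a j * a i))
    (hcomm : ∀ i j, i ∉ M ∨ j ∉ M → a i * a j = a j * a i)
    {u v : ι} (hu : u ∈ M) (hv : v ∈ M) (huv : u ≠ v) {l : List ι} (hul : u ∉ l) (hvl : v ∉ l) :
    a u * ((l.map a).prod * a v) = -(a v * ((l.map a).prod * a u)) := by
  rw [← mul_assoc, ← mul_assoc, mul_prod_map_of_mem hanti hcomm hu l hul,
    mul_prod_map_of_mem hanti hcomm hv l hvl, smul_mul_assoc, smul_mul_assoc, mul_assoc,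
    mul_assoc, hanti u hu v hv huv, mul_neg, smul_neg]

lemma prod_map_map_swap_of_mem [DecidableEq ι]
    (hanti : ∀ i ∈ M, ∀ j ∈ M, i ≠ j → a i * a j = -(a j * a i))
    (hcomm : ∀ i j, i ∉ M ∨ j ∉ M → a i * a j = a j * a i) {l : List ι} (hl : l.Nodup) {u v : ι}
    (hul : u ∈ l) (hvl : v ∈ l) (huv : u ≠ v) (hu : u ∈ M) (hv : v ∈ M) :
    ((l.map (swap u v)).map a).prod = -(l.map a).prod := by
  obtain ⟨l₁, l₂, l₃, h⟩ := exists_eq_append_of_mem_of_mem huv hul hvl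
  wlog h' : l = l₁ ++ u :: (l₂ ++ v :: l₃) generalizing u v
  · rw [swap_comm]
    exact this hvl hul huv.symm hv hu h.symm (h.resolve_left h')
  subst h'
  have hu₂ : u ∉ l₂ := by simp [List.nodup_append] at hl; grind
  have hv₂ : v ∉ l₂ := by simp [List.nodup_append] at hl; grind
  rw [map_swap_append hl]
  have key := prod_map_swap_of_mem hanti hcomm hv hu huv.symm hv₂ hu₂
  simp only [List.map_append, List.map_cons, List.prod_append, List.prod_cons]
  rw [← mul_assoc (l₂.map a).prod, ← mul_assoc (a v), key, neg_mul, mul_neg]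
  simp only [mul_assoc]

lemma prod_map_map_swap_of_notMem [DecidableEq ι]
    (hcomm : ∀ i j, i ∉ M ∨ j ∉ M → a i * a j = a j * a i)
    {l : List ι} (hl : l.Nodup) {u v : ι}
    (hul : u ∈ l) (hvl : v ∈ l) (huv : u ≠ v) (hu : u ∉ M) (hv : v ∉ M) :
    ((l.map (swap u v)).map a).prod = (l.map a).prod := by
  obtain ⟨l₁, l₂, l₃, h⟩ := exists_eq_append_of_mem_of_mem huv hul hvl
  wlog h' : l = l₁ ++ u :: (l₂ ++ v :: l₃) generalizing u v
  · rw [swap_comm]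
    exact this hvl hul huv.symm hv hu h.symm (h.resolve_left h')
  subst h'
  rw [map_swap_append hl]
  have key : a v * ((l₂.map a).prod * a u) = a u * ((l₂.map a).prod * a v) := by
    rw [← mul_assoc, ← mul_assoc, mul_prod_map_of_notMem hcomm hu,
      mul_prod_map_of_notMem hcomm hv, mul_assoc, mul_assoc, hcomm u v (Or.inl hu)]
  simp only [List.map_append, List.map_cons, List.prod_append, List.prod_cons]
  rw [← mul_assoc (l₂.map a).prod, ← mul_assoc (a v), key]
  simp only [mul_assoc]

/-- Exchanging a central letter `j` with a letter `x ∈ M` changes the product of a word by a sign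
which depends only on the ranks of the two letters in the subword spelled by `M ∪ {j}`. -/
lemma prod_map_map_swap_of_notMem_of_mem [DecidableEq ι]
    (hanti : ∀ i ∈ M, ∀ j ∈ M, i ≠ j → a i * a j = -(a j * a i))
    (hcomm : ∀ i j, i ∉ M ∨ j ∉ M → a i * a j = a j * a i) {l : List ι} (hl : l.Nodup) {j x : ι}
    (hjl : j ∈ l) (hxl : x ∈ l) (hj : j ∉ M) (hx : x ∈ M) :
    ((l.map (swap j x)).map a).prod =
      (-1 : ℤ) ^ ((l.filter (· ∈ insert j M)).idxOf x + (l.filter (· ∈ insert j M)).idxOf j + 1) •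
        (l.map a).prod := by
  have hjx : j ≠ x := fun h => hj (h ▸ hx)
  have hfilter : ∀ l₂ : List ι, j ∉ l₂ →
      l₂.filter (· ∈ insert j M) = l₂.filter (· ∈ M) := fun l₂ h =>
    List.filter_congr fun y hy => by
      have : y ≠ j := fun e => h (e ▸ hy)
      simp [this]
  obtain ⟨l₁, l₂, l₃, rfl | rfl⟩ := exists_eq_append_of_mem_of_mem hjx hjl hxl
  · have h₁ : j ∉ l₁ ∧ x ∉ l₁ ∧ j ∉ l₂ ∧ x ∉ l₂ := by
      simp [List.nodup_append] at hl; grind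
    obtain ⟨hj₁, hx₁, hj₂, hx₂⟩ := h₁
    have key : a x * ((l₂.map a).prod * a j) =
        (-1 : ℤ) ^ (l₂.filter (· ∈ M)).length • (a j * ((l₂.map a).prod * a x)) := by
      rw [← mul_assoc, mul_prod_map_of_mem hanti hcomm hx l₂ hx₂, ← mul_assoc,
        mul_prod_map_of_notMem hcomm hj, smul_mul_assoc, mul_assoc, mul_assoc,
        hcomm x j (Or.inr hj)]
    have hidx : (-1 : ℤ) ^ (((l₁ ++ j :: (l₂ ++ x :: l₃)).filter (· ∈ insert j M)).idxOf x +
        ((l₁ ++ j :: (l₂ ++ x :: l₃)).filter (· ∈ insert j M)).idxOf j + 1) =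
        (-1) ^ (l₂.filter (· ∈ M)).length := by
      rw [← hfilter l₂ hj₂]
      simp only [List.filter_append, List.filter_cons]
      rw [List.idxOf_append_of_notMem (by simp [hx₁]), List.idxOf_append_of_notMem (by simp [hj₁])]
      simp only [Finset.mem_insert, true_or, decide_true, if_true, hx, or_true,
        List.idxOf_cons_self, List.idxOf_cons_ne _ hjx]
      rw [List.idxOf_append_of_notMem (by simp [hx₂]), List.idxOf_cons_self]
      refine neg_one_pow_congr ?_
      grind
    rw [map_swap_append hl, hidx]
    simp only [List.map_append, List.map_cons, List.prod_append, List.prod_cons]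
    rw [← mul_assoc (l₂.map a).prod, ← mul_assoc (a x), key, smul_mul_assoc, mul_smul_comm]
    simp only [mul_assoc]
  · have h₁ : j ∉ l₁ ∧ x ∉ l₁ ∧ j ∉ l₂ ∧ x ∉ l₂ := by
      simp [List.nodup_append] at hl; grind
    obtain ⟨hj₁, hx₁, hj₂, hx₂⟩ := h₁
    have key : a j * ((l₂.map a).prod * a x) =
        (-1 : ℤ) ^ (l₂.filter (· ∈ M)).length • (a x * ((l₂.map a).prod * a j)) := by
      rw [← mul_assoc (a x), mul_prod_map_of_mem hanti hcomm hx l₂ hx₂, ← mul_assoc,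
        mul_prod_map_of_notMem hcomm hj, smul_mul_assoc, smul_smul, ← pow_add,
        Even.neg_one_pow ⟨_, rfl⟩, one_smul, mul_assoc, mul_assoc, hcomm x j (Or.inr hj)]
    have hidx : (-1 : ℤ) ^ (((l₁ ++ x :: (l₂ ++ j :: l₃)).filter (· ∈ insert j M)).idxOf x +
        ((l₁ ++ x :: (l₂ ++ j :: l₃)).filter (· ∈ insert j M)).idxOf j + 1) =
        (-1) ^ (l₂.filter (· ∈ M)).length := by
      rw [← hfilter l₂ hj₂]
      simp only [List.filter_append, List.filter_cons]
      rw [List.idxOf_append_of_notMem (by simp [hx₁]), List.idxOf_append_of_notMem (by simp [hj₁])]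
      simp only [Finset.mem_insert, true_or, decide_true, if_true, hx, or_true,
        List.idxOf_cons_self, List.idxOf_cons_ne _ hjx.symm]
      rw [List.idxOf_append_of_notMem (by simp [hj₂]), List.idxOf_cons_self]
      refine neg_one_pow_congr ?_
      grind
    rw [swap_comm, map_swap_append hl, hidx]
    simp only [List.map_append, List.map_cons, List.prod_append, List.prod_cons]
    rw [← mul_assoc (l₂.map a).prod, ← mul_assoc (a j), key, smul_mul_assoc, mul_smul_comm]
    simp only [mul_assoc]

lemma sum_neg_one_pow_idxOf [DecidableEq ι] {L : List ι} (hL : L.Nodup) (heven : Even L.length) :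
    ∑ x ∈ L.toFinset, (-1 : ℤ) ^ L.idxOf x = 0 := by
  have h : ∑ i ∈ Finset.range L.length, (-1 : ℤ) ^ i = 0 := by
    rw [neg_one_geom_sum, if_pos heven]
  rw [← h]
  refine Finset.sum_bij (fun x _ => L.idxOf x) ?_ ?_ ?_ ?_
  · intro x hx
    simpa [List.idxOf_lt_length_iff] using hx
  · intro x hx y hy hxy
    exact (List.idxOf_inj (List.mem_toFinset.1 hx)).1 hxy
  · intro i hi
    have hi' := Finset.mem_range.1 hi
    exact ⟨L[i], by simp, hL.idxOf_getElem i hi'⟩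
  · simp

/-- Writing a central letter `j` at the place of each letter of `M ∪ {j}` in turn, the signed
products add up to zero if `|M|` is odd. -/
lemma sum_swap_sign_smul_prod_map_eq_zero [DecidableEq ι]
    (hanti : ∀ i ∈ M, ∀ j ∈ M, i ≠ j → a i * a j = -(a j * a i))
    (hcomm : ∀ i j, i ∉ M ∨ j ∉ M → a i * a j = a j * a i) {l : List ι} (hl : l.Nodup)
    (hmem : ∀ i, i ∈ l) {j : ι} (hj : j ∉ M) (hodd : Odd M.card) [Fintype ι] :
    ∑ x ∈ insert j M, (Perm.sign (swap j x) : ℤ) • ((l.map (swap j x)).map a).prod = 0 := by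
  set L := l.filter (· ∈ insert j M) with hLdef
  have hL : L.Nodup := hl.filter _
  have hLset : L.toFinset = insert j M := by
    ext x
    simp [hLdef, hmem]
  have hterm : ∀ x ∈ insert j M, (Perm.sign (swap j x) : ℤ) • ((l.map (swap j x)).map a).prod =
      ((-1 : ℤ) ^ L.idxOf x * (-1) ^ L.idxOf j) • (l.map a).prod := by
    intro x hx
    rcases Finset.mem_insert.1 hx with rfl | hx
    · rw [← pow_add, Even.neg_one_pow ⟨_, rfl⟩]
      simp
    · have hjx : j ≠ x := fun h => hj (h ▸ hx)
      rw [prod_map_map_swap_of_notMem_of_mem hanti hcomm hl (hmem j) (hmem x) hj hx, smul_smul,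
        Perm.sign_swap hjx]
      congr 1
      simp only [Units.val_neg, Units.val_one, hLdef]
      ring
  rw [Finset.sum_congr rfl hterm, ← Finset.sum_smul, ← Finset.sum_mul, ← hLset,
    sum_neg_one_pow_idxOf hL, zero_mul, zero_smul]
  rw [← List.toFinset_card_of_nodup hL, hLset, Finset.card_insert_of_notMem hj]
  exact hodd.add_one

end SignedWords


/-- Let `a₁, …, a_k` be ring elements, `{1,…,k} = M ⊔ N`, such that elements indexed by
distinct members of `M` anticommute and all other pairs commute. Let `c` assign to each
index the unique element of `N` lying in its class, for a partition of `{1,…,k}` whose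
classes each contain exactly one element of `N`; the corresponding Young subgroup
consists of the permutations `π` with `c ∘ π = c`. If `|M|` is odd, then the signed sum
`Σ_π sign(π) a_{π(1)} ⋯ a_{π(k)}` over the Young subgroup vanishes. -/
theorem young_subgroup_signed_sum_eq_zero
    (A : Type*) [Ring A] (k : ℕ) (a : Fin k → A)
    (M N : Finset (Fin k)) (hMN : Disjoint M N) (hMNuniv : M ∪ N = Finset.univ)
    (hanti : ∀ i ∈ M, ∀ j ∈ M, i ≠ j → a i * a j = -(a j * a i))
    (hcomm : ∀ i j : Fin k, i ∉ M ∨ j ∉ M → a i * a j = a j * a i)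
    (c : Fin k → Fin k) (hcN : ∀ i, c i ∈ N) (hNfix : ∀ j ∈ N, c j = j)
    (hModd : Odd M.card) :
    ∑ π ∈ Finset.univ.filter (fun π : Equiv.Perm (Fin k) => ∀ i, c (π i) = c i),
      (Equiv.Perm.sign π : ℤ) • (List.ofFn fun i => a (π i)).prod = 0 := by
  obtain ⟨m, -⟩ : M.Nonempty := Finset.card_pos.1 hModd.pos
  obtain ⟨j, hjN⟩ : ∃ j, j ∈ N := ⟨c m, hcN m⟩
  have hNM : ∀ i ∈ N, i ∉ M := fun i hi hi' => Finset.disjoint_left.1 hMN hi' hi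
  have hcj : c j = j := hNfix j hjN
  set T : Equiv.Perm (Fin k) → A := fun π =>
    (Equiv.Perm.sign π : ℤ) • (List.ofFn fun i => a (π i)).prod with hT
  have hword : ∀ σ π : Equiv.Perm (Fin k), T (σ * π) = (Equiv.Perm.sign π : ℤ) •
      (Equiv.Perm.sign σ : ℤ) • (((List.ofFn π).map σ).map a).prod := by
    intro σ π
    simp only [hT, Equiv.Perm.sign_mul, Units.val_mul, smul_smul, List.map_ofFn]
    rw [mul_comm]
    rfl
  have hnodup : ∀ π : Equiv.Perm (Fin k), (List.ofFn π).Nodup := fun π =>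
    List.nodup_ofFn.2 π.injective
  have hmem : ∀ (π : Equiv.Perm (Fin k)) (i : Fin k), i ∈ List.ofFn π := fun π i =>
    (List.mem_ofFn' _ _).2 (π.surjective i)
  have hTneg : ∀ u ∈ N, ∀ v ∈ N, u ≠ v → ∀ π, T (Equiv.swap u v * π) = -T π := by
    intro u hu v hv huv π
    rw [hword, prod_map_map_swap_of_notMem hcomm (hnodup π) (hmem π u) (hmem π v) huv (hNM u hu)
      (hNM v hv), Equiv.Perm.sign_swap huv]
    simp [hT, List.map_ofFn, Function.comp_def]
  have hTsum : ∀ π, ∑ x ∈ insert j M, T (Equiv.swap j x * π) = 0 := by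
    intro π
    simp only [hword]
    rw [← Finset.smul_sum, sum_swap_sign_smul_prod_map_eq_zero hanti hcomm (hnodup π) (hmem π)
      (hNM j hjN) hModd, smul_zero]
  set R := Finset.univ.filter fun π : Equiv.Perm (Fin k) => (∀ i, c (π i) = c i) ∧ π j = j
    with hR
  have hswap : ∀ x y, c x = c y → ∀ i, c (Equiv.swap x y i) = c i := by
    intro x y hxy i
    rw [Equiv.swap_apply_def]
    split_ifs <;> simp_all
  have hdecomp : ∑ π ∈ Finset.univ.filter (fun π : Equiv.Perm (Fin k) => ∀ i, c (π i) = c i), T π =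
      ∑ x ∈ Finset.univ.filter (fun x => c x = j), ∑ π ∈ R, T (Equiv.swap j x * π) := by
    rw [← Finset.sum_product']
    refine Finset.sum_nbij' (fun σ => (σ j, Equiv.swap j (σ j) * σ))
      (fun p => Equiv.swap j p.1 * p.2) ?_ ?_ ?_ ?_ ?_
    · intro σ hσ
      have hσ' := (Finset.mem_filter.1 hσ).2
      have h : c (σ j) = j := (hσ' j).trans hcj
      simp only [hR, Finset.mem_product, Finset.mem_filter, Finset.mem_univ, true_and,
        Equiv.Perm.mul_apply, Equiv.swap_apply_right, and_true]
      exact ⟨h, fun i => (hswap j (σ j) (hcj.trans h.symm) _).trans (hσ' i)⟩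
    · rintro ⟨x, π⟩ hp
      simp only [hR, Finset.mem_product, Finset.mem_filter, Finset.mem_univ, true_and] at hp ⊢
      exact fun i => (hswap j x (hcj.trans hp.1.symm) _).trans (hp.2.1 i)
    · intro σ _
      simp [← mul_assoc]
    · rintro ⟨x, π⟩ hp
      simp only [hR, Finset.mem_product, Finset.mem_filter, Finset.mem_univ, true_and] at hp
      simp [hp.2.2, ← mul_assoc]
    · intro σ _
      simp [← mul_assoc]
  have hextend : ∑ x ∈ Finset.univ.filter (fun x => c x = j), ∑ π ∈ R, T (Equiv.swap j x * π) =
      ∑ x ∈ insert j M, ∑ π ∈ R, T (Equiv.swap j x * π) := by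
    refine Finset.sum_subset ?_ ?_
    · intro x hx
      have hx' := (Finset.mem_filter.1 hx).2
      have hxMN : x ∈ M ∪ N := hMNuniv ▸ Finset.mem_univ x
      rcases Finset.mem_union.1 hxMN with h | h
      · exact Finset.mem_insert_of_mem h
      · rw [← hNfix x h, hx']
        exact Finset.mem_insert_self _ _
    · intro x hx hxj
      have hcx : c x ≠ j := by simpa using hxj
      have hxj' : x ≠ j := fun h => hcx (h ▸ hcj)
      have hxM : x ∈ M := (Finset.mem_insert.1 hx).resolve_left hxj'
      have hxc : x ≠ c x := fun h => hNM _ (hcN x) (h ▸ hxM)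
      refine Finset.sum_involution (fun π _ => Equiv.swap x (c x) * π) ?_ ?_ ?_ ?_
      · intro π _
        have h : Equiv.swap j x * (Equiv.swap x (c x) * π) =
            Equiv.swap j (c x) * (Equiv.swap j x * π) := by
          rw [← mul_assoc, ← mul_assoc, Equiv.mul_swap_eq_swap_mul, Equiv.swap_apply_right,
            Equiv.swap_apply_of_ne_of_ne hcx hxc.symm]
        rw [h, hTneg j hjN (c x) (hcN x) hcx.symm, add_neg_cancel]
      · intro π _ _ h
        exact hxc (Equiv.swap_eq_one_iff.1 (mul_eq_right.1 h))
      · intro π hπ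
        simp only [hR, Finset.mem_filter, Finset.mem_univ, true_and, Equiv.Perm.mul_apply] at hπ ⊢
        refine ⟨fun i => (hswap x (c x) (hNfix _ (hcN x)).symm _).trans (hπ.1 i), ?_⟩
        rw [hπ.2, Equiv.swap_apply_of_ne_of_ne hxj'.symm hcx.symm]
      · intro π _
        simp [← mul_assoc]
  rw [hdecomp, hextend, Finset.sum_comm]
  exact Finset.sum_eq_zero fun π _ => hTsum π
end

section
/- Let a₁,…,a_k be elements of a (not necessarily commutative) ring, and let [k] = {1,…,k} = M ∪ N be a partition into two disjoint subsets. Suppose a_i and a_j anticommute (a_i a_j = −a_j a_i) whenever i ≠ j both lie in M, and commute (a_i a_j = a_j a_i) otherwise. Suppose 𝒫 is a partition of [k] into consecutive intervals of cardinalities m₁+1, …, m_{|N|}+1 with each m_r even, and suppose N consists exactly of the leftmost elements of these intervals (so M is the union of the remaining elements). Let 𝔖 ⊆ 𝔖_k be the Young subgroup corresponding to 𝒫. Then Σ_{π ∈ 𝔖} sign(π) · a_{π(1)} a_{π(2)} ⋯ a_{π(k)} = m₁! ⋯ m_{|N|}! · a₁ a₂ ⋯ a_k. -/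
section InversionWeight

variable {ι : Type*} [LinearOrder ι]

/-- The product of `w x y` over all inversions of the word `l`, that is, over all pairs in which
`x` occurs before `y` although `y < x`. -/
def inversionWeight (w : ι → ι → ℤ) : List ι → ℤ
  | [] => 1
  | x :: l => (l.map fun y => if y < x then w x y else 1).prod * inversionWeight w l

/-- If letters commute up to the coefficients `w`, then the product over a word, weighted by its
inversions, does not depend on the order of the letters. -/
theorem inversionWeight_smul_prod_eq_of_perm {A : Type*} [Ring A] (a : ι → A) (w : ι → ι → ℤ)
    (hw : ∀ x y, x ≠ y → a y * a x = w x y • (a x * a y)) {l₁ l₂ : List ι} (h : l₁.Perm l₂)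
    (hl : l₁.Nodup) :
    inversionWeight w l₁ • (l₁.map a).prod = inversionWeight w l₂ • (l₂.map a).prod := by
  induction h with
  | nil => rfl
  | @cons x l₁ l₂ h ih =>
    simp only [inversionWeight, List.map_cons, List.prod_cons, mul_smul]
    rw [(h.map fun y => if y < x then w x y else 1).prod_eq, ← mul_smul_comm,
      ih (List.nodup_cons.1 hl).2, mul_smul_comm]
  | swap x y l =>
    have hne : y ≠ x := by
      rintro rfl
      simp at hl
    simp only [inversionWeight, List.map_cons, List.prod_cons, ← mul_assoc]
    rcases lt_or_gt_of_ne hne with h | h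
    · simp only [h, h.not_gt, if_true, if_false, hw x y hne.symm, smul_mul_assoc, smul_smul]
      congr 1
      ring
    · simp only [h, h.not_gt, if_true, if_false, hw y x hne, smul_mul_assoc, smul_smul]
      congr 1
      ring
  | trans h₁ _ ih₁ ih₂ => exact (ih₁ hl).trans (ih₂ (h₁.nodup_iff.1 hl))

theorem inversionWeight_ofFn (w : ι → ι → ℤ) {n : ℕ} (f : Fin n → ι) :
    inversionWeight w (List.ofFn f) =
      ∏ i, ∏ j ∈ Finset.Ioi i, if f j < f i then w (f i) (f j) else 1 := by
  induction n with
  | zero => simp [inversionWeight]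
  | succ n ih =>
    rw [List.ofFn_succ, inversionWeight, ih, Fin.prod_univ_succ]
    simp only [Fin.prod_Ioi_zero, Fin.prod_Ioi_succ, List.map_ofFn, List.prod_ofFn,
      Function.comp_apply]

end InversionWeight

/-- A sign-weighted reordered product is the ordered product times a product of local signs. -/
theorem sign_smul_prod_ofFn_perm {A : Type*} [Ring A] {n : ℕ} (a : Fin n → A)
    (w : Fin n → Fin n → ℤ) (hw : ∀ x y, x ≠ y → a y * a x = w x y • (a x * a y))
    (hw2 : ∀ x y, w x y * w x y = 1) (π : Equiv.Perm (Fin n)) :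
    (Equiv.Perm.sign π : ℤ) • (List.ofFn fun i => a (π i)).prod =
      (∏ i, ∏ j ∈ Finset.Ioi i, if π i < π j then 1 else -w (π i) (π j)) •
        (List.ofFn a).prod := by
  set W := inversionWeight w (List.ofFn π) with hW
  have hWprod : W • (List.ofFn fun i => a (π i)).prod = (List.ofFn a).prod := by
    have h := inversionWeight_smul_prod_eq_of_perm a w hw
      (π.ofFn_comp_perm id) (List.nodup_ofFn.2 π.injective)
    have hid : inversionWeight w (List.ofFn (id : Fin n → Fin n)) = 1 := by
      rw [inversionWeight_ofFn]
      refine Finset.prod_eq_one fun i _ => Finset.prod_eq_one fun j hj => ?_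
      exact if_neg (Finset.mem_Ioi.1 hj).not_gt
    rw [hid, one_smul, List.map_ofFn, List.map_ofFn] at h
    exact h
  have hWsq : W * W = 1 := by
    rw [hW, inversionWeight_ofFn, ← Finset.prod_mul_distrib]
    refine Finset.prod_eq_one fun i _ => ?_
    rw [← Finset.prod_mul_distrib]
    refine Finset.prod_eq_one fun j _ => ?_
    split_ifs <;> simp [hw2]
  have hcoef : (∏ i, ∏ j ∈ Finset.Ioi i, if π i < π j then 1 else -w (π i) (π j)) =
      (Equiv.Perm.sign π : ℤ) * W := by
    rw [hW, inversionWeight_ofFn, Equiv.Perm.sign_eq_prod_prod_Ioi]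
    push_cast
    rw [← Finset.prod_mul_distrib]
    refine Finset.prod_congr rfl fun i _ => ?_
    rw [← Finset.prod_mul_distrib]
    refine Finset.prod_congr rfl fun j hj => ?_
    have hne : π i ≠ π j := fun h => (Finset.mem_Ioi.1 hj).ne (π.injective h)
    rcases lt_or_gt_of_ne hne with h | h <;> simp [h, h.not_gt]
  rw [hcoef, ← hWprod, smul_smul, mul_assoc, hWsq, mul_one]

/-- A sum over a Young subgroup of products of matrix entries is the product of the permanents of
the diagonal blocks. -/
theorem sum_youngSubgroup_prod {α β R : Type*} [Fintype α] [DecidableEq α] [Fintype β]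
    [DecidableEq β] [CommSemiring R] (g : α → β)
    [DecidablePred fun π : Equiv.Perm α => ∀ i, g (π i) = g i] (c : α → α → R) :
    ∑ π ∈ Finset.univ.filter (fun π : Equiv.Perm α => ∀ i, g (π i) = g i), ∏ j, c j (π j) =
      ∏ r, ∑ σ : Equiv.Perm {i // g i = r}, ∏ j : {i // g i = r}, c j (σ j) := by
  rw [Finset.prod_univ_sum, Fintype.piFinset_univ]
  symm
  refine Finset.sum_bij (fun σ _ => DomMulAct.stabilizerEquiv_invFun_aux σ) ?_ ?_ ?_ ?_
  · exact fun σ _ => Finset.mem_filter.2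
      ⟨Finset.mem_univ _, DomMulAct.comp_stabilizerEquiv_invFun σ⟩
  · intro σ _ τ _ h
    ext r x
    have hx := congrArg (fun π : Equiv.Perm α => π x) h
    change DomMulAct.stabilizerEquiv_invFun σ x = DomMulAct.stabilizerEquiv_invFun τ x at hx
    rwa [DomMulAct.stabilizerEquiv_invFun_eq σ x.2,
      DomMulAct.stabilizerEquiv_invFun_eq τ x.2] at hx
  · intro π hπ
    refine ⟨fun r => π.subtypePerm fun x => by rw [(Finset.mem_filter.1 hπ).2 x],
      Finset.mem_univ _, ?_⟩
    ext x
    rfl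
  · intro σ _
    rw [← Fintype.prod_fiberwise g]
    refine Finset.prod_congr rfl fun r _ => Finset.prod_congr rfl fun j _ => ?_
    congr 1
    exact (DomMulAct.stabilizerEquiv_invFun_eq σ j.2).symm

theorem sum_perm_neg_one_pow_apply_zero {m : ℕ} (hm : Even m) :
    ∑ σ : Equiv.Perm (Fin (m + 1)), (-1 : ℤ) ^ (σ 0 : ℕ) = m.factorial := by
  rw [← Equiv.Perm.decomposeFin.symm.sum_comp, Fintype.sum_prod_type]
  simp only [Equiv.Perm.decomposeFin_symm_apply_zero, Finset.sum_const, Finset.card_univ,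
    Fintype.card_perm, Fintype.card_fin, nsmul_eq_mul]
  rw [← Finset.mul_sum, Fin.sum_univ_eq_sum_range (fun i => (-1 : ℤ) ^ i) (m + 1),
    neg_one_geom_sum, if_neg (Nat.not_even_iff_odd.2 hm.add_one), mul_one]

/-- In a finite linear order with an odd number of elements and least element `b`, sum over all
permutations the sign of the position of `b`. -/
theorem sum_perm_prod_neg_one_eq_factorial {S : Type*} [LinearOrder S] [Fintype S] {m : ℕ}
    (hm : Even m) (hS : Fintype.card S = m + 1) (c : S → S → ℤ)
    (hc : ∀ j y, c j y = if ∀ l, y ≤ l then ∏ i, if i < j then -1 else 1 else 1) :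
    ∑ σ : Equiv.Perm S, ∏ j, c j (σ j) = m.factorial := by
  have e : Fin (m + 1) ≃o S := Fintype.orderIsoFinOfCardEq S hS
  have hbot : ∀ x : Fin (m + 1), (∀ l, e x ≤ l) ↔ x = 0 := fun x => by
    rw [e.surjective.forall]
    simp only [e.le_iff_le]
    exact ⟨fun h => Fin.le_zero_iff.1 (h 0), fun h l => h ▸ Fin.zero_le l⟩
  rw [← sum_perm_neg_one_pow_apply_zero hm,
    ← Equiv.sum_comp (Equiv.inv (Equiv.Perm (Fin (m + 1)))), ← e.toEquiv.permCongr.sum_comp]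
  refine Finset.sum_congr rfl fun σ _ => ?_
  rw [← e.toEquiv.prod_comp, Finset.prod_eq_single (σ⁻¹ 0)]
  · simp [hc, hbot]
    rw [← e.toEquiv.prod_comp]
    simp [Finset.prod_ite, Finset.filter_gt_eq_Iio]
  · intro x _ hx
    have : σ x ≠ 0 := fun h => hx (by simp [← h])
    simp [hc, hbot, this]
  · simp


/-- Let `a₁, …, a_k` be ring elements and let `{1,…,k}` be partitioned into consecutive
intervals (the fibers of a monotone map `g`) of cardinalities `m₁+1, …, m_t+1` with each
`m_r` even. Let `N` consist of the leftmost elements of the intervals and `M` of the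
remaining elements; suppose elements indexed by distinct members of `M` anticommute and
all other pairs commute. Then the signed sum `Σ_π sign(π) a_{π(1)} ⋯ a_{π(k)}` over the
Young subgroup of the partition equals `m₁! ⋯ m_t! ⋅ a₁ ⋯ a_k`. -/
theorem young_subgroup_signed_sum_intervals
    (A : Type*) [Ring A] (k t : ℕ) (a : Fin k → A)
    (msz : Fin t → ℕ) (hmsz : ∀ r, Even (msz r))
    (g : Fin k → Fin t) (hgmono : Monotone g)
    (hcard : ∀ r, (Finset.univ.filter fun i => g i = r).card = msz r + 1)
    (N M : Finset (Fin k))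
    (hN : N = Finset.univ.filter fun i => ∀ j, g j = g i → i ≤ j)
    (hM : M = Nᶜ)
    (hanti : ∀ i ∈ M, ∀ j ∈ M, i ≠ j → a i * a j = -(a j * a i))
    (hcomm : ∀ i j : Fin k, i ∉ M ∨ j ∉ M → a i * a j = a j * a i) :
    ∑ π ∈ Finset.univ.filter (fun π : Equiv.Perm (Fin k) => ∀ i, g (π i) = g i),
      (Equiv.Perm.sign π : ℤ) • (List.ofFn fun i => a (π i)).prod =
    (∏ r, (msz r).factorial) • (List.ofFn a).prod := by
  have hMmem : ∀ i, i ∈ M ↔ ¬ ∀ j, g j = g i → i ≤ j := fun i => by simp [hM, hN]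
  set w : Fin k → Fin k → ℤ := fun x y => if x ∈ M ∧ y ∈ M then -1 else 1 with hw
  set c : Fin k → Fin k → ℤ := fun j y =>
    if ∀ l, g l = g y → y ≤ l then ∏ i, if i < j ∧ g i = g j then -1 else 1 else 1 with hc
  have hterm : ∀ π ∈ Finset.univ.filter (fun π : Equiv.Perm (Fin k) => ∀ i, g (π i) = g i),
      (Equiv.Perm.sign π : ℤ) • (List.ofFn fun i => a (π i)).prod =
        (∏ j, c j (π j)) • (List.ofFn a).prod := by
    intro π hπ
    replace hπ := (Finset.mem_filter.1 hπ).2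
    rw [sign_smul_prod_ofFn_perm a w]
    · congr 1
      rw [Finset.prod_comm' (t' := Finset.univ) (s' := fun j => Finset.Iio j) (by simp)]
      refine Finset.prod_congr rfl fun j _ => ?_
      have hIio : c j (π j) = ∏ i ∈ Finset.Iio j,
          if g i = g j ∧ ∀ l, g l = g (π j) → π j ≤ l then -1 else 1 := by
        rw [hc]
        by_cases h : ∀ l, g l = g (π j) → π j ≤ l
        · have hand : ∀ i, (g i = g j ∧ ∀ l, g l = g (π j) → π j ≤ l) ↔ g i = g j :=
            fun i => and_iff_left h
          simp only [hand, if_pos h, ite_and]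
          rw [← Finset.prod_filter, Finset.filter_gt_eq_Iio]
        · simp only [h, and_false, if_false, Finset.prod_const_one]
      rw [hIio]
      refine Finset.prod_congr rfl fun i hi => ?_
      have hij : i < j := Finset.mem_Iio.1 hi
      have hne : π i ≠ π j := fun h => hij.ne (π.injective h)
      by_cases hlt : π i < π j
      · rw [if_pos hlt, if_neg]
        rintro ⟨h₁, h₂⟩
        exact hlt.not_ge (h₂ _ (by rw [hπ, hπ, h₁]))
      · have hgt : π j < π i := lt_of_le_of_ne (not_lt.1 hlt) hne.symm
        have hg : g i = g j := le_antisymm (hgmono hij.le) (by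
          simpa only [hπ] using hgmono hgt.le)
        have hi : π i ∈ M := (hMmem _).2 fun h => hgt.not_ge (h _ (by rw [hπ, hπ, hg]))
        rw [if_neg hlt]
        by_cases hj : π j ∈ M
        · rw [if_neg fun h => (hMmem _).1 hj h.2]
          simp [hw, hi, hj]
        · rw [if_pos ⟨hg, not_not.1 (mt (hMmem _).2 hj)⟩]
          simp [hw, hj]
    · intro x y hxy
      by_cases h : x ∈ M ∧ y ∈ M
      · simp [hw, h, hanti y h.2 x h.1 hxy.symm]
      · simp only [hw, h, if_false, one_smul]
        exact hcomm y x (by tauto)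
    · intro x y
      simp only [hw]
      split_ifs <;> norm_num
  rw [Finset.sum_congr rfl hterm, ← Finset.sum_smul, sum_youngSubgroup_prod,
    ← natCast_zsmul]
  congr 1
  push_cast
  refine Finset.prod_congr rfl fun r _ => ?_
  refine sum_perm_prod_neg_one_eq_factorial (S := {i // g i = r}) (hmsz r)
    (by rw [Fintype.card_subtype, hcard])
    (fun j y => c j y) fun j y => ?_
  have hleast : (∀ l, g l = g y → (y : Fin k) ≤ l) ↔ ∀ l, y ≤ l := by
    rw [y.2]
    exact ⟨fun h l => h l l.2, fun h l hl => h ⟨l, hl⟩⟩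
  simp only [hc, hleast]
  congr 1
  simp only [j.2, and_comm, ite_and]
  rw [← Finset.prod_filter,
    Finset.prod_subtype (F := inferInstance) (p := fun i => g i = r) _ (by simp)]
  simp
end

section
/- Let R be a commutative ring, m ≥ 0 and n ≥ 1. Then the ring M_n E^m of n×n matrices over the Grassmann algebra E^m satisfies the Capelli identity of x-degree k = n² + 2⌊m/2⌋ + 1; that is, for all A₁,…,A_k, B₀,…,B_k ∈ M_n E^m, Σ_{π ∈ 𝔖_k} sign(π) · B₀ A_{π(1)} B₁ A_{π(2)} B₂ ⋯ B_{k−1} A_{π(k)} B_k = 0. -/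
theorem Finset.sum_neg_one_pow_card_filter_lt {α : Type*} [LinearOrder α] (Y : Finset α) :
    ∑ b ∈ Y, (-1 : ℤ) ^ (Y.filter (· < b)).card = if Even Y.card then 0 else 1 := by
  induction Y using Finset.induction_on_max with
  | empty => simp
  | insert a s ha ih =>
    have has : a ∉ s := fun h => lt_irrefl _ (ha a h)
    have key : ∑ b ∈ s, (-1 : ℤ) ^ ((insert a s).filter (· < b)).card
        = ∑ b ∈ s, (-1 : ℤ) ^ (s.filter (· < b)).card := by
      refine Finset.sum_congr rfl fun b hb => ?_
      rw [Finset.filter_insert, if_neg (ha b hb).not_gt]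
    rw [Finset.sum_insert has, key, ih, Finset.filter_insert, if_neg (lt_irrefl a),
      Finset.filter_true_of_mem ha, Finset.card_insert_of_notMem has]
    by_cases h : Even s.card
    · simp [h, Nat.even_add_one]
    · simp [h, Nat.even_add_one, (Nat.not_even_iff_odd.mp h).neg_one_pow]

/-- In a product whose entries in `Y` anticommute with `y`, moving the factor `y` from position `b`
to the front costs one sign for each element of `Y` before `b`. -/
theorem List.prod_ofFn_update_eq_neg_one_pow {E : Type*} [Ring E] {k : ℕ} (x : Fin k → E)
    (Y : Finset (Fin k)) (b : Fin k) (y : E) (hY : ∀ j ∈ Y, x j * y = -(y * x j))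
    (hx : ∀ j, j ∉ Y → j ≠ b → x j = 1) (hb : b ∉ Y) :
    (List.ofFn (Function.update x b y)).prod =
      (-1) ^ (Y.filter (· < b)).card * (y * (List.ofFn (Function.update x b 1)).prod) := by
  induction k with
  | zero => exact b.elim0
  | succ k ih =>
    have hcons (z : E) : Function.update x 0 z = Fin.cons z (Fin.tail x) := by
      conv_lhs => rw [← Fin.cons_self_tail x]
      exact Fin.update_cons_zero _ _ _
    cases b using Fin.cases with
    | zero =>
      rw [hcons, hcons]
      simp
    | succ b =>
      have hcons' (z : E) :
          Function.update x b.succ z = Fin.cons (x 0) (Function.update (Fin.tail x) b z) := by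
        conv_lhs => rw [← Fin.cons_self_tail x]
        exact (Fin.cons_update _ _ _ _).symm
      set Y' : Finset (Fin k) := Finset.univ.filter (fun j => j.succ ∈ Y) with hY'
      have hc : (Y.filter (· < b.succ)).card
          = (if (0 : Fin (k + 1)) ∈ Y then 1 else 0) + (Y'.filter (· < b)).card := by
        have h1 : Y.filter (· < b.succ)
            = Finset.univ.filter (fun j => j ∈ Y ∧ j < b.succ) := by ext; simp
        have h2 : Y'.filter (· < b)
            = Finset.univ.filter (fun j : Fin k => j.succ ∈ Y ∧ j.succ < b.succ) := by
          ext; simp [hY']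
        rw [h1, h2, Fin.card_filter_univ_succ]
        by_cases h : (0 : Fin (k + 1)) ∈ Y <;> simp [h, add_comm]
      have := ih (Fin.tail x) Y' b (fun j hj => hY _ (by simpa [hY'] using hj))
        (fun j hj hjb => hx _ (by simpa [hY'] using hj) (by simpa using hjb))
        (by simpa [hY'] using hb)
      rw [hcons', hcons', List.ofFn_cons, List.ofFn_cons, List.prod_cons, List.prod_cons, this, hc]
      by_cases h : (0 : Fin (k + 1)) ∈ Y
      · simp only [h, if_true, pow_add, pow_one, ← mul_assoc]
        rw [((Commute.neg_one_right (x 0)).pow_right _).eq, mul_assoc _ (x 0) y, hY 0 h,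
          ((Commute.neg_one_left _).pow_right _ : Commute (-1 : E) _).eq]
        simp [mul_assoc]
      · rw [hx 0 h (Fin.succ_ne_zero b).symm]
        simp [h]

/-- Exchanging a trivial factor with each of an odd number of pairwise anticommuting factors gives
an alternating sum with an even number of terms. -/
theorem Finset.sum_sign_smul_prod_mul_swap_eq_zero {E : Type*} [Ring E] {k : ℕ} (w : Fin k → E)
    (Z : Finset (Fin k)) (hw : ∀ i ∈ Z, w i = 1)
    (hanti : ∀ i ∉ Z, ∀ j ∉ Z, w i * w j = -(w j * w i)) (hodd : Odd Zᶜ.card)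
    (π : Equiv.Perm (Fin k)) (a : Fin k) (ha : π a ∈ Z) :
    ∑ b with π b ∉ Z ∨ b = a, (Equiv.Perm.sign (π * Equiv.swap a b) : ℤ) •
      (List.ofFn fun j => w ((π * Equiv.swap a b) j)).prod = 0 := by
  classical
  set Y : Finset (Fin k) := Finset.univ.filter (fun b => π b ∉ Z ∨ b = a) with hYdef
  have haY : a ∈ Y := by simp [hYdef]
  have hYeven : Even Y.card := by
    have : Y = insert a (Zᶜ.map π.symm.toEmbedding) := by
      ext b
      simp [hYdef, or_comm, Finset.mem_map_equiv]
    rw [this, Finset.card_insert_of_notMem (by simpa [Finset.mem_map_equiv] using ha),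
      Finset.card_map]
    exact hodd.add_one
  have key : ∀ b ∈ Y, (Equiv.Perm.sign (π * Equiv.swap a b) : ℤ) •
      (List.ofFn fun j => w ((π * Equiv.swap a b) j)).prod =
      ((-1 : ℤ) ^ (Y.filter (· < b)).card * (-1) ^ (Y.filter (· < a)).card *
        Equiv.Perm.sign π) • (List.ofFn fun j => w (π j)).prod := by
    intro b hb
    rcases eq_or_ne b a with rfl | hba
    · rw [← mul_pow]; simp
    have hπb : π b ∉ Z := by simpa [hYdef, hba] using hb
    set x : Fin k → E := fun j => if j = b then 1 else w (π j) with hx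
    set Y' := (Y.erase a).erase b with hY'
    have h1 : (fun j => w ((π * Equiv.swap a b) j)) = Function.update x a (w (π b)) := by
      funext j
      rcases eq_or_ne j a with rfl | hja
      · simp
      rcases eq_or_ne j b with rfl | hjb
      · simp [hx, hja, hw _ ha]
      · simp [hx, hja, hjb, Equiv.swap_apply_of_ne_of_ne]
    have h2 : (fun j => w (π j)) = Function.update x b (w (π b)) := by
      funext j
      rcases eq_or_ne j b with rfl | hjb
      · simp
      · simp [hx, hjb]
    have hxa : Function.update x a 1 = x := by
      simp [hx, hba.symm, hw _ ha]
    have hxb : Function.update x b 1 = x := by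
      simp [hx]
    have hanti' : ∀ j ∈ Y', x j * w (π b) = -(w (π b) * x j) := by
      intro j hj
      simp only [hY', Finset.mem_erase, hYdef, Finset.mem_filter, Finset.mem_univ, true_and] at hj
      simp only [hx, if_neg hj.1]
      exact hanti _ (by tauto) _ hπb
    have hone : ∀ j ∉ Y', x j = 1 := by
      intro j hj
      by_cases hjb : j = b
      · simp [hx, hjb]
      · simp only [hx, if_neg hjb]
        apply hw
        by_contra hjZ
        refine hj ?_
        have : j ≠ a := by rintro rfl; exact hjZ ha
        simp [hY', hYdef, hjb, hjZ, this]
    rw [h1, h2, List.prod_ofFn_update_eq_neg_one_pow x Y' a _ hanti' (fun j hj _ => hone j hj)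
      (by simp [hY']), List.prod_ofFn_update_eq_neg_one_pow x Y' b _ hanti'
      (fun j hj _ => hone j hj) (by simp [hY']), hxa, hxb]
    have hcard : (Y.filter (· < b)).card + (Y.filter (· < a)).card
        = (Y'.filter (· < b)).card + (Y'.filter (· < a)).card + 1 := by
      rcases lt_or_gt_of_ne hba with h | h
      · have e1 : Y'.filter (· < b) = Y.filter (· < b) := by
          ext j; simp only [hY', Finset.mem_filter, Finset.mem_erase]; grind
        have e2 : Y'.filter (· < a) = (Y.filter (· < a)).erase b := by
          ext j; simp only [hY', Finset.mem_filter, Finset.mem_erase]; grind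
        rw [e1, e2, add_assoc, Finset.card_erase_add_one (by simp [hb, h])]
      · have e1 : Y'.filter (· < a) = Y.filter (· < a) := by
          ext j; simp only [hY', Finset.mem_filter, Finset.mem_erase]; grind
        have e2 : Y'.filter (· < b) = (Y.filter (· < b)).erase a := by
          ext j; simp only [hY', Finset.mem_filter, Finset.mem_erase]; grind
        rw [e1, e2, add_right_comm, Finset.card_erase_add_one (by simp [haY, h])]
    rw [← pow_add, hcard, Equiv.Perm.sign_mul, Equiv.Perm.sign_swap hba.symm]
    rw [zsmul_eq_mul, zsmul_eq_mul]
    push_cast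
    have hs : (-1 : E) ^ (Y'.filter (· < b)).card * (-1) ^ (Y'.filter (· < a)).card *
        (-1) ^ (Y'.filter (· < b)).card = (-1) ^ (Y'.filter (· < a)).card := by
      rw [← pow_add, ← pow_add, add_right_comm, pow_add, Even.neg_one_pow ⟨_, rfl⟩, one_mul]
    rcases Int.units_eq_one_or (Equiv.Perm.sign π) with h | h <;>
      simp only [h, pow_add, ← mul_assoc] <;> simp
    all_goals
      rw [hs, mul_assoc]
  rw [Finset.sum_congr rfl key, ← Finset.sum_smul, ← Finset.sum_mul, ← Finset.sum_mul,
    Finset.sum_neg_one_pow_card_filter_lt, if_pos hYeven]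
  simp

/-- Signed sum over the colour-preserving orderings of a family consisting of one trivial factor of
each colour and an odd number of pairwise anticommuting factors. -/
theorem Finset.sum_sign_smul_prod_filter_eq_zero {E S : Type*} [Ring E] [DecidableEq S] {k : ℕ}
    (w : Fin k → E) (Z : Finset (Fin k)) (hw : ∀ i ∈ Z, w i = 1)
    (hanti : ∀ i ∉ Z, ∀ j ∉ Z, w i * w j = -(w j * w i)) (hodd : Odd Zᶜ.card)
    (σ c : Fin k → S) (hinj : ∀ i ∈ Z, ∀ j ∈ Z, σ i = σ j → i = j)
    (hsurj : ∀ s, ∃ i ∈ Z, σ i = s) :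
    ∑ π : Equiv.Perm (Fin k) with ∀ j, σ (π j) = c j,
      (Equiv.Perm.sign π : ℤ) • (List.ofFn fun j => w (π j)).prod = 0 := by
  classical
  choose z hzZ hz using hsurj
  have hk : 0 < k := by
    obtain ⟨i, -⟩ := Finset.card_pos.mp hodd.pos
    exact i.pos
  set u : Equiv.Perm (Fin k) → E :=
    fun π => (Equiv.Perm.sign π : ℤ) • (List.ofFn fun j => w (π j)).prod with hu
  have hswap : ∀ (π : Equiv.Perm (Fin k)) (b e : Fin k), b ≠ e → π b ∈ Z → π e ∈ Z →
      u (π * Equiv.swap b e) = -u π := by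
    intro π b e hbe hb he
    have : (fun j => w ((π * Equiv.swap b e) j)) = fun j => w (π j) := by
      funext j
      rcases eq_or_ne j b with rfl | hjb
      · simp [hw _ hb, hw _ he]
      rcases eq_or_ne j e with rfl | hje
      · simp [hw _ hb, hw _ he]
      · simp [Equiv.swap_apply_of_ne_of_ne hjb hje]
    simp only [hu, this, Equiv.Perm.sign_mul, Equiv.Perm.sign_swap hbe]
    simp
  set s₀ : S := c ⟨0, hk⟩ with hs₀
  set a₀ : Fin k := ⟨0, hk⟩ with ha₀
  set i₀ := z s₀ with hi₀
  set P : Finset (Equiv.Perm (Fin k)) := Finset.univ.filter (fun π => ∀ j, σ (π j) = c j) with hP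
  set P₀ := P.filter (fun π => π a₀ = i₀) with hP₀
  set Q : Finset ((_ : Equiv.Perm (Fin k)) × Fin k) :=
    P₀.sigma (fun π => Finset.univ.filter (fun b => π b ∉ Z ∨ b = a₀)) with hQ
  have hQmem : ∀ p : (_ : Equiv.Perm (Fin k)) × Fin k, p ∈ Q ↔
      ((∀ j, σ (p.1 j) = c j) ∧ p.1 a₀ = i₀) ∧ (p.1 p.2 ∉ Z ∨ p.2 = a₀) := by
    intro p; simp [hQ, hP₀, hP]
  have hQsum : ∑ p ∈ Q, u (p.1 * Equiv.swap a₀ p.2) = 0 := by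
    rw [hQ, Finset.sum_sigma]
    refine Finset.sum_eq_zero fun π hπ => ?_
    have : π a₀ = i₀ := (Finset.mem_filter.mp hπ).2
    exact Finset.sum_sign_smul_prod_mul_swap_eq_zero w Z hw hanti hodd π a₀ (this ▸ hzZ _)
  have hsame : ∑ p ∈ Q with c p.2 = s₀, u (p.1 * Equiv.swap a₀ p.2) = ∑ π ∈ P, u π := by
    refine Finset.sum_bij' (fun p _ => p.1 * Equiv.swap a₀ p.2)
      (fun π _ => ⟨π * Equiv.swap a₀ (π.symm i₀), π.symm i₀⟩) ?_ ?_ ?_ ?_ ?_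
    · rintro ⟨π, b⟩ hp
      rw [Finset.mem_filter, hQmem] at hp
      obtain ⟨⟨⟨hc, ha⟩, hb⟩, hcb⟩ := hp
      simp only [hP, Finset.mem_filter, Finset.mem_univ, true_and, Equiv.Perm.mul_apply]
      intro j
      rcases eq_or_ne j a₀ with rfl | hja
      · rw [Equiv.swap_apply_left, hc]; exact hcb
      rcases eq_or_ne j b with rfl | hjb
      · rw [Equiv.swap_apply_right, hc]; exact hcb.symm
      · rw [Equiv.swap_apply_of_ne_of_ne hja hjb, hc]
    · intro π hπ
      have hc : ∀ j, σ (π j) = c j := by simpa [hP] using hπ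
      have hcb : c (π.symm i₀) = s₀ := by rw [← hc]; simp [hi₀, hz]
      rw [Finset.mem_filter, hQmem]
      refine ⟨⟨⟨fun j => ?_, by simp⟩, ?_⟩, hcb⟩
      · simp only [Equiv.Perm.mul_apply]
        rcases eq_or_ne j a₀ with rfl | hja
        · rw [Equiv.swap_apply_left, hc]; exact hcb
        rcases eq_or_ne j (π.symm i₀) with rfl | hjb
        · rw [Equiv.swap_apply_right, hc]; exact hcb.symm
        · rw [Equiv.swap_apply_of_ne_of_ne hja hjb, hc]
      · simp only [Equiv.Perm.mul_apply, Equiv.swap_apply_right]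
        by_contra! h
        refine h.2 ?_
        rw [Equiv.symm_apply_eq]
        exact hinj _ (hzZ _) _ h.1 ((hz _).trans (hc a₀).symm)
    · rintro ⟨π, b⟩ hp
      rw [Finset.mem_filter, hQmem] at hp
      have : (π * Equiv.swap a₀ b).symm i₀ = b := by
        rw [Equiv.symm_apply_eq]; simp [hp.1.1.2]
      simp only [this]
      simp [mul_assoc]
    · intro π hπ
      simp [mul_assoc]
    · intros; rfl
  have hdiff : ∑ p ∈ Q with ¬ c p.2 = s₀, u (p.1 * Equiv.swap a₀ p.2) = 0 := by
    have hfacts : ∀ p ∈ Q.filter (fun p => ¬ c p.2 = s₀),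
        (p.1 p.2 ∉ Z ∧ p.1 a₀ = i₀ ∧ ∀ j, σ (p.1 j) = c j) ∧ p.2 ≠ a₀ ∧
        p.2 ≠ p.1.symm (z (c p.2)) ∧ p.1.symm (z (c p.2)) ≠ a₀ ∧
        c (p.1.symm (z (c p.2))) = c p.2 ∧ ¬ c p.2 = s₀ := by
      rintro ⟨π, b⟩ hp
      rw [Finset.mem_filter, hQmem] at hp
      obtain ⟨⟨⟨hc, ha⟩, hb⟩, hcb⟩ := hp
      have hba : b ≠ a₀ := by rintro rfl; exact hcb rfl
      have hbZ : π b ∉ Z := hb.resolve_right hba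
      have hce : c (π.symm (z (c b))) = c b := by rw [← hc]; simp [hz]
      refine ⟨⟨hbZ, ha, hc⟩, hba, fun h => hbZ ?_, fun h => hcb ?_, hce, hcb⟩
      · have h' : π b = z (c b) := (Equiv.eq_symm_apply π).mp h
        rw [h']; exact hzZ _
      · rw [h] at hce; exact hce.symm
    refine Finset.sum_involution (fun p _ =>
      ⟨p.1 * Equiv.swap p.2 (p.1.symm (z (c p.2))), p.1.symm (z (c p.2))⟩) ?_ ?_ ?_ ?_
    · rintro ⟨π, b⟩ hp
      obtain ⟨⟨hbZ, ha, hc⟩, hba, hbe, hea, hce, hcb⟩ := hfacts _ hp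
      dsimp only at *
      set e := π.symm (z (c b)) with he
      have h1 : π * Equiv.swap b e * Equiv.swap a₀ e = π * Equiv.swap a₀ b * Equiv.swap b e := by
        rw [mul_assoc, mul_assoc]
        congr 1
        ext j
        simp only [Equiv.Perm.mul_apply, Equiv.swap_apply_def]
        grind
      rw [h1, hswap _ b e hbe, add_neg_cancel]
      · simp [ha, hi₀, hzZ]
      · rw [Equiv.Perm.mul_apply, Equiv.swap_apply_of_ne_of_ne hea hbe.symm, he,
          Equiv.apply_symm_apply]
        exact hzZ _
    · rintro ⟨π, b⟩ hp - h
      obtain ⟨⟨hbZ, ha, hc⟩, hba, hbe, hea, hce, hcb⟩ := hfacts _ hp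
      exact hbe (congrArg Sigma.snd h).symm
    · rintro ⟨π, b⟩ hp
      obtain ⟨⟨hbZ, ha, hc⟩, hba, hbe, hea, hce, hcb⟩ := hfacts _ hp
      dsimp only at *
      rw [Finset.mem_filter, hQmem]
      refine ⟨⟨⟨fun j => ?_, ?_⟩, Or.inl ?_⟩, by rw [hce]; exact hcb⟩
      · simp only [Equiv.Perm.mul_apply]
        rcases eq_or_ne j b with rfl | hjb
        · rw [Equiv.swap_apply_left, hc, hce]
        rcases eq_or_ne j (π.symm (z (c b))) with rfl | hje
        · rw [Equiv.swap_apply_right, hc, hce]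
        · rw [Equiv.swap_apply_of_ne_of_ne hjb hje, hc]
      · simp [Equiv.swap_apply_of_ne_of_ne hba.symm hea.symm, ha]
      · simpa using hbZ
    · rintro ⟨π, b⟩ hp
      obtain ⟨⟨hbZ, ha, hc⟩, hba, hbe, hea, hce, hcb⟩ := hfacts _ hp
      dsimp only at *
      set e := π.symm (z (c b)) with he
      have h2 : (π * Equiv.swap b e).symm (z (c e)) = b := by
        rw [Equiv.symm_apply_eq, hce]; simp [he]
      rw [h2, mul_assoc, Equiv.swap_comm e b, Equiv.swap_mul_self, mul_one]
  rw [← hsame]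
  have := Finset.sum_filter_add_sum_filter_not Q (fun p => c p.2 = s₀)
    (fun p => u (p.1 * Equiv.swap a₀ p.2))
  rw [hdiff, add_zero, hQsum] at this
  exact this

theorem MultilinearMap.apply_eq_zero_of_span_eq_top {R ι M N : Type*} [CommRing R] [Fintype ι]
    [AddCommGroup M] [Module R M] [AddCommGroup N] [Module R N]
    (f : MultilinearMap R (fun _ : ι => M) N) {G : Set M} (hG : Submodule.span R G = ⊤)
    (h : ∀ v, (∀ i, v i ∈ G) → f v = 0) (v : ι → M) : f v = 0 := by
  classical
  suffices H : ∀ (t : Finset ι) (v : ι → M), (∀ i ∉ t, v i ∈ G) → f v = 0 from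
    H Finset.univ v (by simp)
  intro t
  induction t using Finset.induction_on with
  | empty => exact fun v hv => h v fun i => hv i (Finset.notMem_empty i)
  | insert a t ha ih =>
    intro v hv
    suffices H : ∀ x ∈ Submodule.span R G, f (Function.update v a x) = 0 by
      simpa using H (v a) (hG ▸ Submodule.mem_top)
    intro x hx
    induction hx using Submodule.span_induction with
    | mem x hx =>
      refine ih _ fun i hi => ?_
      rcases eq_or_ne i a with rfl | hia
      · simpa using hx
      · simpa [hia] using hv i (by simp [hia, hi])
    | zero => exact f.map_coord_zero a (by simp)
    | add x y _ _ hx hy => rw [f.map_update_add, hx, hy, add_zero]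
    | smul r x _ hx => rw [f.map_update_smul, hx, smul_zero]

theorem Submodule.span_range_single_eq_top {R S E : Type*} [CommRing R] [Fintype S]
    [DecidableEq S] [AddCommGroup E] [Module R E] {G : Set E} (hG : Submodule.span R G = ⊤) :
    Submodule.span R {v : S → E | ∃ s, ∃ x ∈ G, v = Pi.single s x} = ⊤ := by
  rw [Submodule.eq_top_iff']
  intro v
  rw [← Finset.univ_sum_single v]
  refine Submodule.sum_mem _ fun s _ => ?_
  have : Submodule.span R G ≤ (Submodule.span R {v : S → E | ∃ s, ∃ x ∈ G, v = Pi.single s x}).comap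
      (LinearMap.single R (fun _ => E) s) :=
    Submodule.span_le.mpr fun x hx => Submodule.subset_span ⟨s, x, hx, rfl⟩
  exact this (hG ▸ Submodule.mem_top : v s ∈ Submodule.span R G)

theorem ExteriorAlgebra.span_homogeneous_eq_top (R M : Type*) [CommRing R] [AddCommGroup M]
    [Module R M] :
    Submodule.span R {x : ExteriorAlgebra R M | ∃ d : ℕ, x ∈ ⋀[R]^d M ∧ (d = 0 → x = 1)} = ⊤ := by
  rw [eq_top_iff, ← ExteriorAlgebra.ιMulti_span R M]
  refine Submodule.span_mono ?_
  rintro _ ⟨⟨d, v⟩, rfl⟩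
  refine ⟨d, ExteriorAlgebra.ιMulti_range R d ⟨v, rfl⟩, ?_⟩
  rintro rfl
  simp [ExteriorAlgebra.ιMulti_apply]

theorem ExteriorAlgebra.eq_zero_of_mem_exteriorPower {R : Type*} [CommRing R] {m d : ℕ}
    (hmd : m < d) {x : ExteriorAlgebra R (Fin m → R)} (hx : x ∈ ⋀[R]^d (Fin m → R)) : x = 0 := by
  have : IsEmpty (Set.powersetCard (Fin m) d) :=
    ⟨fun s => by
      have h := Finset.card_le_univ (s : Finset (Fin m))
      rw [s.prop, Fintype.card_fin] at h
      omega⟩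
  have h : (⟨x, hx⟩ : ⋀[R]^d (Fin m → R)) = 0 :=
    ((Pi.basisFun R (Fin m)).exteriorPower d).ext_elem fun i => isEmptyElim i
  exact congrArg Subtype.val h

theorem ExteriorAlgebra.mul_eq_neg_mul_of_mem_exteriorPower_one {R M : Type*} [CommRing R]
    [AddCommGroup M] [Module R M] {x y : ExteriorAlgebra R M} (hx : x ∈ ⋀[R]^1 M)
    (hy : y ∈ ⋀[R]^1 M) : x * y = -(y * x) := by
  rw [ExteriorAlgebra.exteriorPower, pow_one] at hx hy
  obtain ⟨a, rfl⟩ := hx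
  obtain ⟨b, rfl⟩ := hy
  exact eq_neg_of_add_eq_zero_left (ExteriorAlgebra.ι_add_mul_swap a b)

theorem exists_alternatingMap_capelli (R : Type*) {S E : Type*} [CommRing R] [Ring E] [Algebra R E]
    {k : ℕ} (c : Fin k → S) (β : Fin (k + 1) → E) :
    ∃ F : (S → E) [⋀^Fin k]→ₗ[R] E, ∀ A, F A = ∑ π : Equiv.Perm (Fin k),
      (Equiv.Perm.sign π : ℤ) •
        (β 0 * (List.ofFn fun i => A (π i) (c i) * β i.succ).prod) := by
  refine ⟨MultilinearMap.alternatization ((LinearMap.mulLeft R (β 0)).compMultilinearMap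
    ((MultilinearMap.mkPiAlgebraFin R k E).compLinearMap
      fun i => LinearMap.mulRight R (β i.succ) ∘ₗ LinearMap.proj (c i))), fun A => ?_⟩
  simp [MultilinearMap.alternatization_apply, Units.smul_def]

theorem exists_multilinearMap_capelli (R : Type*) {S E : Type*} [CommRing R] [Ring E] [Algebra R E]
    {k : ℕ} (c : Fin k → S) (A : Fin k → S → E) :
    ∃ F : MultilinearMap R (fun _ : Fin (k + 1) => E) E, ∀ β, F β = ∑ π : Equiv.Perm (Fin k),
      (Equiv.Perm.sign π : ℤ) •
        (β 0 * (List.ofFn fun i => A (π i) (c i) * β i.succ).prod) := by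
  refine ⟨∑ π : Equiv.Perm (Fin k), (Equiv.Perm.sign π : ℤ) •
    (MultilinearMap.mkPiAlgebraFin R (k + 1) E).compLinearMap
      fun j => LinearMap.mulLeft R (Fin.cons (α := fun _ => E) 1 (fun i => A (π i) (c i)) j),
    fun β => ?_⟩
  simp [List.ofFn_succ]

theorem grassmann_capelli_of_homogeneous {R S : Type*} [CommRing R] [Fintype S] [DecidableEq S]
    {m k : ℕ} (hk : k = Fintype.card S + 2 * (m / 2) + 1) (c σ : Fin k → S)
    (w : Fin k → ExteriorAlgebra R (Fin m → R)) (β : Fin (k + 1) → ExteriorAlgebra R (Fin m → R))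
    (d : Fin k → ℕ) (e : Fin (k + 1) → ℕ)
    (hw : ∀ i, w i ∈ ⋀[R]^(d i) (Fin m → R)) (hw1 : ∀ i, d i = 0 → w i = 1)
    (hβ : ∀ j, β j ∈ ⋀[R]^(e j) (Fin m → R)) (hβ1 : ∀ j, e j = 0 → β j = 1) :
    ∑ π : Equiv.Perm (Fin k), (Equiv.Perm.sign π : ℤ) •
      (β 0 * (List.ofFn fun i =>
        (Pi.single (σ (π i)) (w (π i)) : S → ExteriorAlgebra R (Fin m → R)) (c i) *
          β i.succ).prod) = 0 := by
  classical
  rcases lt_or_ge m (∑ i, d i + ∑ j, e j) with hdeg | hdeg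
  · refine Finset.sum_eq_zero fun π _ => ?_
    have hmem : β 0 * (List.ofFn fun i =>
        (Pi.single (σ (π i)) (w (π i)) : S → ExteriorAlgebra R (Fin m → R)) (c i) *
          β i.succ).prod ∈ ⋀[R]^(e 0 + (List.ofFn fun i => d (π i) + e i.succ).sum) (Fin m → R) := by
      refine SetLike.mul_mem_graded (hβ 0) (SetLike.list_prod_ofFn_mem_graded
        (A := fun i => ⋀[R]^i (Fin m → R)) _ _ fun i => SetLike.mul_mem_graded ?_ (hβ _))
      by_cases h : c i = σ (π i)
      · rw [h, Pi.single_eq_same]; exact hw _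
      · rw [Pi.single_eq_of_ne h]; exact Submodule.zero_mem _
    rw [ExteriorAlgebra.eq_zero_of_mem_exteriorPower ?_ hmem, smul_zero]
    rw [List.sum_ofFn, Finset.sum_add_distrib, Equiv.sum_comp π d]
    rw [Fin.sum_univ_succ e] at hdeg
    omega
  set Z : Finset (Fin k) := Finset.univ.filter (fun i => d i = 0) with hZ
  by_cases hinj : ∀ i ∈ Z, ∀ j ∈ Z, σ i = σ j → i = j
  swap
  · push Not at hinj
    obtain ⟨i, hi, j, hj, hij, hne⟩ := hinj
    obtain ⟨F, hF⟩ := exists_alternatingMap_capelli R c β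
    rw [← hF fun i => Pi.single (σ i) (w i)]
    refine F.map_eq_zero_of_eq _ ?_ hne
    rw [hij, hw1 i (by simpa [hZ] using hi), hw1 j (by simpa [hZ] using hj)]
  have hZcard : (Z.image σ).card = Z.card :=
    Finset.card_image_of_injOn fun i hi j hj => hinj i hi j hj
  have hZle : (Z.image σ).card ≤ Fintype.card S := Finset.card_le_univ _
  have hZc : Z.card + Zᶜ.card = k := by simp [Finset.card_add_card_compl]
  have hdsum : ∑ i, d i = ∑ i ∈ Zᶜ, d i := by
    rw [← Finset.sum_add_sum_compl Z d, Finset.sum_eq_zero (s := Z) (by simp [hZ]), zero_add]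
  have hd1 : ∀ i ∈ Zᶜ, 1 ≤ d i := fun i hi => by
    simpa [hZ, Nat.one_le_iff_ne_zero] using hi
  have hcard_le : Zᶜ.card ≤ ∑ i ∈ Zᶜ, d i := by
    simpa using Finset.card_nsmul_le_sum Zᶜ d 1 hd1
  have hdeq : ∀ i ∈ Zᶜ, d i = 1 := by
    have : ∑ i ∈ Zᶜ, 1 = ∑ i ∈ Zᶜ, d i := by simp; omega
    exact fun i hi => ((Finset.sum_eq_sum_iff_of_le hd1).mp this i hi).symm
  have hβone : ∀ j, β j = 1 := by
    have : ∑ j, e j = 0 := by omega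
    exact fun j => hβ1 j (Finset.sum_eq_zero_iff.mp this j (Finset.mem_univ j))
  have hsurj : ∀ s, ∃ i ∈ Z, σ i = s := by
    have : Z.image σ = Finset.univ := (Finset.card_eq_iff_eq_univ _).mp (by omega)
    exact fun s => Finset.mem_image.mp (this ▸ Finset.mem_univ s)
  have hmain := Finset.sum_sign_smul_prod_filter_eq_zero w Z
    (fun i hi => hw1 i (by simpa [hZ] using hi))
    (fun i hi j hj => ExteriorAlgebra.mul_eq_neg_mul_of_mem_exteriorPower_one
      (hdeq i (Finset.mem_compl.mpr hi) ▸ hw i) (hdeq j (Finset.mem_compl.mpr hj) ▸ hw j))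
    (by rw [Nat.odd_iff]; omega) σ c hinj hsurj
  rw [Finset.sum_filter] at hmain
  rw [← hmain]
  refine Finset.sum_congr rfl fun π _ => ?_
  simp only [hβone, mul_one, one_mul]
  split_ifs with h
  · simp [h]
  · push Not at h
    obtain ⟨j, hj⟩ := h
    rw [List.prod_eq_zero, smul_zero]
    rw [List.mem_ofFn]
    exact ⟨j, Pi.single_eq_of_ne hj.symm _⟩

/-- The Capelli sum in the Grassmann algebra, evaluated on prescribed entries `c` of the vectors
`A i`, vanishes. -/
theorem grassmann_capelli_entries {R S : Type*} [CommRing R] [Fintype S] {m k : ℕ}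
    (hk : k = Fintype.card S + 2 * (m / 2) + 1) (c : Fin k → S)
    (A : Fin k → S → ExteriorAlgebra R (Fin m → R))
    (β : Fin (k + 1) → ExteriorAlgebra R (Fin m → R)) :
    ∑ π : Equiv.Perm (Fin k), (Equiv.Perm.sign π : ℤ) •
      (β 0 * (List.ofFn fun i => A (π i) (c i) * β i.succ).prod) = 0 := by
  classical
  have hspan := ExteriorAlgebra.span_homogeneous_eq_top R (Fin m → R)
  obtain ⟨F, hF⟩ := exists_multilinearMap_capelli R c A
  rw [← hF]
  refine F.apply_eq_zero_of_span_eq_top hspan (fun β hβ => ?_) β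
  choose e hβ hβ1 using hβ
  rw [hF]
  obtain ⟨G, hG⟩ := exists_alternatingMap_capelli R c β
  rw [← hG]
  refine G.toMultilinearMap.apply_eq_zero_of_span_eq_top
    (Submodule.span_range_single_eq_top hspan) (fun A hA => ?_) A
  choose σ w hw hA using hA
  choose d hw hw1 using hw
  obtain rfl : A = fun i => Pi.single (σ i) (w i) := funext hA
  exact (hG _).trans (grassmann_capelli_of_homogeneous hk c σ w β d e hw hw1 hβ hβ1)

theorem Matrix.exists_prod_single_mul_apply {n E : Type*} [Fintype n] [DecidableEq n] [Ring E]
    (k : ℕ) (c : Fin k → n × n) (B : Fin (k + 1) → Matrix n n E) (p q : n) :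
    ∃ β : Fin (k + 1) → E, ∀ x : Fin k → E,
      (B 0 * (List.ofFn fun i =>
        Matrix.single (c i).1 (c i).2 (x i) * B i.succ).prod : Matrix n n E) p q =
      β 0 * (List.ofFn fun i => x i * β i.succ).prod := by
  induction k generalizing p with
  | zero => exact ⟨fun _ => B 0 p q, by simp⟩
  | succ k ih =>
    obtain ⟨β, hβ⟩ := ih (Fin.tail c) (Fin.tail B) (c 0).2
    refine ⟨Fin.cons (B 0 p (c 0).1) β, fun x => ?_⟩
    have := hβ (Fin.tail x)
    simp only [Fin.tail] at this
    rw [List.ofFn_succ, List.prod_cons, List.ofFn_succ, List.prod_cons, mul_assoc]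
    simp only [Fin.cons_zero, Fin.cons_succ]
    rw [mul_assoc (x 0), ← this, Matrix.mul_apply, Finset.sum_eq_single (c 0).1,
      Matrix.single_mul_apply_same]
    · intro j _ hj
      rw [Matrix.single_mul_apply_of_ne _ _ _ _ _ hj, mul_zero]
    · simp

theorem Matrix.eq_sum_single_prod {n E : Type*} [Fintype n] [DecidableEq n] [Ring E]
    (M : Matrix n n E) : M = ∑ s : n × n, Matrix.single s.1 s.2 (M s.1 s.2) := by
  rw [Fintype.sum_prod_type]
  exact Matrix.matrix_eq_sum_single M

theorem Matrix.exists_mul_prod_apply_eq_sum {n E : Type*} [Fintype n] [DecidableEq n] [Ring E]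
    (k : ℕ) (B : Fin (k + 1) → Matrix n n E) (p q : n) :
    ∃ β : (Fin k → n × n) → Fin (k + 1) → E, ∀ X : Fin k → Matrix n n E,
      (B 0 * (List.ofFn fun i => X i * B i.succ).prod : Matrix n n E) p q =
      ∑ c : Fin k → n × n,
        β c 0 * (List.ofFn fun i => X i (c i).1 (c i).2 * β c i.succ).prod := by
  choose β hβ using fun c => Matrix.exists_prod_single_mul_apply k c B p q
  refine ⟨β, fun X => ?_⟩
  have h : (List.ofFn fun i => X i * B i.succ).prod = ∑ c : Fin k → n × n,
      (List.ofFn fun i =>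
        Matrix.single (c i).1 (c i).2 (X i (c i).1 (c i).2) * B i.succ).prod := by
    have := (MultilinearMap.mkPiAlgebraFin ℤ k (Matrix n n E)).map_sum
      (fun i (s : n × n) => Matrix.single s.1 s.2 (X i s.1 s.2) * B i.succ)
    simp only [MultilinearMap.mkPiAlgebraFin_apply, ← Finset.sum_mul,
      ← Matrix.eq_sum_single_prod] at this
    exact this
  rw [h, Finset.mul_sum, Matrix.sum_apply]
  exact Finset.sum_congr rfl fun c _ => hβ c _

/-- The ring of `n × n` matrices over the Grassmann algebra of rank `m` satisfies the
Capelli identity of `x`-degree `k = n² + 2⌊m/2⌋ + 1`. -/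
theorem grassmann_matrix_capelli_identity
    (R : Type*) [CommRing R] (m n : ℕ) (hn : 1 ≤ n)
    (k : ℕ) (hk : k = n ^ 2 + 2 * (m / 2) + 1)
    (A : Fin k → Matrix (Fin n) (Fin n) (ExteriorAlgebra R (Fin m → R)))
    (B : Fin (k + 1) → Matrix (Fin n) (Fin n) (ExteriorAlgebra R (Fin m → R))) :
    ∑ π : Equiv.Perm (Fin k),
      (Equiv.Perm.sign π : ℤ) •
        (B 0 * (List.ofFn fun i : Fin k => A (π i) * B i.succ).prod) = 0 := by
  ext p q
  obtain ⟨β, hβ⟩ := Matrix.exists_mul_prod_apply_eq_sum k B p q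
  simp only [Matrix.sum_apply, Matrix.smul_apply, Matrix.zero_apply, hβ, Finset.smul_sum]
  rw [Finset.sum_comm]
  refine Finset.sum_eq_zero fun c _ => ?_
  exact grassmann_capelli_entries (by simpa [sq] using hk) c (fun i s => A i s.1 s.2) (β c)
end

section
/- Let R be a field of characteristic zero, or of prime characteristic p > 2⌈⌊m/2⌋/n²⌉, and let n ≥ 1. Then the ring M_n E^m does not satisfy the Capelli identity of x-degree k = n² + 2⌊m/2⌋; that is, there exist C₁,…,C_k, B₀,…,B_k ∈ M_n E^m such that Σ_{π ∈ 𝔖_k} sign(π) · B₀ C_{π(1)} B₁ C_{π(2)} ⋯ B_{k−1} C_{π(k)} B_k ≠ 0. -/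
/-- The value of the Capelli polynomial at `C` and `B`. -/
def capelliSum {A : Type*} [Ring A] {k : ℕ} (C : Fin k → A) (B : Fin (k + 1) → A) : A :=
  ∑ π : Equiv.Perm (Fin k),
    (Equiv.Perm.sign π : ℤ) • (B 0 * (List.ofFn fun i : Fin k => C (π i) * B i.succ).prod)

/-- The permutation sending `0` to `i`, and acting on the remaining points as `σ` followed by the
increasing bijection onto the complement of `i`. -/
def permInsert {k : ℕ} (i : Fin (k + 1)) (σ : Equiv.Perm (Fin k)) : Equiv.Perm (Fin (k + 1)) :=
  i.cycleRange.symm * Equiv.Perm.decomposeFin.symm (0, σ)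

theorem permInsert_zero {k : ℕ} (i : Fin (k + 1)) (σ : Equiv.Perm (Fin k)) :
    permInsert i σ 0 = i := by
  simp [permInsert, Fin.cycleRange_symm_zero]

theorem permInsert_succ {k : ℕ} (i : Fin (k + 1)) (σ : Equiv.Perm (Fin k)) (j : Fin k) :
    permInsert i σ j.succ = i.succAbove (σ j) := by
  simp [permInsert, Fin.cycleRange_symm_succ]

theorem sign_permInsert {k : ℕ} (i : Fin (k + 1)) (σ : Equiv.Perm (Fin k)) :
    Equiv.Perm.sign (permInsert i σ) = (-1) ^ (i : ℕ) * Equiv.Perm.sign σ := by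
  simp [permInsert, Fin.sign_cycleRange, Equiv.Perm.decomposeFin.symm_sign]

theorem permInsert_bijective {k : ℕ} :
    Function.Bijective fun x : Fin (k + 1) × Equiv.Perm (Fin k) => permInsert x.1 x.2 := by
  rw [Fintype.bijective_iff_injective_and_card]
  constructor
  · rintro ⟨i, σ⟩ ⟨i', σ'⟩ h
    have h' : permInsert i σ = permInsert i' σ' := h
    have hi : i = i' := by rw [← permInsert_zero i σ, h', permInsert_zero]
    subst hi
    refine Prod.ext rfl (Equiv.ext fun j => i.succAbove_right_injective ?_)
    rw [← permInsert_succ, h', permInsert_succ]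
  · simp [Fintype.card_perm, Nat.factorial_succ]

theorem capelliSum_succ {A : Type*} [Ring A] {k : ℕ} (C : Fin (k + 1) → A)
    (B : Fin (k + 2) → A) :
    capelliSum C B = ∑ i : Fin (k + 1), (-1 : ℤ) ^ (i : ℕ) •
      (B 0 * C i * capelliSum (fun j => C (i.succAbove j)) fun j => B j.succ) := by
  rw [capelliSum, ← permInsert_bijective.sum_comp, Fintype.sum_prod_type]
  refine Finset.sum_congr rfl fun i _ => ?_
  rw [capelliSum, Finset.mul_sum, Finset.smul_sum]
  refine Finset.sum_congr rfl fun σ _ => ?_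
  simp only [sign_permInsert, List.ofFn_succ, List.prod_cons, permInsert_zero, permInsert_succ,
    mul_smul_comm, smul_smul, mul_assoc]
  push_cast
  rfl

theorem mul_capelliSum_eq_zero {A : Type*} [Ring A] {k : ℕ} (C : Fin k → A)
    (B : Fin (k + 1) → A) {x : A} (h : x * B 0 = 0) : x * capelliSum C B = 0 := by
  rw [capelliSum, Finset.mul_sum]
  refine Finset.sum_eq_zero fun σ _ => ?_
  rw [mul_smul_comm, ← mul_assoc, h, zero_mul, smul_zero]

/-- Moving the `i`-th factor of a product to the front, past factors it anticommutes with. -/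
theorem mul_prod_ofFn_succAbove {A : Type*} [Ring A] {k : ℕ} (c : Fin (k + 1) → A)
    (i : Fin (k + 1)) (h : ∀ j < i, c i * c j = -(c j * c i)) :
    c i * (List.ofFn fun j => c (i.succAbove j)).prod
      = (-1 : ℤ) ^ (i : ℕ) • (List.ofFn c).prod := by
  induction k with
  | zero => simp [Fin.fin_one_eq_zero i]
  | succ k ih =>
    cases i using Fin.cases with
    | zero => simp [List.ofFn_succ]
    | succ i =>
      have := ih (fun j => c j.succ) i fun j hj => h j.succ (by simpa using hj)
      rw [List.ofFn_succ (f := c), List.prod_cons, List.ofFn_succ, List.prod_cons, ← mul_assoc,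
        Fin.succ_succAbove_zero, h 0 (Fin.succ_pos i), neg_mul, mul_assoc]
      simp only [Fin.succ_succAbove_succ]
      rw [this, mul_smul_comm, Fin.val_succ, pow_succ, mul_smul, neg_one_smul, smul_neg]

/-- The sum of the signs with which the terms of a block of `o ≤ 1` units and `r` anticommuting
elements contribute to the standard polynomial. -/
def blockCoeff : ℕ → ℕ → ℤ
  | 0, r => r.factorial
  | _ + 1, r => if Even r then r.factorial else 0

theorem blockCoeff_rec {o r : ℕ} (ho : o ≤ 1) (h : o + r ≠ 0) :
    blockCoeff o r = o * blockCoeff (o - 1) r + r * ((-1) ^ o * blockCoeff o (r - 1)) := by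
  interval_cases o
  · obtain ⟨r, rfl⟩ := Nat.exists_eq_succ_of_ne_zero (n := r) (by simpa using h)
    simp [blockCoeff, Nat.factorial_succ]
  · cases r with
    | zero => simp [blockCoeff]
    | succ r =>
      rcases Nat.even_or_odd r with hr | hr
      · have : ¬ Even (r + 1) := by simpa [Nat.even_add_one] using hr
        simp [blockCoeff, hr, this, Nat.factorial_succ]
      · have h1 : Even (r + 1) := hr.add_one
        have h2 : ¬ Even r := by simpa using hr
        simp [blockCoeff, h1, h2, Nat.factorial_succ]

/-- The number of indices satisfying a predicate. -/
def indexCount {k : ℕ} (P : Fin k → Prop) [DecidablePred P] : ℕ := ∑ j, if P j then 1 else 0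

theorem indexCount_succAbove {k : ℕ} (P : Fin (k + 1) → Prop) [DecidablePred P]
    (i : Fin (k + 1)) :
    indexCount (fun j => P (i.succAbove j)) = indexCount P - if P i then 1 else 0 := by
  rw [indexCount, indexCount, Fin.sum_univ_succAbove _ i, Nat.add_sub_cancel_left]

/-- The `i`-th coefficient of the evaluation: `1` if `one i` holds, and the vector `w i` otherwise. -/
noncomputable def blockEntry (R : Type*) {M : Type*} [Field R] [AddCommGroup M] [Module R M]
    {k : ℕ} (one : Fin k → Bool) (w : Fin k → M) (i : Fin k) : ExteriorAlgebra R M :=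
  if one i then 1 else ExteriorAlgebra.ι R (w i)

/-- The product over all labels `l` of the coefficient of the block of indices labelled `l`. -/
def blocksCoeff {L : Type*} [LinearOrder L] [Fintype L] {k : ℕ} (lab : Fin k → L)
    (one : Fin k → Bool) : ℤ :=
  ∏ l, blockCoeff (indexCount fun j => lab j = l ∧ one j = true)
    (indexCount fun j => lab j = l ∧ one j = false)

theorem blocksCoeff_succ {L : Type*} [LinearOrder L] [Fintype L] {k : ℕ} (lab : Fin (k + 1) → L)
    (one : Fin (k + 1) → Bool) (hone : ∀ i, one i = true → ∀ j < i, lab j < lab i) :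
    blocksCoeff lab one = ∑ i, if lab i = lab 0 then
      (if one 0 = true ∧ one i = false then -1 else 1) *
        blocksCoeff (fun j => lab (i.succAbove j)) (fun j => one (i.succAbove j)) else 0 := by
  set o := indexCount fun j => lab j = lab 0 ∧ one j = true with ho
  set r := indexCount fun j => lab j = lab 0 ∧ one j = false with hr
  let P : ℤ := ∏ l ∈ Finset.univ.erase (lab 0),
    blockCoeff (indexCount fun j => lab j = l ∧ one j = true)
      (indexCount fun j => lab j = l ∧ one j = false)
  have hone' : ∀ i, lab i = lab 0 → one i = true → i = 0 := by
    intro i hi h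
    by_contra h0
    exact (hone i h 0 (Fin.pos_iff_ne_zero.2 h0)).ne' hi
  have ho0 : o = if one 0 = true then 1 else 0 := by
    rw [ho, indexCount, Fin.sum_univ_succ, Finset.sum_eq_zero]
    · simp
    · intro i _
      rw [if_neg]
      rintro ⟨h1, h2⟩
      exact Fin.succ_ne_zero i (hone' _ h1 h2)
  have hsum : o + r ≠ 0 := by
    rw [ho, hr, indexCount, indexCount, Fin.sum_univ_succ, Fin.sum_univ_succ]
    cases one 0 <;> simp
  have key : ∀ i, (if lab i = lab 0 then
      (if one 0 = true ∧ one i = false then -1 else 1) *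
        blocksCoeff (fun j => lab (i.succAbove j)) (fun j => one (i.succAbove j)) else 0)
      = ((if lab i = lab 0 ∧ one i = true then 1 else 0 : ℕ) * blockCoeff (o - 1) r
        + (if lab i = lab 0 ∧ one i = false then 1 else 0 : ℕ)
          * ((-1) ^ o * blockCoeff o (r - 1))) * P := by
    intro i
    by_cases hi : lab i = lab 0
    · have hrest : blocksCoeff (fun j => lab (i.succAbove j)) (fun j => one (i.succAbove j))
          = blockCoeff (o - if one i = true then 1 else 0) (r - if one i = false then 1 else 0)
            * P := by
        rw [blocksCoeff, ← Finset.mul_prod_erase _ _ (Finset.mem_univ (lab 0))]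
        congr 1
        · rw [indexCount_succAbove (fun j => lab j = lab 0 ∧ one j = true),
            indexCount_succAbove (fun j => lab j = lab 0 ∧ one j = false)]
          simp [hi, ho, hr]
        · refine Finset.prod_congr rfl fun l hl => ?_
          have hl' : lab i ≠ l := fun h => (Finset.ne_of_mem_erase hl) (h ▸ hi)
          rw [indexCount_succAbove (fun j => lab j = l ∧ one j = true),
            indexCount_succAbove (fun j => lab j = l ∧ one j = false)]
          simp [hl']
      rw [if_pos hi, hrest]
      cases h1 : one i <;> cases h0 : one 0 <;> simp [hi, ho0, h0]
    · simp [hi]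
  rw [Finset.sum_congr rfl fun i _ => key i, ← Finset.sum_mul, Finset.sum_add_distrib,
    ← Finset.sum_mul, ← Finset.sum_mul, ← Nat.cast_sum, ← Nat.cast_sum, blocksCoeff,
    ← Finset.mul_prod_erase _ _ (Finset.mem_univ (lab 0))]
  congr 1
  have ho1 : o ≤ 1 := by rw [ho0]; split <;> simp
  exact blockCoeff_rec ho1 hsum

theorem blockEntry_mul_prod {R M L : Type*} [Field R] [AddCommGroup M] [Module R M]
    [LinearOrder L] {k : ℕ} (lab : Fin (k + 1) → L)
    (one : Fin (k + 1) → Bool) (w : Fin (k + 1) → M)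
    (hone : ∀ i, one i = true → ∀ j < i, lab j < lab i)
    (hlab : Monotone lab) (i : Fin (k + 1)) (hi : lab i = lab 0) :
    blockEntry R one w i *
        (List.ofFn (blockEntry R (fun j => one (i.succAbove j)) fun j => w (i.succAbove j))).prod
      = ((-1 : ℤ) ^ (i : ℕ) * if one 0 = true ∧ one i = false then -1 else 1) •
        (List.ofFn (blockEntry R one w)).prod := by
  have hle : ∀ j ≤ i, lab j = lab 0 := fun j hj =>
    le_antisymm (hi ▸ hlab hj) (hlab (Fin.zero_le j))
  have hne : ∀ j ≤ i, j ≠ 0 → one j = false := by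
    intro j hj h0
    by_contra h
    exact (hone j (by simpa using h) 0 (Fin.pos_iff_ne_zero.2 h0)).ne' (hle j hj)
  have hanti : ∀ x y : M, ExteriorAlgebra.ι R x * ExteriorAlgebra.ι R y
      = -(ExteriorAlgebra.ι R y * ExteriorAlgebra.ι R x) := fun x y =>
    eq_neg_of_add_eq_zero_left (ExteriorAlgebra.ι_add_mul_swap x y)
  change _ * (List.ofFn fun j => blockEntry R one w (i.succAbove j)).prod = _
  cases i using Fin.cases with
  | zero =>
    rw [mul_prod_ofFn_succAbove (blockEntry R one w) 0 (by simp)]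
    cases one 0 <;> simp
  | succ i =>
    have h1 : one i.succ = false := hne _ le_rfl (Fin.succ_ne_zero i)
    cases h0 : one 0 with
    | false =>
      rw [mul_prod_ofFn_succAbove (blockEntry R one w) i.succ (by
        intro j hj
        have hj' : one j = false := by
          by_cases hj0 : j = 0
          · rw [hj0, h0]
          · exact hne j hj.le hj0
        simp [blockEntry, h1, hj', hanti (w i.succ)])]
      simp
    | true =>
      cases k with
      | zero => exact i.elim0
      | succ k =>
        have := mul_prod_ofFn_succAbove (fun j : Fin (k + 1) => blockEntry R one w j.succ) i (by
          intro j hj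
          have hj' : one j.succ = false :=
            hne _ (Fin.succ_le_succ_iff.2 hj.le) (Fin.succ_ne_zero j)
          simp [blockEntry, h1, hj', hanti (w i.succ)])
        rw [List.ofFn_succ, List.ofFn_succ (f := blockEntry R one w), List.prod_cons,
          List.prod_cons]
        have hc0 : blockEntry R one w 0 = 1 := by simp [blockEntry, h0]
        simp only [Fin.succ_succAbove_zero, hc0, one_mul, Fin.succ_succAbove_succ]
        rw [this]
        simp [h1, pow_succ]

/-- If the `C i` are multiples of matrix units sorted by label and the `B i` are the matrix units
linking them, then only permutations preserving the labels contribute, and the Capelli sum is a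
multiple of a single matrix unit. -/
theorem capelliSum_single {R M L I : Type*} [Field R] [AddCommGroup M] [Module R M]
    [LinearOrder L] [Fintype L] [DecidableEq I] [Fintype I]
    (a b : L → I) (hab : ∀ l l', a l = a l' → b l = b l' → l = l') {k : ℕ} (lab : Fin k → L)
    (one : Fin k → Bool) (w : Fin k → M) (ρ γ : Fin (k + 1) → I)
    (hone : ∀ i, one i = true → ∀ j < i, lab j < lab i) (hlab : Monotone lab)
    (hγ : ∀ i : Fin k, γ i.castSucc = a (lab i)) (hρ : ∀ i : Fin k, ρ i.succ = b (lab i)) :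
    capelliSum (fun i => Matrix.single (a (lab i)) (b (lab i)) (blockEntry R one w i))
      (fun i => Matrix.single (ρ i) (γ i) 1)
      = Matrix.single (ρ 0) (γ (Fin.last k))
        (blocksCoeff lab one • (List.ofFn (blockEntry R one w)).prod) := by
  induction k with
  | zero => simp [capelliSum, blocksCoeff, indexCount, blockCoeff]
  | succ k ih =>
    have hsum : ∀ f : Fin (k + 1) → ExteriorAlgebra R M,
        Matrix.single (ρ 0) (γ (Fin.last (k + 1))) (∑ i, f i)
          = ∑ i, Matrix.single (ρ 0) (γ (Fin.last (k + 1))) (f i) := fun f =>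
      map_sum (Matrix.singleAddMonoidHom _ _) f Finset.univ
    rw [capelliSum_succ, blocksCoeff_succ lab one hone, Finset.sum_smul, hsum]
    refine Finset.sum_congr rfl fun i _ => ?_
    have hγ0 : γ 0 = a (lab 0) := hγ 0
    have hρ0 : ρ 1 = b (lab 0) := hρ 0
    by_cases hi : lab i = lab 0
    · have hmono : Monotone i.succAbove := (Fin.strictMono_succAbove i).monotone
      have hlab' : ∀ j : Fin k, lab (i.succAbove j) = lab j.succ := by
        intro j
        rcases lt_or_ge j.castSucc i with h | h
        · have hle : ∀ j ≤ i, lab j = lab 0 := fun j hj =>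
            le_antisymm (hi ▸ hlab hj) (hlab (Fin.zero_le j))
          rw [Fin.succAbove_of_castSucc_lt _ _ h, hle _ h.le,
            hle _ (Fin.castSucc_lt_iff_succ_le.1 h)]
        · rw [Fin.succAbove_of_le_castSucc _ _ h]
      have := ih (fun j => lab (i.succAbove j)) (fun j => one (i.succAbove j))
        (fun j => w (i.succAbove j)) (fun j => ρ j.succ) (fun j => γ j.succ)
        (fun j hj j' hj' => hone _ hj _ (Fin.strictMono_succAbove i hj')) (hlab.comp hmono)
        (fun j => by rw [hlab', ← hγ, Fin.succ_castSucc]) (fun j => by rw [hlab', ← hρ])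
      change (-1 : ℤ) ^ (i : ℕ) • (_ * _ * capelliSum (fun j => Matrix.single _ _
        (blockEntry R (fun j => one (i.succAbove j)) (fun j => w (i.succAbove j)) j)) _) = _
      rw [this, hi, hγ0, Matrix.single_mul_single_same, Fin.succ_zero_eq_one, hρ0,
        Matrix.single_mul_single_same, one_mul, mul_smul_comm,
        blockEntry_mul_prod lab one w hone hlab i hi, if_pos rfl, Matrix.smul_single, Fin.succ_last,
        smul_smul, smul_smul]
      congr 2
      have hsq : (-1 : ℤ) ^ (i : ℕ) * (-1) ^ (i : ℕ) = 1 := by rw [← mul_pow]; simp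
      linear_combination ((if one 0 = true ∧ one i = false then -1 else 1) *
        blocksCoeff (fun j => lab (i.succAbove j)) fun j => one (i.succAbove j)) * hsq
    · rw [if_neg hi, zero_smul, Matrix.single_zero, mul_capelliSum_eq_zero, smul_zero]
      by_cases ha : a (lab i) = a (lab 0)
      · have hb : b (lab i) ≠ b (lab 0) := fun hb => hi (hab _ _ ha hb)
        rw [mul_assoc, Fin.succ_zero_eq_one, hρ0, Matrix.single_mul_single_of_ne (h := hb),
          mul_zero]
      · rw [hγ0, Matrix.single_mul_single_of_ne (h := Ne.symm ha), zero_mul]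

theorem prod_map_ite_one {A ι : Type*} [Monoid A] (p : ι → Bool) (f : ι → A) (l : List ι) :
    (l.map fun i => if p i then 1 else f i).prod = ((l.filter fun i => !p i).map f).prod := by
  induction l with
  | nil => simp
  | cons i l ih => cases h : p i <;> simp [h, ih]

theorem prod_map_ι_ne_zero {R M : Type*} [Field R] [AddCommGroup M] [Module R M] (l : List M)
    (hl : LinearIndependent R l.get) : (l.map (ExteriorAlgebra.ι R)).prod ≠ 0 := by
  have hι : (l.map (ExteriorAlgebra.ι R)).prod = ExteriorAlgebra.ιMulti R l.length l.get := by
    rw [ExteriorAlgebra.ιMulti_apply]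
    change _ = (List.ofFn (ExteriorAlgebra.ι R ∘ l.get)).prod
    rw [← List.map_ofFn, List.ofFn_get]
  let s : Set.powersetCard (Fin l.length) l.length := ⟨Finset.univ, by simp⟩
  have hs : ⇑(Set.powersetCard.ofFinEmbEquiv.symm s) = id := by
    have : StrictMono (Set.powersetCard.ofFinEmbEquiv.symm s) := OrderEmbedding.strictMono _
    exact this.id_le.antisymm' this.le_id
  have h := (exteriorPower.ιMulti_family_linearIndependent_field (n := l.length) hl).ne_zero s
  rw [exteriorPower.ιMulti_family, hs, Function.comp_id] at h
  rw [hι]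
  intro h0
  exact h (Subtype.ext h0)

theorem prod_ofFn_blockEntry_ne_zero {R M : Type*} [Field R] [AddCommGroup M] [Module R M] {k : ℕ}
    (one : Fin k → Bool) (w : Fin k → M)
    (hw : LinearIndependent R fun i : {i // one i = false} => w i) :
    (List.ofFn (blockEntry R one w)).prod ≠ 0 := by
  have h : (List.ofFn (blockEntry R one w)).prod
      = ((((List.finRange k).filter fun i => !one i).map w).map (ExteriorAlgebra.ι R)).prod := by
    rw [List.ofFn_eq_map, List.map_map]
    exact prod_map_ite_one one _ _
  rw [h]
  apply prod_map_ι_ne_zero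
  set l := (List.finRange k).filter fun i => !one i with hl
  have hmem : ∀ j : Fin (l.map w).length, one (l.get (j.cast (List.length_map ..))) = false := by
    intro j
    have := List.get_mem l (j.cast (List.length_map ..))
    simpa using (List.mem_filter.1 this).2
  have hnodup : l.Nodup := (List.nodup_finRange k).filter _
  have hinj : Function.Injective fun j : Fin (l.map w).length =>
      (⟨l.get (j.cast (List.length_map ..)), hmem j⟩ : {i // one i = false}) := by
    intro j j' hj
    have := hnodup.injective_get (Subtype.ext_iff.1 hj)
    simpa using this
  convert hw.comp _ hinj using 1
  ext j
  simp

theorem exists_sum_eq_of_le_mul {N T q : ℕ} (h : q ≤ N * T) :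
    ∃ t : Fin N → ℕ, (∀ l, t l ≤ T) ∧ ∑ l, t l = q := by
  induction N generalizing q with
  | zero => exact ⟨0, by simp, by simp; omega⟩
  | succ N ih =>
    obtain ⟨t, ht, hs⟩ := ih (q := q - T) (by rw [Nat.succ_mul] at h; omega)
    refine ⟨Fin.cons (min q T) t, ?_, ?_⟩
    · intro l
      cases l using Fin.cases <;> simp [ht]
    · rw [Fin.sum_univ_succ]
      simp [hs]
      omega

/-- Block structures with prescribed block sizes, each block beginning with its unit. -/
theorem exists_block_structure {N : ℕ} (t : Fin N → ℕ) {k : ℕ} (hk : k = N + 2 * ∑ l, t l) :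
    ∃ (lab : Fin k → Fin N) (one : Fin k → Bool), Monotone lab ∧
      (∀ i, one i = true → ∀ j < i, lab j < lab i) ∧
      (∀ l, indexCount (fun j => lab j = l ∧ one j = true) = 1) ∧
      ∀ l, indexCount (fun j => lab j = l ∧ one j = false) = 2 * t l := by
  let α := Σ l : Fin N, Fin (2 * t l + 1)
  let e : Fin k ≃o Lex α := Fintype.orderIsoFinOfCardEq (Lex α) (by
    rw [Fintype.card_lex, Fintype.card_sigma, hk, Finset.mul_sum]
    simp [Finset.sum_add_distrib, add_comm])
  have hcount : ∀ (P : α → Prop) [DecidablePred P],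
      indexCount (fun j => P (ofLex (e j)))
        = ∑ l, ∑ x : Fin (2 * t l + 1), if P ⟨l, x⟩ then 1 else 0 := by
    intro P _
    rw [← Fintype.sum_sigma (f := fun x : α => if P x then 1 else 0)]
    exact (e.toEquiv.trans ofLex).sum_comp fun x : α => if P x then 1 else 0
  have hfirst : ∀ x y : α, toLex y < toLex x → (x.2 : ℕ) = 0 → y.1 < x.1 := by
    rintro ⟨l, x⟩ ⟨l', y⟩ hlt hx
    rw [Sigma.Lex.lt_def] at hlt
    rcases hlt with h | ⟨h, h'⟩
    · exact h
    · obtain rfl : l' = l := h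
      have hx' : (x : ℕ) = 0 := hx
      have hy : y < x := h'
      omega
  refine ⟨fun j => (ofLex (e j)).1, fun j => decide (((ofLex (e j)).2 : ℕ) = 0), ?_, ?_, ?_, ?_⟩
  · intro i j hij
    have := e.monotone hij
    rw [Sigma.Lex.le_def] at this
    rcases this with h | ⟨h, -⟩
    · exact h.le
    · exact h.le
  · intro i hi j hj
    exact hfirst _ _ (e.strictMono hj) (by simpa using hi)
  · intro l
    rw [hcount fun x => x.1 = l ∧ decide ((x.2 : ℕ) = 0) = true,
      Finset.sum_eq_single l (fun l' _ h => by simp [h]) (by simp), Fin.sum_univ_succ]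
    simp
  · intro l
    rw [hcount fun x => x.1 = l ∧ decide ((x.2 : ℕ) = 0) = false,
      Finset.sum_eq_single l (fun l' _ h => by simp [h]) (by simp), Fin.sum_univ_succ]
    simp

/-- Over a field of characteristic zero or of prime characteristic
`p > 2⌈⌊m/2⌋/n²⌉`, the ring of `n × n` matrices over the Grassmann algebra of rank `m`
does not satisfy the Capelli identity of `x`-degree `k = n² + 2⌊m/2⌋`. -/
theorem grassmann_matrix_no_capelli_identity
    (R : Type*) [Field R] (m n : ℕ) (hn : 1 ≤ n)
    (hchar : CharZero R ∨
      ∃ p : ℕ, p.Prime ∧ CharP R p ∧ 2 * ((m / 2 + n ^ 2 - 1) / n ^ 2) < p)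
    (k : ℕ) (hk : k = n ^ 2 + 2 * (m / 2)) :
    ∃ (C : Fin k → Matrix (Fin n) (Fin n) (ExteriorAlgebra R (Fin m → R)))
      (B : Fin (k + 1) → Matrix (Fin n) (Fin n) (ExteriorAlgebra R (Fin m → R))),
      ∑ π : Equiv.Perm (Fin k),
        (Equiv.Perm.sign π : ℤ) •
          (B 0 * (List.ofFn fun i : Fin k => C (π i) * B i.succ).prod) ≠ 0 := by
  have hN : 0 < n ^ 2 := by positivity
  set T := (m / 2 + n ^ 2 - 1) / n ^ 2 with hT
  have hq : m / 2 ≤ n * n * T := by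
    have := Nat.div_add_mod (m / 2 + n ^ 2 - 1) (n ^ 2)
    rw [← hT] at this
    have := Nat.mod_lt (m / 2 + n ^ 2 - 1) hN
    rw [← pow_two]
    omega
  obtain ⟨t, htT, hts⟩ := exists_sum_eq_of_le_mul hq
  obtain ⟨lab, one, hlab, hone, hc1, hc2⟩ :=
    exists_block_structure t (k := k) (by rw [hts, hk, pow_two])
  have hcard : Fintype.card {i // one i = false} ≤ Fintype.card (Fin m) := by
    have h : Fintype.card {i // one i = false}
        = ∑ l, indexCount fun j => lab j = l ∧ one j = false := by
      simp only [indexCount]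
      rw [Finset.sum_comm, Fintype.card_subtype, Finset.card_filter]
      refine Finset.sum_congr rfl fun j _ => ?_
      simp [ite_and]
    rw [h, Finset.sum_congr rfl fun l _ => hc2 l, ← Finset.mul_sum, hts, Fintype.card_fin]
    omega
  obtain ⟨σ⟩ := Function.Embedding.nonempty_of_card_le hcard
  let w : Fin k → Fin m → R := fun i =>
    if h : one i = false then Pi.single (σ ⟨i, h⟩) 1 else 0
  have hw : LinearIndependent R fun i : {i // one i = false} => w i := by
    convert (Pi.basisFun R (Fin m)).linearIndependent.comp σ σ.injective using 1
    ext i : 1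
    simp [w, i.2]
  have hD : ((blocksCoeff lab one : ℤ) : R) ≠ 0 := by
    simp only [blocksCoeff, hc1, hc2, blockCoeff, even_two_mul, if_true]
    rw [Int.cast_prod, Finset.prod_ne_zero_iff]
    intro l _
    rw [Int.cast_natCast]
    rcases hchar with h0 | ⟨p, hp, hpR, hlt⟩
    · exact Nat.cast_ne_zero.2 (Nat.factorial_ne_zero _)
    · rw [Ne, CharP.cast_eq_zero_iff R p, hp.dvd_factorial]
      have := htT l
      omega
  let i₀ : Fin n := ⟨0, hn⟩
  let a : Fin (n * n) → Fin n := fun l => (finProdFinEquiv.symm l).1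
  let b : Fin (n * n) → Fin n := fun l => (finProdFinEquiv.symm l).2
  have hab : ∀ l l', a l = a l' → b l = b l' → l = l' := fun l l' h h' =>
    finProdFinEquiv.symm.injective (Prod.ext h h')
  let γ : Fin (k + 1) → Fin n := Fin.snoc (fun i => a (lab i)) i₀
  let ρ : Fin (k + 1) → Fin n := Fin.cons i₀ fun i => b (lab i)
  refine ⟨fun i => Matrix.single (a (lab i)) (b (lab i)) (blockEntry R one w i),
    fun i => Matrix.single (ρ i) (γ i) 1, ?_⟩
  intro h
  have h' : capelliSum (fun i => Matrix.single (a (lab i)) (b (lab i)) (blockEntry R one w i))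
      (fun i => Matrix.single (ρ i) (γ i) 1) = 0 := by
    rw [capelliSum, ← h]
  rw [capelliSum_single a b hab lab one w ρ γ hone hlab (by simp [γ]) (by simp [ρ]),
    ← Int.cast_smul_eq_zsmul R] at h'
  have := congr_fun (congr_fun h' (ρ 0)) (γ (Fin.last k))
  rw [Matrix.single_apply_same, Matrix.zero_apply] at this
  exact smul_ne_zero hD (prod_ofFn_blockEntry_ne_zero one w hw) this
end

section
/- Let R be a commutative ring, m ≥ 0 and n ≥ 1. Then the ring M_n E^m satisfies the standard identity of degree 2(⌊(n²+1)/2⌋ + ⌊m/2⌋); that is, for k = 2(⌊(n²+1)/2⌋ + ⌊m/2⌋) and all A₁,…,A_k ∈ M_n E^m, Σ_{π ∈ 𝔖_k} sign(π) A_{π(1)} ⋯ A_{π(k)} = 0. -/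
namespace StandardIdentity

open Equiv Finset

section Ring

variable {S : Type*} [Ring S]

/-- The standard polynomial of degree `k`. -/
def standardPoly {k : ℕ} (A : Fin k → S) : S :=
  ∑ π : Perm (Fin k), (Perm.sign π : ℤ) • (List.ofFn fun i => A (π i)).prod

/-- The standard polynomial as an alternating map over any commutative ring of scalars. -/
noncomputable def standardAlt (Z : Type*) [CommRing Z] [Algebra Z S] (k : ℕ) :
    S [⋀^Fin k]→ₗ[Z] S :=
  MultilinearMap.alternatization (MultilinearMap.mkPiAlgebraFin Z k S)

theorem standardAlt_apply (Z : Type*) [CommRing Z] [Algebra Z S] {k : ℕ} (A : Fin k → S) :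
    standardAlt Z k A = standardPoly A := by
  simp [standardAlt, standardPoly, MultilinearMap.alternatization_apply, Units.smul_def]

theorem map_standardPoly {T : Type*} [Ring T] (f : S →+* T) {k : ℕ} (A : Fin k → S) :
    f (standardPoly A) = standardPoly fun i => f (A i) := by
  simp only [standardPoly, map_sum, map_zsmul, map_list_prod, List.map_ofFn]
  rfl

theorem standardPoly_comp_perm {k : ℕ} (A : Fin k → S) (σ : Perm (Fin k)) :
    standardPoly (fun i => A (σ i)) = (Perm.sign σ : ℤ) • standardPoly A := by
  have := (standardAlt (S := S) ℤ k).map_perm A σ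
  rw [standardAlt_apply, standardAlt_apply, Units.smul_def] at this
  exact this

/-- The standard polynomial vanishes when two arguments are central multiples of one element. -/
theorem standardPoly_eq_zero_of_central_multiples {k : ℕ} (A : Fin k → S) {i j : Fin k}
    (hij : i ≠ j) {c c' B : S} (hc : c ∈ Subring.center S) (hc' : c' ∈ Subring.center S)
    (hi : A i = c * B) (hj : A j = c' * B) : standardPoly A = 0 := by
  have hA : A = Function.update (Function.update A i ((⟨c, hc⟩ : Subring.center S) • B)) j
      ((⟨c', hc'⟩ : Subring.center S) • B) := by
    ext l
    rcases eq_or_ne l j with rfl | hl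
    · simpa [Subring.smul_def] using hj
    · rcases eq_or_ne l i with rfl | hl'
      · simpa [Subring.smul_def, hl] using hi
      · simp [hl, hl']
  rw [← standardAlt_apply (Subring.center S), hA, AlternatingMap.map_update_smul,
    Function.update_comm hij, AlternatingMap.map_update_smul,
    (standardAlt (Subring.center S) k).map_eq_zero_of_eq _ _ hij, smul_zero, smul_zero]
  simp [hij.symm]

/-- Exchange of the positions `2t` and `2t + 1`. -/
def pairPartner {h : ℕ} (j : Fin (h * 2)) : Fin (h * 2) :=
  ⟨if (j : ℕ) % 2 = 0 then j + 1 else j - 1, by have := j.2; split_ifs <;> omega⟩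

theorem pairPartner_ne {h : ℕ} (j : Fin (h * 2)) : pairPartner j ≠ j := by
  intro H
  have := congrArg Fin.val H
  simp only [pairPartner] at this
  split_ifs at this <;> omega

theorem pairPartner_pairPartner {h : ℕ} (j : Fin (h * 2)) : pairPartner (pairPartner j) = j := by
  ext
  simp only [pairPartner]
  split_ifs <;> omega

theorem prod_ofFn_swap_pairPartner {h : ℕ} (f : Fin (h * 2) → S) (j : Fin (h * 2))
    (hf : ∀ i, Commute (f j) (f i)) :
    (List.ofFn fun i => f (swap j (pairPartner j) i)).prod = (List.ofFn f).prod := by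
  rw [List.ofFn_mul, List.ofFn_mul, List.prod_flatten, List.prod_flatten, List.map_ofFn,
    List.map_ofFn]
  congr 2
  funext t
  have ht := t.2
  obtain ⟨x, hx⟩ : ∃ x : Fin (h * 2), (x : ℕ) = t * 2 := ⟨⟨t * 2, by omega⟩, rfl⟩
  obtain ⟨y, hy⟩ : ∃ y : Fin (h * 2), (y : ℕ) = t * 2 + 1 := ⟨⟨t * 2 + 1, by omega⟩, rfl⟩
  have key : f (swap j (pairPartner j) x) * f (swap j (pairPartner j) y) = f x * f y := by
    by_cases h1 : j = x
    · subst h1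
      have : pairPartner j = y := by ext; simp only [pairPartner]; split_ifs <;> omega
      rw [this, swap_apply_left, swap_apply_right, (hf y).eq]
    by_cases h2 : j = y
    · subst h2
      have : pairPartner j = x := by ext; simp only [pairPartner]; split_ifs <;> omega
      rw [this, swap_apply_left, swap_apply_right, (hf x).eq]
    have h1' : (j : ℕ) ≠ x := fun H => h1 (Fin.ext H)
    have h2' : (j : ℕ) ≠ y := fun H => h2 (Fin.ext H)
    have h3 : x ≠ pairPartner j := by
      intro H; have := congrArg Fin.val H; simp only [pairPartner] at this
      split_ifs at this <;> omega
    have h4 : y ≠ pairPartner j := by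
      intro H; have := congrArg Fin.val H; simp only [pairPartner] at this
      split_ifs at this <;> omega
    rw [swap_apply_of_ne_of_ne (Ne.symm h1) h3, swap_apply_of_ne_of_ne (Ne.symm h2) h4]
  have ex : x = ⟨t * 2, by omega⟩ := Fin.ext hx
  have ey : y = ⟨t * 2 + 1, by omega⟩ := Fin.ext hy
  rw [ex, ey] at key
  simpa [Function.comp, List.ofFn_succ] using key

/-- A standard polynomial of even degree vanishes when some argument is central. -/
theorem standardPoly_eq_zero_of_central {k : ℕ} (hk : Even k) (A : Fin k → S) {i : Fin k}
    (hi : ∀ j, Commute (A i) (A j)) : standardPoly A = 0 := by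
  obtain ⟨h, rfl⟩ : ∃ h, k = h * 2 :=
    hk.exists_two_nsmul.imp fun h e => by simpa [mul_comm] using e
  refine sum_involution (fun π _ => π * swap (π.symm i) (pairPartner (π.symm i))) ?_ ?_
    (fun _ _ => mem_univ _) ?_
  · intro π _
    have := prod_ofFn_swap_pairPartner (fun l => A (π l)) (π.symm i)
      (by simpa using fun l => hi (π l))
    simp only [Perm.mul_apply]
    rw [this, Perm.sign_mul, Perm.sign_swap (pairPartner_ne _).symm]
    simp
  · intro π _ _ H
    have := DFunLike.congr_fun H (π.symm i)
    simp only [Perm.mul_apply, swap_apply_left, π.injective.eq_iff] at this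
    exact pairPartner_ne _ this
  · intro π _
    have : (π * swap (π.symm i) (pairPartner (π.symm i))).symm i = pairPartner (π.symm i) := by
      rw [Equiv.symm_apply_eq]; simp
    simp only [this, pairPartner_pairPartner]
    rw [swap_comm (pairPartner _), mul_assoc, swap_mul_self, mul_one]

/-- A function on permutations of `k + 1` points that is invariant under cyclic rotation is
determined in sum by its values on the stabilizer of a point. -/
theorem sum_perm_eq_smul {k : ℕ} {M : Type*} [AddCommGroup M] (g : Perm (Fin (k + 1)) → M)
    (hg : ∀ σ, g (σ * finRotate (k + 1)) = g σ) :
    ∑ σ, g σ = (k + 1) • ∑ e : Perm (Fin k), g (Perm.decomposeFin.symm (0, e)) := by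
  have key : ∀ j : Fin (k + 1), ∑ σ : Perm (Fin (k + 1)), (if σ j = 0 then g σ else 0) =
      ∑ σ : Perm (Fin (k + 1)), (if σ 0 = 0 then g σ else 0) := by
    intro j
    induction j using Fin.induction with
    | zero => rfl
    | succ j ih =>
      rw [← ih, ← Equiv.sum_comp (Equiv.mulRight (finRotate (k + 1)))
        (fun σ => if σ j.castSucc = 0 then g σ else 0)]
      simp [hg]
  have h1 : ∑ σ, g σ = ∑ j : Fin (k + 1), ∑ σ : Perm (Fin (k + 1)),
      (if σ j = 0 then g σ else 0) := by
    rw [sum_comm]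
    refine sum_congr rfl fun σ _ => ?_
    rw [sum_eq_single (σ.symm 0)]
    · simp
    · intro b _ hb
      rw [if_neg]
      rintro h
      exact hb (by simp [← h])
    · simp
  rw [h1, sum_congr rfl fun j _ => key j, sum_const, card_univ, Fintype.card_fin]
  congr 1
  rw [← Equiv.sum_comp Perm.decomposeFin.symm, Fintype.sum_prod_type]
  simp only [Perm.decomposeFin_symm_apply_zero]
  rw [sum_eq_single 0]
  · simp
  · intro b _ hb; simp [hb]
  · simp

end Ring

/-- A multilinear map vanishing on a spanning set is zero. -/
theorem eq_zero_of_span_eq_top {Z M N ι : Type*} [CommRing Z] [AddCommGroup M] [AddCommGroup N]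
    [Module Z M] [Module Z N] [Finite ι] (f : MultilinearMap Z (fun _ : ι => M) N) {T : Set M}
    (hT : Submodule.span Z T = ⊤) (h : ∀ v : ι → M, (∀ i, v i ∈ T) → f v = 0) : f = 0 := by
  classical
  have := Fintype.ofFinite ι
  have key : ∀ (s : Finset ι) (v : ι → M), (∀ i ∉ s, v i ∈ T) → f v = 0 := by
    intro s
    induction s using Finset.induction_on with
    | empty => exact fun v hv => h v fun i => hv i (by simp)
    | insert a s ha ih =>
      intro v hv
      have aux : ∀ x ∈ Submodule.span Z T, f (Function.update v a x) = 0 := by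
        intro x hx
        induction hx using Submodule.span_induction with
        | mem x hx =>
          refine ih _ fun i hi => ?_
          rcases eq_or_ne i a with rfl | hia
          · simpa using hx
          · simpa [hia] using hv i (by simp [hia, hi])
        | zero => exact f.map_update_zero _ _
        | add x y _ _ hx hy => rw [f.map_update_add, hx, hy, add_zero]
        | smul c x _ hx => rw [f.map_update_smul, hx, smul_zero]
      simpa using aux (v a) (hT ▸ Submodule.mem_top)
  ext v
  exact key univ v (by simp)

section Exterior

variable {R M : Type*} [CommRing R] [AddCommGroup M] [Module R M]

theorem ι_mul_of_mem_exteriorPower (v : M) {d : ℕ} {x : ExteriorAlgebra R M} (hx : x ∈ ⋀[R]^d M) :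
    ExteriorAlgebra.ι R v * x = (-1) ^ d * (x * ExteriorAlgebra.ι R v) := by
  induction hx using Submodule.pow_induction_on_left' with
  | algebraMap r => simp [Algebra.commutes]
  | add x y i _ _ hx hy => simp only [mul_add, add_mul, hx, hy]
  | mem_mul w hw i x _ ih =>
    obtain ⟨w, rfl⟩ := hw
    rw [← mul_assoc, eq_neg_of_add_eq_zero_left (ExteriorAlgebra.ι_add_mul_swap v w), neg_mul,
      mul_assoc, ih, pow_succ, mul_neg_one, neg_mul, mul_assoc, ← mul_assoc, ← mul_assoc]
    rw [((Commute.neg_one_right (ExteriorAlgebra.ι R w)).pow_right i).eq]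
    simp only [mul_assoc]

theorem mem_center_of_mem_exteriorPower {d : ℕ} (hd : Even d) {x : ExteriorAlgebra R M}
    (hx : x ∈ ⋀[R]^d M) : x ∈ Subring.center (ExteriorAlgebra R M) := by
  rw [Subring.mem_center_iff]
  intro y
  induction y using ExteriorAlgebra.induction with
  | algebraMap r => exact Algebra.commutes r x
  | ι v => simpa [hd.neg_one_pow] using ι_mul_of_mem_exteriorPower v hx
  | mul a b ha hb => rw [mul_assoc, hb, ← mul_assoc, ha, mul_assoc]
  | add a b ha hb => rw [add_mul, mul_add, ha, hb]

theorem eq_zero_of_mem_exteriorPower {m d : ℕ} (hd : m < d) {x : ExteriorAlgebra R (Fin m → R)}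
    (hx : x ∈ ⋀[R]^d (Fin m → R)) : x = 0 := by
  have : IsEmpty (Set.powersetCard (Fin m) d) := by
    constructor
    rintro ⟨s, hs⟩
    have h1 : s.card = d := hs
    have := s.card_le_univ
    simp at this
    omega
  have h := ((Pi.basisFun R (Fin m)).exteriorPower d).ext_elem
    (x := ⟨x, hx⟩) (y := 0) (fun i => isEmptyElim i)
  exact congrArg Subtype.val h

/-- All entries of the matrix are homogeneous of degree `d`. -/
def IsHomogeneousMatrix {n : Type*} (d : ℕ) (X : Matrix n n (ExteriorAlgebra R M)) : Prop :=
  ∀ i j, X i j ∈ ⋀[R]^d M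

variable {n : Type*} [Fintype n]

theorem IsHomogeneousMatrix.mul {a b : ℕ} {X Y : Matrix n n (ExteriorAlgebra R M)}
    (hX : IsHomogeneousMatrix a X) (hY : IsHomogeneousMatrix b Y) :
    IsHomogeneousMatrix (a + b) (X * Y) := by
  intro i j
  rw [Matrix.mul_apply]
  exact Submodule.sum_mem _ fun l _ =>
    SetLike.mul_mem_graded (A := fun i : ℕ => ⋀[R]^i M) (hX i l) (hY l j)

theorem isHomogeneousMatrix_prod_ofFn [DecidableEq n] {k : ℕ} (d : Fin k → ℕ)
    (A : Fin k → Matrix n n (ExteriorAlgebra R M)) (hA : ∀ i, IsHomogeneousMatrix (d i) (A i)) :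
    IsHomogeneousMatrix (∑ i, d i) (List.ofFn A).prod := by
  induction k with
  | zero =>
    intro i j
    simp only [List.ofFn_zero, List.prod_nil, univ_eq_empty, sum_empty, Matrix.one_apply]
    split_ifs
    · exact SetLike.one_mem_graded (A := fun i : ℕ => ⋀[R]^i M)
    · exact zero_mem _
  | succ k ih =>
    rw [List.ofFn_succ, List.prod_cons, Fin.sum_univ_succ]
    exact (hA 0).mul (ih _ _ fun i => hA i.succ)

theorem IsHomogeneousMatrix.trace_mul_comm {a b : ℕ} {X Y : Matrix n n (ExteriorAlgebra R M)}
    (hX : IsHomogeneousMatrix a X) (hY : IsHomogeneousMatrix b Y) (hab : Odd (a + b)) :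
    (X * Y).trace = (Y * X).trace := by
  have comm : ∀ i j, X i j * Y j i = Y j i * X i j := by
    intro i j
    rcases Nat.even_or_odd a with ha | ha
    · exact (Subring.mem_center_iff.1 (mem_center_of_mem_exteriorPower ha (hX i j)) _).symm
    · have hb : Even b := by rw [Nat.odd_add] at hab; exact hab.1 ha
      exact Subring.mem_center_iff.1 (mem_center_of_mem_exteriorPower hb (hY j i)) _
  simp only [Matrix.trace, Matrix.diag, Matrix.mul_apply, comm]
  exact sum_comm

/-- For homogeneous matrices of odd total degree, all cyclic rotations of a word contribute equally
to the trace of a standard polynomial of odd degree. -/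
theorem trace_standardPoly_succ [DecidableEq n] {k : ℕ} (hk : Even k) (d : Fin (k + 1) → ℕ)
    (hd : Odd (∑ i, d i)) (A : Fin (k + 1) → Matrix n n (ExteriorAlgebra R M))
    (hA : ∀ i, IsHomogeneousMatrix (d i) (A i)) :
    (standardPoly A).trace = (k + 1) • (A 0 * standardPoly fun i => A i.succ).trace := by
  simp only [standardPoly, Matrix.trace_sum, Matrix.trace_smul, Finset.mul_sum, Matrix.mul_smul]
  rw [sum_perm_eq_smul]
  · congr 1
    refine sum_congr rfl fun e _ => ?_
    simp [Perm.decomposeFin.symm_sign, List.ofFn_succ]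
  · intro σ
    have hs : Perm.sign (σ * finRotate (k + 1)) = Perm.sign σ := by
      rw [Perm.sign_mul, sign_finRotate, Nat.add_sub_cancel, hk.neg_one_pow, mul_one]
    rw [hs, List.ofFn_succ', List.concat_eq_append, List.prod_append, List.prod_singleton,
      List.ofFn_succ, List.prod_cons]
    congr 1
    have h1 : ∀ i : Fin k, (σ * finRotate (k + 1)) i.castSucc = σ i.succ := by
      intro i
      rw [Perm.mul_apply, finRotate_apply, Fin.coeSucc_eq_succ]
    have h2 : (σ * finRotate (k + 1)) (Fin.last k) = σ 0 := by
      rw [Perm.mul_apply, finRotate_last]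
    simp only [h1, h2]
    have hP := isHomogeneousMatrix_prod_ofFn (fun i : Fin k => d (σ i.succ))
      (fun i => A (σ i.succ)) fun i => hA _
    refine hP.trace_mul_comm (hA (σ 0)) ?_
    rwa [add_comm, ← Fin.sum_univ_succ (fun i => d (σ i)), Equiv.sum_comp σ d]

theorem standardPoly_eq_zero_of_degree_lt [DecidableEq n] {m k : ℕ} (d : Fin k → ℕ)
    (hd : m < ∑ i, d i) (A : Fin k → Matrix n n (ExteriorAlgebra R (Fin m → R)))
    (hA : ∀ i, IsHomogeneousMatrix (d i) (A i)) : standardPoly A = 0 := by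
  refine sum_eq_zero fun π _ => ?_
  have : (List.ofFn fun i => A (π i)).prod = 0 := by
    ext i j
    refine eq_zero_of_mem_exteriorPower (d := ∑ i, d (π i)) ?_
      (isHomogeneousMatrix_prod_ofFn (fun i => d (π i)) _ (fun i => hA _) i j)
    rwa [Equiv.sum_comp π d]
  rw [this, smul_zero]

end Exterior

section Generators

variable {n : Type*} [DecidableEq n]

/-- Matrix units, with the unit at `(o, o)` replaced by the identity matrix. -/
def modifiedUnit (S : Type*) [Ring S] (o : n) (p : n × n) : Matrix n n S :=
  if p = (o, o) then 1 else Matrix.single p.1 p.2 1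

variable {R M : Type*} [CommRing R] [AddCommGroup M] [Module R M]

theorem isHomogeneousMatrix_smul_modifiedUnit (o : n) (p : n × n) {d : ℕ}
    {w : ExteriorAlgebra R M} (hw : w ∈ ⋀[R]^d M) :
    IsHomogeneousMatrix d (w • modifiedUnit (ExteriorAlgebra R M) o p) := by
  intro i j
  have : modifiedUnit (ExteriorAlgebra R M) o p i j = 0 ∨
      modifiedUnit (ExteriorAlgebra R M) o p i j = 1 := by
    simp only [modifiedUnit]
    split_ifs
    · rw [Matrix.one_apply]; split_ifs <;> simp
    · rw [Matrix.single_apply]; split_ifs <;> simp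
  rw [Matrix.smul_apply]
  rcases this with h | h <;> simp [h, hw]

variable [Fintype n]

theorem eq_zero_of_trace_modifiedUnit_mul {S : Type*} [Ring S] (o : n) (X : Matrix n n S)
    (h : ∀ p, (modifiedUnit S o p * X).trace = 0) : X = 0 := by
  have h1 : ∀ i j, (j, i) ≠ (o, o) → X i j = 0 := by
    intro i j hij
    simpa [modifiedUnit, hij, Matrix.trace_single_mul] using h (j, i)
  ext i j
  by_cases hij : (j, i) = (o, o)
  · obtain ⟨rfl, h'⟩ := Prod.mk.inj hij
    subst h'
    have := h (i, i)
    rw [modifiedUnit, if_pos rfl, one_mul, Matrix.trace, sum_eq_single i] at this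
    · exact this
    · intro b _ hb
      exact h1 b b (by simpa using hb)
    · simp
  · exact h1 i j hij

variable (R M) in
/-- Multiples of modified matrix units by homogeneous elements of the exterior algebra. -/
def homogeneousGenerators (o : n) : Set (Matrix n n (ExteriorAlgebra R M)) :=
  {X | ∃ (d : ℕ) (w : ExteriorAlgebra R M) (p : n × n), w ∈ ⋀[R]^d M ∧
    X = w • modifiedUnit _ o p}

theorem span_homogeneousGenerators (o : n) :
    Submodule.span R (homogeneousGenerators R M o) = ⊤ := by
  have hgen : ∀ (w : ExteriorAlgebra R M) (p : n × n),
      w • modifiedUnit _ o p ∈ Submodule.span R (homogeneousGenerators R M o) := by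
    intro w p
    induction w using DirectSum.Decomposition.inductionOn (fun i : ℕ => ⋀[R]^i M) with
    | zero => simp
    | homogeneous w => exact Submodule.subset_span ⟨_, w, p, w.2, rfl⟩
    | add a b ha hb => rw [add_smul]; exact add_mem ha hb
  have hs : ∀ (w : ExteriorAlgebra R M) (i j : n), (i, j) ≠ (o, o) →
      Matrix.single i j w ∈ Submodule.span R (homogeneousGenerators R M o) := by
    intro w i j hij
    simpa [modifiedUnit, hij] using hgen w (i, j)
  have ho : ∀ w : ExteriorAlgebra R M,
      Matrix.single o o w ∈ Submodule.span R (homogeneousGenerators R M o) := by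
    intro w
    have e : Matrix.single o o w = w • modifiedUnit _ o (o, o) -
        ∑ i ∈ univ.erase o, Matrix.single i i w := by
      rw [eq_sub_iff_add_eq, add_sum_erase _ (fun i => Matrix.single i i w) (mem_univ o)]
      simp only [modifiedUnit, if_true]
      ext a b
      rw [Matrix.sum_apply]
      by_cases hab : a = b
      · subst hab; simp [Matrix.single_apply]
      · rw [sum_eq_zero]
        · simp [hab]
        · intro i _
          exact Matrix.single_apply_of_ne _ _ _ _ _ (by rintro ⟨rfl, rfl⟩; exact hab rfl)
    rw [e]
    exact sub_mem (hgen _ _) (sum_mem fun i hi => hs _ _ _ (by simpa using ne_of_mem_erase hi))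
  rw [eq_top_iff]
  intro X _
  rw [Matrix.matrix_eq_sum_single X]
  refine sum_mem fun i _ => sum_mem fun j _ => ?_
  by_cases hij : (i, j) = (o, o)
  · obtain ⟨rfl, rfl⟩ := Prod.mk.inj hij
    exact ho _
  · exact hs _ _ _ hij

theorem smul_one_mem_center {S : Type*} [Ring S] {w : S} (hw : w ∈ Subring.center S) :
    w • (1 : Matrix n n S) ∈ Subring.center (Matrix n n S) := by
  rw [Subring.mem_center_iff]
  intro Y
  ext i j
  rw [Matrix.smul_one_eq_diagonal, Matrix.mul_diagonal, Matrix.diagonal_mul]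
  exact Subring.mem_center_iff.1 hw _

end Generators

/-- The standard identity for homogeneous generators over the integers. Unless `n` is even and `m`
is odd, there are enough arguments of even degree for two of them to be proportional or for one of
them to be central; in the remaining case the same holds after pairing with one more matrix under
the trace. -/
theorem standardPoly_eq_zero_of_mem_homogeneousGenerators {m n k : ℕ} (o : Fin n)
    (hk : k = 2 * ((n ^ 2 + 1) / 2 + m / 2))
    (A : Fin k → Matrix (Fin n) (Fin n) (ExteriorAlgebra ℤ (Fin m → ℤ)))
    (hA : ∀ i, A i ∈ homogeneousGenerators ℤ (Fin m → ℤ) o) : standardPoly A = 0 := by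
  have hkeven : Even k := hk ▸ even_two_mul _
  have hn : 1 ≤ n := o.pos
  choose d w p hw hAw using hA
  have hhom : ∀ i, IsHomogeneousMatrix (d i) (A i) := fun i => by
    rw [hAw]; exact isHomogeneousMatrix_smul_modifiedUnit o _ (hw i)
  have hcenter : ∀ i, Even (d i) → w i • 1 ∈
      Subring.center (Matrix (Fin n) (Fin n) (ExteriorAlgebra ℤ (Fin m → ℤ))) :=
    fun i hi => smul_one_mem_center (mem_center_of_mem_exteriorPower hi (hw i))
  have hAc : ∀ i, A i = (w i • 1) * modifiedUnit _ o (p i) := fun i => by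
    rw [hAw, smul_mul_assoc, one_mul]
  by_contra hne
  have hdeg : ∑ i, d i ≤ m := by
    by_contra! h
    exact hne (standardPoly_eq_zero_of_degree_lt d h A hhom)
  have hinj : Set.InjOn p (univ.filter fun i => Even (d i) : Finset (Fin k)) := by
    intro i hi j hj hij
    simp only [coe_filter, mem_univ, true_and, Set.mem_ofPred_eq] at hi hj
    by_contra hne'
    exact hne (standardPoly_eq_zero_of_central_multiples A hne' (hcenter i hi) (hcenter j hj)
      (hAc i) (hij ▸ hAc j))
  have himage : (univ.filter fun i => Even (d i)).image p ⊆ univ.erase (o, o) := by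
    intro q hq
    obtain ⟨i, hi, rfl⟩ := mem_image.1 hq
    refine mem_erase.2 ⟨fun h => hne ?_, mem_univ _⟩
    refine standardPoly_eq_zero_of_central hkeven A (i := i) fun j => ?_
    rw [hAc i, h, modifiedUnit, if_pos rfl, mul_one]
    exact (Subring.mem_center_iff.1 (hcenter i (mem_filter.1 hi).2) _).symm
  have hcardE : (univ.erase (o, o)).card = n ^ 2 - 1 := by
    rw [card_erase_of_mem (mem_univ _), card_univ, Fintype.card_prod, Fintype.card_fin, sq]
  have hle : (univ.filter fun i => Even (d i)).card ≤ n ^ 2 - 1 := by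
    rw [← card_image_of_injOn hinj, ← hcardE]
    exact card_le_card himage
  have hodd : (univ.filter fun i => ¬ Even (d i)).card ≤ ∑ i, d i := by
    rw [card_eq_sum_ones]
    calc ∑ i with ¬ Even (d i), 1 ≤ ∑ i with ¬ Even (d i), d i :=
          sum_le_sum fun i hi => (Nat.not_even_iff_odd.1 (mem_filter.1 hi).2).pos
      _ ≤ ∑ i, d i := sum_le_sum_of_subset (filter_subset _ _)
  have hcard : (univ.filter fun i => Even (d i)).card +
      (univ.filter fun i => ¬ Even (d i)).card = k := by
    rw [card_filter_add_card_filter_not, card_univ, Fintype.card_fin]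
  have hn2 : 1 ≤ n ^ 2 := Nat.one_le_pow _ _ hn
  have hsum : Odd (∑ i, d i) := by rw [Nat.odd_iff]; omega
  have hI : (univ.filter fun i => Even (d i)).image p = univ.erase (o, o) := by
    refine eq_of_subset_of_card_le himage ?_
    rw [card_image_of_injOn hinj, hcardE]
    omega
  have htorsion : ∀ x : ExteriorAlgebra ℤ (Fin m → ℤ), (k + 1) • x = 0 → x = 0 := by
    intro x hx
    apply (Pi.basisFun ℤ (Fin m)).ExteriorAlgebra.ext_elem
    intro s
    have := congrArg (fun y => (Pi.basisFun ℤ (Fin m)).ExteriorAlgebra.repr y s) hx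
    simp only [map_nsmul, map_zero, Finsupp.smul_apply, Finsupp.zero_apply] at this ⊢
    exact (smul_eq_zero.1 this).resolve_left (Nat.succ_ne_zero k)
  refine hne (eq_zero_of_trace_modifiedUnit_mul o _ fun q => htorsion _ ?_)
  let B : Fin (k + 1) → Matrix (Fin n) (Fin n) (ExteriorAlgebra ℤ (Fin m → ℤ)) :=
    Fin.cons (modifiedUnit _ o q) A
  let dB : Fin (k + 1) → ℕ := Fin.cons 0 d
  have hq : IsHomogeneousMatrix 0 (modifiedUnit (ExteriorAlgebra ℤ (Fin m → ℤ)) o q) := by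
    simpa using isHomogeneousMatrix_smul_modifiedUnit o q
      (SetLike.one_mem_graded (A := fun i : ℕ => ⋀[ℤ]^i (Fin m → ℤ)))
  have hB : ∀ i, IsHomogeneousMatrix (dB i) (B i) := fun i => by
    refine Fin.cases ?_ (fun i => ?_) i
    · exact hq
    · exact hhom i
  have hdB : Odd (∑ i, dB i) := by
    rw [Fin.sum_univ_succ]; simpa [dB] using hsum
  have htr : (standardPoly B).trace = (k + 1) • (modifiedUnit _ o q * standardPoly A).trace :=
    trace_standardPoly_succ hkeven dB hdB B hB
  rw [← htr]
  by_cases hqo : q = (o, o)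
  · have hB0 : B 0 = 1 := by simp [B, hqo, modifiedUnit]
    obtain ⟨l, rfl⟩ : ∃ l, k = l + 1 := ⟨k - 1, by omega⟩
    have hperm := standardPoly_comp_perm B (swap 0 1)
    rw [Perm.sign_swap (by simp)] at hperm
    have h0 := trace_standardPoly_succ hkeven (fun i => dB (swap 0 1 i))
      (by rwa [Equiv.sum_comp (swap 0 1) dB]) (fun i => B (swap 0 1 i)) fun i => hB _
    rw [standardPoly_eq_zero_of_central hkeven (fun i : Fin (l + 1) => B (swap 0 1 i.succ))
      (i := 0) (fun j => by simp [hB0]), mul_zero, Matrix.trace_zero, smul_zero, hperm] at h0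
    simpa using h0
  · obtain ⟨i, hi, hpi⟩ := mem_image.1 (hI ▸ mem_erase.2 ⟨hqo, mem_univ q⟩)
    rw [standardPoly_eq_zero_of_central_multiples B (i := 0) (j := i.succ) (Fin.succ_ne_zero i).symm
      (c := 1) (B := modifiedUnit _ o q) (one_mem _) (hcenter i (mem_filter.1 hi).2)
      (by simp [B]) (by simpa [B, hpi] using hAc i), Matrix.trace_zero]

section BaseChange

variable (R : Type*) [CommRing R] (m : ℕ)

/-- The canonical ring homomorphism from the integral Grassmann algebra of rank `m`. -/
noncomputable def grassmannBaseChange :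
    ExteriorAlgebra ℤ (Fin m → ℤ) →ₐ[ℤ] ExteriorAlgebra R (Fin m → R) :=
  ExteriorAlgebra.lift ℤ ⟨((ExteriorAlgebra.ι R).toAddMonoidHom.comp
    ((Int.castAddHom R).compLeft (Fin m))).toIntLinearMap,
    fun v => ExteriorAlgebra.ι_sq_zero (R := R) fun i => (v i : R)⟩

theorem span_range_grassmannBaseChange :
    Submodule.span R (Set.range (grassmannBaseChange R m)) = ⊤ := by
  have hι : ∀ v : Fin m → ℤ, grassmannBaseChange R m (ExteriorAlgebra.ι ℤ v) =
      ExteriorAlgebra.ι R fun i => (v i : R) := fun v =>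
    ExteriorAlgebra.lift_ι_apply ℤ _ _ v
  rw [eq_top_iff]
  intro x _
  induction x using ExteriorAlgebra.induction with
  | algebraMap r =>
    rw [Algebra.algebraMap_eq_smul_one]
    exact Submodule.smul_mem _ _ (Submodule.subset_span ⟨1, map_one _⟩)
  | ι v =>
    rw [pi_eq_sum_univ v, map_sum]
    refine sum_mem fun i _ => ?_
    rw [map_smul]
    refine Submodule.smul_mem _ _ (Submodule.subset_span
      ⟨ExteriorAlgebra.ι ℤ fun j => if i = j then 1 else 0, ?_⟩)
    rw [hι]
    congr 1
    funext j
    split_ifs <;> simp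
  | mul a b ha hb =>
    have h := Submodule.mul_mem_mul (ha trivial) (hb trivial)
    rw [Submodule.span_mul_span] at h
    refine Submodule.span_mono ?_ h
    rintro _ ⟨_, ⟨x, rfl⟩, _, ⟨y, rfl⟩, rfl⟩
    exact ⟨x * y, map_mul _ _ _⟩
  | add a b ha hb => exact add_mem (ha trivial) (hb trivial)

theorem span_range_mapMatrix_grassmannBaseChange (n : ℕ) :
    Submodule.span R (Set.range ((grassmannBaseChange R m).toRingHom.mapMatrix (m := Fin n))) =
      ⊤ := by
  rw [eq_top_iff]
  intro X _
  rw [Matrix.matrix_eq_sum_single X]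
  refine sum_mem fun i _ => sum_mem fun j _ => ?_
  have h : X i j ∈ Submodule.span R (Set.range (grassmannBaseChange R m)) :=
    span_range_grassmannBaseChange R m ▸ Submodule.mem_top
  generalize X i j = x at h
  induction h using Submodule.span_induction with
  | mem x hx =>
    obtain ⟨y, rfl⟩ := hx
    refine Submodule.subset_span ⟨Matrix.single i j y, ?_⟩
    simp [Matrix.map_single]
  | zero => simp
  | add x y _ _ hx hy => rw [Matrix.single_add]; exact add_mem hx hy
  | smul c x _ hx => rw [← Matrix.smul_single]; exact Submodule.smul_mem _ _ hx

end BaseChange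

end StandardIdentity

open StandardIdentity

/-- The ring of `n × n` matrices over the Grassmann algebra of rank `m` satisfies the
standard identity of degree `2(⌊(n²+1)/2⌋ + ⌊m/2⌋)`. -/
theorem grassmann_matrix_standard_identity_capelli_bound
    (R : Type*) [CommRing R] (m n : ℕ) (hn : 1 ≤ n)
    (k : ℕ) (hk : k = 2 * ((n ^ 2 + 1) / 2 + m / 2))
    (A : Fin k → Matrix (Fin n) (Fin n) (ExteriorAlgebra R (Fin m → R))) :
    ∑ π : Equiv.Perm (Fin k),
      (Equiv.Perm.sign π : ℤ) • (List.ofFn fun i => A (π i)).prod = 0 := by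
  have integral_case : ∀ B : Fin k → Matrix (Fin n) (Fin n) (ExteriorAlgebra ℤ (Fin m → ℤ)),
      standardPoly B = 0 := by
    intro B
    have h := eq_zero_of_span_eq_top (standardAlt ℤ k).toMultilinearMap
      (span_homogeneousGenerators (R := ℤ) (M := Fin m → ℤ) (⟨0, hn⟩ : Fin n)) fun v hv =>
        (standardAlt_apply ℤ v).trans
          (standardPoly_eq_zero_of_mem_homogeneousGenerators ⟨0, hn⟩ hk v hv)
    rw [← standardAlt_apply ℤ]
    exact DFunLike.congr_fun h B
  have h := eq_zero_of_span_eq_top (standardAlt R k).toMultilinearMap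
    (span_range_mapMatrix_grassmannBaseChange R m n) fun v hv => by
      choose B hB using hv
      obtain rfl : (fun i => (grassmannBaseChange R m).toRingHom.mapMatrix (B i)) = v := funext hB
      refine (standardAlt_apply R _).trans ?_
      rw [← map_standardPoly, integral_case, map_zero]
  exact (standardAlt_apply R A).symm.trans (DFunLike.congr_fun h A)
end

section
/- Let R be a commutative ring, m ≥ 0 and n ≥ 1. Then the ring M_n E^m satisfies the standard identity of degree k = 2n(⌊m/2⌋+1); that is, for all A₁,…,A_k ∈ M_n E^m, Σ_{π ∈ 𝔖_k} sign(π) A_{π(1)} ⋯ A_{π(k)} = 0. -/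
open Polynomial in
theorem Matrix.derivative_det_eq_sum_updateCol {n S : Type*} [Fintype n] [DecidableEq n]
    [CommRing S] (M : Matrix n n S[X]) :
    derivative M.det = ∑ i, (M.updateCol i fun j => derivative (M j i)).det := by
  simp only [Matrix.det_apply, map_sum, Units.smul_def, map_zsmul, derivative_prod_finset]
  rw [Finset.sum_comm]
  refine Finset.sum_congr rfl fun σ _ => ?_
  rw [← Finset.smul_sum]
  congr 1
  refine Finset.sum_congr rfl fun i _ => ?_
  rw [← Finset.prod_erase_mul _ _ (Finset.mem_univ i), Matrix.updateCol_self]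
  congr 1
  refine Finset.prod_congr rfl fun j hj => ?_
  rw [Matrix.updateCol_ne (Finset.ne_of_mem_erase hj)]

open Polynomial in
theorem Matrix.derivative_charpoly_eq_trace_adjugate {n S : Type*} [Fintype n] [DecidableEq n]
    [CommRing S] (N : Matrix n n S) :
    derivative N.charpoly = N.charmatrix.adjugate.trace := by
  rw [Matrix.charpoly, Matrix.derivative_det_eq_sum_updateCol, Matrix.trace]
  refine Finset.sum_congr rfl fun i _ => ?_
  rw [Matrix.diag_apply, ← Matrix.transpose_apply N.charmatrix.adjugate i i,
    Matrix.adjugate_transpose, Matrix.adjugate_def, Matrix.of_apply, Matrix.transpose_transpose,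
    Matrix.cramer_apply]
  congr 2
  ext1 j
  rw [Matrix.charmatrix_apply, Matrix.diagonal_apply, Pi.single_apply]
  split_ifs <;> simp

open Polynomial in
/-- Over a `ℚ`-algebra, a matrix all of whose positive powers have trace zero is nilpotent. -/
theorem Matrix.pow_card_eq_zero_of_trace_pow_eq_zero {n S : Type*} [Fintype n] [DecidableEq n]
    [CommRing S] [Algebra ℚ S] (N : Matrix n n S) (h : ∀ j : ℕ, (N ^ (j + 1)).trace = 0) :
    N ^ Fintype.card n = 0 := by
  cases subsingleton_or_nontrivial S
  · exact Subsingleton.elim _ _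
  set p := N.charpoly with hp
  set B := matPolyEquiv N.charmatrix.adjugate with hB
  have key : (X - C N) * B = p.map (algebraMap S (Matrix n n S)) := by
    rw [hB, ← Matrix.matPolyEquiv_charmatrix, ← map_mul, Matrix.mul_adjugate,
      ← matPolyEquiv_smul_one]
    rfl
  have hsucc (i : ℕ) : B.coeff i = N * B.coeff (i + 1) + algebraMap S _ (p.coeff (i + 1)) := by
    have := congrArg (fun q => q.coeff (i + 1)) key
    simp only [sub_mul, coeff_sub, coeff_X_mul, coeff_C_mul, coeff_map] at this
    rw [← this]; abel
  have hzero : N * B.coeff 0 + algebraMap S _ (p.coeff 0) = 0 := by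
    have := congrArg (fun q => q.coeff 0) key
    simp only [sub_mul, coeff_sub, coeff_C_mul, coeff_map, coeff_X_mul_zero] at this
    rw [← this]; abel
  have htr (c : S) (M : Matrix n n S) : (M * algebraMap S _ c).trace = c * M.trace := by
    rw [← Algebra.commutes, ← Algebra.smul_def, Matrix.trace_smul, smul_eq_mul]
  have htr1 (c : S) : (algebraMap S (Matrix n n S) c).trace = c * Fintype.card n := by
    rw [← one_mul (algebraMap S (Matrix n n S) c), htr, Matrix.trace_one]
  have hstep (i l : ℕ) : (N ^ (l + 1) * B.coeff i).trace =
      (N ^ (l + 2) * B.coeff (i + 1)).trace := by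
    rw [hsucc i, mul_add, Matrix.trace_add, htr, h, mul_zero, add_zero, ← mul_assoc, ← pow_succ]
  have hsteps (i l d : ℕ) : (N ^ (l + 1) * B.coeff i).trace =
      (N ^ (l + d + 1) * B.coeff (i + d)).trace := by
    induction d with
    | zero => rfl
    | succ d ih => rw [ih, hstep]; rfl
  have hvan (i : ℕ) : (N * B.coeff i).trace = 0 := by
    have := hsteps i 0 (B.natDegree + 1)
    rw [coeff_eq_zero_of_natDegree_lt (show B.natDegree < i + (B.natDegree + 1) by omega)] at this
    rwa [mul_zero, Matrix.trace_zero, zero_add, pow_one] at this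
  have hder (i : ℕ) : (B.coeff i).trace = p.coeff (i + 1) * (i + 1) := by
    rw [← coeff_derivative, hp, Matrix.derivative_charpoly_eq_trace_adjugate, Matrix.trace,
      Matrix.trace, finsetSum_coeff]
    refine Finset.sum_congr rfl fun a _ => ?_
    rw [Matrix.diag_apply, hB, matPolyEquiv_coeff_apply, Matrix.diag_apply]
  have hcancel (q : ℚ) (c : S) (hq : q ≠ 0) (hc : q • c = 0) : c = 0 :=
    (smul_eq_zero_iff_right hq).mp hc
  have hcoeff (i : ℕ) (hi : i ≠ Fintype.card n) : p.coeff i = 0 := by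
    cases i with
    | zero =>
      have := congrArg Matrix.trace hzero
      rw [Matrix.trace_add, hvan, zero_add, htr1, Matrix.trace_zero] at this
      refine hcancel (Fintype.card n) _ (by exact_mod_cast hi.symm) ?_
      rw [Algebra.smul_def, map_natCast, mul_comm, this]
    | succ i =>
      have := congrArg Matrix.trace (hsucc i)
      rw [Matrix.trace_add, hvan, zero_add, htr1, hder] at this
      refine hcancel ((i + 1 : ℕ) - Fintype.card n) _ (sub_ne_zero.mpr (by exact_mod_cast hi)) ?_
      rw [Algebra.smul_def, map_sub, map_natCast, map_natCast, mul_comm, mul_sub]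
      push_cast
      rw [this, sub_self]
  have hpX : p = X ^ Fintype.card n := by
    ext i
    rw [coeff_X_pow]
    split_ifs with hi
    · rw [hi, ← Matrix.charpoly_natDegree_eq_dim N]
      exact (Matrix.charpoly_monic N).coeff_natDegree
    · exact hcoeff i hi
  have := Matrix.aeval_self_charpoly N
  rwa [← hp, hpX, map_pow, aeval_X] at this

namespace ExteriorAlgebra

theorem ι_mul_ι_comm_neg {R M : Type*} [CommRing R] [AddCommGroup M] [Module R M] (x y : M) :
    ι R x * ι R y = -(ι R y * ι R x) :=
  eq_neg_of_add_eq_zero_left (ι_add_mul_swap x y)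

theorem ι_mul_ι_mem_center {R M : Type*} [CommRing R] [AddCommGroup M] [Module R M] (x y : M) :
    ι R x * ι R y ∈ Subalgebra.center R (ExteriorAlgebra R M) := by
  rw [Subalgebra.mem_center_iff]
  intro b
  induction b using ExteriorAlgebra.induction with
  | algebraMap r => exact Algebra.commutes _ _
  | ι z =>
    rw [← mul_assoc, ι_mul_ι_comm_neg z x, neg_mul, mul_assoc, ι_mul_ι_comm_neg z y, mul_neg,
      neg_neg, mul_assoc]
  | mul a b ha hb => rw [mul_assoc, hb, ← mul_assoc, ha, mul_assoc]
  | add a b ha hb => rw [add_mul, mul_add, ha, hb]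

/-- A square matrix of vectors has vanishing `2n`-th power over a rational exterior algebra. -/
theorem pow_two_mul_card_eq_zero {n M : Type*} [Fintype n] [DecidableEq n] [AddCommGroup M]
    [Module ℚ M] (x : Matrix n n M) : (x.map (ι ℚ)) ^ (2 * Fintype.card n) = 0 := by
  set X := x.map (ι ℚ) with hX
  let f := (Subalgebra.center ℚ (ExteriorAlgebra ℚ M)).val.toRingHom
  obtain ⟨N, hN⟩ : ∃ N, f.mapMatrix N = X ^ 2 := by
    refine ⟨Matrix.of fun a b => ∑ c, ⟨ι ℚ (x a c) * ι ℚ (x c b), ι_mul_ι_mem_center _ _⟩, ?_⟩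
    ext a b
    simp [f, sq, X, Matrix.mul_apply]
  have hf : Function.Injective f := Subtype.val_injective
  have htrace (j : ℕ) : (N ^ (j + 1)).trace = 0 := by
    apply hf
    have hpow : f.mapMatrix (N ^ j) = (X ^ 2) ^ j := by rw [map_pow, hN]
    have hanti : (X * (X * f.mapMatrix (N ^ j))).trace =
        -((X * f.mapMatrix (N ^ j)) * X).trace := by
      simp only [Matrix.trace, Matrix.diag_apply, Matrix.mul_apply (M := X * _)]
      simp only [Matrix.mul_apply (M := X) (N := X * _)]
      rw [Finset.sum_comm, ← Finset.sum_neg_distrib]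
      refine Finset.sum_congr rfl fun a _ => ?_
      rw [← Finset.sum_neg_distrib]
      refine Finset.sum_congr rfl fun b _ => ?_
      rw [Matrix.mul_apply, Finset.mul_sum, Finset.sum_mul, ← Finset.sum_neg_distrib]
      refine Finset.sum_congr rfl fun c _ => ?_
      have hc : ∀ z, z * f.mapMatrix (N ^ j) c b = f.mapMatrix (N ^ j) c b * z :=
        Subalgebra.mem_center_iff.mp ((N ^ j) c b).2
      rw [← mul_assoc, hX, Matrix.map_apply, Matrix.map_apply, ι_mul_ι_comm_neg, neg_mul,
        mul_assoc, hc, mul_assoc]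
    have hcomm : (X * f.mapMatrix (N ^ j)) * X = X * (X * f.mapMatrix (N ^ j)) := by
      rw [hpow, ← pow_mul, ← pow_succ', ← pow_succ, ← pow_succ']
    rw [hcomm] at hanti
    have hself : (X * (X * f.mapMatrix (N ^ j))).trace = 0 := by
      have h2 : (2 : ℚ) • (X * (X * f.mapMatrix (N ^ j))).trace = 0 := by
        rw [two_smul]; nth_rewrite 1 [hanti]; exact neg_add_cancel _
      exact (smul_eq_zero_iff_right two_ne_zero).mp h2
    rw [map_zero, ← hself, hpow, ← mul_assoc, ← sq, ← pow_succ', ← hN, ← map_pow]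
    exact AddMonoidHom.map_trace f.toAddMonoidHom _
  rw [pow_mul, ← hN, ← map_pow, Matrix.pow_card_eq_zero_of_trace_pow_eq_zero N htrace, map_zero]

end ExteriorAlgebra

/-- The standard polynomial of degree `k` on an `R`-algebra, as an alternating map. -/
def standardPolynomial (R S : Type*) [CommRing R] [Ring S] [Algebra R S] (k : ℕ) :
    S [⋀^Fin k]→ₗ[R] S :=
  MultilinearMap.alternatization (MultilinearMap.mkPiAlgebraFin R k S)

theorem standardPolynomial_apply (R : Type*) {S : Type*} [CommRing R] [Ring S] [Algebra R S]
    {k : ℕ} (a : Fin k → S) :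
    standardPolynomial R S k a =
      ∑ σ : Equiv.Perm (Fin k), (Equiv.Perm.sign σ : ℤ) • (List.ofFn fun i => a (σ i)).prod := by
  rw [standardPolynomial, MultilinearMap.alternatization_apply]
  rfl

theorem map_standardPolynomial (R R' : Type*) {S S' : Type*} [CommRing R] [Ring S] [Algebra R S]
    [CommRing R'] [Ring S'] [Algebra R' S'] {k : ℕ} (f : S →+* S') (a : Fin k → S) :
    f (standardPolynomial R S k a) = standardPolynomial R' S' k (fun i => f (a i)) := by
  simp only [standardPolynomial_apply, map_sum, map_zsmul, map_list_prod, List.map_ofFn]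
  rfl

theorem Matrix.det_of_single {k : ℕ} (f : Fin k → Fin k) :
    (Matrix.of fun i => (Pi.single (f i) 1 : Fin k → ℚ)).det =
      ∑ σ : Equiv.Perm (Fin k), if ⇑σ = f then ((Equiv.Perm.sign σ : ℤ) : ℚ) else 0 := by
  rw [← Matrix.det_transpose, Matrix.det_apply']
  refine Finset.sum_congr rfl fun σ _ => ?_
  split_ifs with h
  · subst h
    simp
  · obtain ⟨i, hi⟩ := Function.ne_iff.mp h
    rw [Finset.prod_eq_zero (Finset.mem_univ i), mul_zero]
    simp [hi]

/-- The Amitsur–Levitzki theorem over `ℚ`. -/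
theorem standardPolynomial_matrix_rat {n : Type*} [Fintype n] [DecidableEq n] {k : ℕ}
    (hk : k = 2 * Fintype.card n) (A : Fin k → Matrix n n ℚ) :
    standardPolynomial ℚ _ _ A = 0 := by
  let e : Fin k → Fin k → ℚ := fun i => Pi.single i 1
  let φ : ExteriorAlgebra ℚ (Fin k → ℚ) →ₗ[ℚ] ℚ :=
    ExteriorAlgebra.liftAlternating (Pi.single k Matrix.detRowAlternating)
  have hφ (f : Fin k → Fin k) : φ (ExteriorAlgebra.ιMulti ℚ k (e ∘ f)) =
      (Matrix.of fun i => (Pi.single (f i) 1 : Fin k → ℚ)).det := by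
    rw [ExteriorAlgebra.liftAlternating_apply_ιMulti, Pi.single_eq_same]
    rfl
  let Y : Fin k → Matrix n n (ExteriorAlgebra ℚ (Fin k → ℚ)) := fun i =>
    (A i).map fun q => q • ExteriorAlgebra.ι ℚ (e i)
  have hprod (l : ℕ) (f : Fin l → Fin k) : (List.ofFn fun i => Y (f i)).prod =
      ((List.ofFn fun i => A (f i)).prod).map
        fun q => q • ExteriorAlgebra.ιMulti ℚ l (e ∘ f) := by
    induction l with
    | zero =>
      ext a b
      simp [Matrix.one_apply, apply_ite, ite_smul]
    | succ l ih =>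
      rw [List.ofFn_succ, List.prod_cons, ih (fun i => f i.succ), List.ofFn_succ, List.prod_cons]
      ext a b
      simp only [Y, Matrix.mul_apply, Matrix.map_apply, ExteriorAlgebra.ιMulti_succ_apply,
        Finset.sum_smul, smul_mul_smul_comm]
      rfl
  have hsum : ∑ i, Y i = (Matrix.of fun a b i => A i a b).map (ExteriorAlgebra.ι ℚ) := by
    ext a b
    simp only [Y, Matrix.sum_apply, Matrix.map_apply, Matrix.of_apply, ← map_smul, ← map_sum]
    congr 1
    ext j
    simp [e, Finset.sum_apply, Pi.single_apply]
  have hzero : ∑ f : Fin k → Fin k, (List.ofFn fun i => Y (f i)).prod = 0 := by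
    have h := MultilinearMap.map_sum (MultilinearMap.mkPiAlgebraFin ℚ k
      (Matrix n n (ExteriorAlgebra ℚ (Fin k → ℚ)))) (fun _ j => Y j)
    have hpow := ExteriorAlgebra.pow_two_mul_card_eq_zero (Matrix.of fun a b i => A i a b)
    rw [← hk] at hpow
    rw [MultilinearMap.mkPiAlgebraFin_apply_const, hsum, hpow] at h
    exact h.symm
  ext a b
  have h := congrArg (fun M => φ (M a b)) hzero
  simp only [hprod, Matrix.sum_apply, Matrix.map_apply, map_sum, map_smul, hφ, Matrix.det_of_single,
    Finset.smul_sum, smul_ite, smul_zero, Matrix.zero_apply, map_zero] at h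
  rw [Finset.sum_comm] at h
  simp only [Finset.sum_ite_eq, Finset.mem_univ, if_true] at h
  rw [standardPolynomial_apply, Matrix.zero_apply, ← h, Matrix.sum_apply]
  refine Finset.sum_congr rfl fun σ _ => ?_
  rw [Matrix.smul_apply, zsmul_eq_mul, smul_eq_mul, mul_comm]

/-- The Amitsur–Levitzki theorem. -/
theorem standardPolynomial_matrix_eq_zero {n S : Type*} [Fintype n] [DecidableEq n] [CommRing S]
    (A : Fin (2 * Fintype.card n) → Matrix n n S) : standardPolynomial S _ _ A = 0 := by
  have hℤ (B : Fin (2 * Fintype.card n) → Matrix n n ℤ) : standardPolynomial ℤ _ _ B = 0 := by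
    have hinj : Function.Injective ((Int.castRingHom ℚ).mapMatrix (m := n)) :=
      Matrix.map_injective Int.cast_injective
    apply hinj
    rw [map_standardPolynomial ℤ ℚ, standardPolynomial_matrix_rat rfl, map_zero]
  suffices h : standardPolynomial S (Matrix n n S) (2 * Fintype.card n) = 0 by
    rw [h, AlternatingMap.zero_apply]
  refine Module.Basis.ext_alternating (Matrix.stdBasis S n n) fun v _ => ?_
  have hv (i) : Matrix.stdBasis S n n (v i) =
      (Int.castRingHom S).mapMatrix (Matrix.single (v i).1 (v i).2 1) := by
    rw [← Prod.mk.eta (p := v i), Matrix.stdBasis_eq_single]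
    rw [RingHom.mapMatrix_apply, Matrix.map_single, map_one]
  simp only [hv]
  rw [← map_standardPolynomial ℤ S, hℤ, map_zero, AlternatingMap.zero_apply]

theorem standardPolynomial_add_mem {R S : Type*} [CommRing R] [Ring S] [Algebra R S]
    (P : Submodule R S) {k l : ℕ}
    (h : ∀ (a : Fin k → S) (b : Fin l → S),
      standardPolynomial R S k a * standardPolynomial R S l b ∈ P)
    (a : Fin (k + l) → S) : standardPolynomial R S (k + l) a ∈ P := by
  let g := LinearMap.mul' R S
  have hmul : g.compMultilinearMap (MultilinearMap.domCoprod (MultilinearMap.mkPiAlgebraFin R k S)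
      (MultilinearMap.mkPiAlgebraFin R l S)) =
      (MultilinearMap.mkPiAlgebraFin R (k + l) S).domDomCongr finSumFinEquiv.symm := by
    ext v
    simp only [g, LinearMap.compMultilinearMap_apply, MultilinearMap.domCoprod_apply,
      MultilinearMap.domDomCongr_apply, MultilinearMap.mkPiAlgebraFin_apply,
      LinearMap.mul'_apply, List.ofFn_add, List.prod_append]
    congr 3 with i
    · exact congrArg v (finSumFinEquiv_symm_apply_castAdd i).symm
    · exact congrArg v (finSumFinEquiv_symm_apply_natAdd i).symm
  have key : standardPolynomial R S (k + l) a =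
      g (((standardPolynomial R S k).domCoprod (standardPolynomial R S l))
        (a ∘ finSumFinEquiv)) := by
    rw [standardPolynomial, standardPolynomial, standardPolynomial,
      ← MultilinearMap.domCoprod_alternization,
      ← LinearMap.compAlternatingMap_apply, ← LinearMap.compMultilinearMap_alternatization, hmul,
      MultilinearMap.alternatization_apply,
      MultilinearMap.alternatization_apply]
    refine Fintype.sum_equiv finSumFinEquiv.symm.permCongr _ _ fun σ => ?_
    rw [Equiv.Perm.sign_permCongr]
    congr 1
    simp [MultilinearMap.domDomCongr_apply, Function.comp_def]
  rw [key, AlternatingMap.domCoprod_apply, sum_apply, map_sum]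
  refine Submodule.sum_mem _ fun σ _ => ?_
  induction σ using Quotient.inductionOn' with | _ σ
  rw [AlternatingMap.domCoprod.summand_mk'', smul_apply]
  rw [Units.smul_def, map_zsmul]
  refine zsmul_mem ?_ _
  exact h _ _

namespace ExteriorAlgebra

variable {R M : Type*} [CommRing R] [AddCommGroup M] [Module R M]

variable (R M) in
theorem iSup_exteriorPower : ⨆ i : ℕ, ⋀[R]^i M = ⊤ :=
  (DirectSum.Decomposition.isInternal (fun i : ℕ => ⋀[R]^i M)).submodule_iSup_eq_top

variable (R M) in
/-- The elements of an exterior algebra all of whose components have degree at least `j`. -/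
def degreeGE_s12 (j : ℕ) : Submodule R (ExteriorAlgebra R M) :=
  ⋀[R]^j M * ⊤

theorem mul_mem_degreeGE {i j : ℕ} {x y : ExteriorAlgebra R M} (hx : x ∈ degreeGE_s12 R M i)
    (hy : y ∈ degreeGE_s12 R M j) : x * y ∈ degreeGE_s12 R M (i + j) := by
  have hcomm : (⊤ : Submodule R (ExteriorAlgebra R M)) * ⋀[R]^j M = ⋀[R]^j M * ⊤ := by
    simp only [← iSup_exteriorPower R M, Submodule.iSup_mul, Submodule.mul_iSup, ← pow_add,
      add_comm]
  have h := Submodule.mul_mem_mul hx hy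
  rw [degreeGE_s12, degreeGE_s12, mul_assoc, ← mul_assoc ⊤, hcomm, mul_assoc, ← mul_assoc,
    ← pow_add] at h
  have hle : ⋀[R]^(i + j) M * (⊤ * ⊤) ≤ degreeGE_s12 R M (i + j) := mul_le_mul' le_rfl le_top
  exact hle h

theorem mem_degreeGE_two_of_toTrivSqZeroExt_eq_zero [Module Rᵐᵒᵖ M] [IsCentralScalar R M]
    {x : ExteriorAlgebra R M} (hx : toTrivSqZeroExt x = 0) : x ∈ degreeGE_s12 R M 2 := by
  have hker : degreeGE_s12 R M 2 ≤
      LinearMap.ker (toTrivSqZeroExt : ExteriorAlgebra R M →ₐ[R] _).toLinearMap := by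
    rw [degreeGE_s12, exteriorPower, sq]
    refine Submodule.mul_le.mpr fun y hy z _ => ?_
    rw [LinearMap.mem_ker, AlgHom.toLinearMap_apply, map_mul]
    suffices h : toTrivSqZeroExt y = 0 by rw [h, zero_mul]
    induction hy using Submodule.mul_induction_on' with
    | mem_mul_mem a ha b hb =>
      obtain ⟨u, rfl⟩ := ha
      obtain ⟨v, rfl⟩ := hb
      rw [map_mul, toTrivSqZeroExt_ι, toTrivSqZeroExt_ι, TrivSqZeroExt.inr_mul_inr]
    | add a _ b _ ha hb => rw [map_add, ha, hb, add_zero]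
  have htop : (⊤ : Submodule R (ExteriorAlgebra R M)) ≤
      (1 ⊔ LinearMap.range (ι R)) ⊔ degreeGE_s12 R M 2 := by
    rw [← iSup_exteriorPower R M]
    refine iSup_le fun i => ?_
    match i with
    | 0 => exact (pow_zero _).le.trans (le_sup_left.trans le_sup_left)
    | 1 => exact (pow_one _).le.trans (le_sup_right.trans le_sup_left)
    | i + 2 =>
      refine le_trans ?_ le_sup_right
      rw [exteriorPower, add_comm, pow_add]
      exact mul_le_mul' le_rfl le_top
  obtain ⟨y, hy, z, hz, rfl⟩ := Submodule.mem_sup.mp (htop (Submodule.mem_top (x := x)))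
  obtain ⟨_, ⟨r, rfl⟩, _, ⟨v, rfl⟩, rfl⟩ := Submodule.mem_sup.mp hy
  have hz0 : toTrivSqZeroExt z = 0 := hker hz
  rw [map_add, map_add, hz0, add_zero, toTrivSqZeroExt_ι] at hx
  have hr : toTrivSqZeroExt (LinearMap.toSpanSingleton R (ExteriorAlgebra R M) 1 r) =
      TrivSqZeroExt.inl r := by
    rw [LinearMap.toSpanSingleton_apply, ← Algebra.algebraMap_eq_smul_one, AlgHom.commutes]
    rfl
  have hx' : (TrivSqZeroExt.inl r + TrivSqZeroExt.inr v : TrivSqZeroExt R M) = 0 := by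
    rw [← hr]
    exact hx
  obtain rfl : r = 0 := by simpa using congrArg TrivSqZeroExt.fst hx'
  obtain rfl : v = 0 := by simpa using congrArg TrivSqZeroExt.snd hx'
  simpa using hz

theorem degreeGE_eq_bot {m j : ℕ} (h : m < j) : degreeGE_s12 R (Fin m → R) j = ⊥ := by
  have hι : ιMulti R j (M := Fin m → R) = 0 := by
    refine Module.Basis.ext_alternating (Pi.basisFun R (Fin m)) fun v hv => ?_
    have := Fintype.card_le_of_injective v hv
    simp only [Fintype.card_fin] at this
    omega
  rw [degreeGE_s12, ← ιMulti_span_fixedDegree, hι]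
  have hspan : Submodule.span R (Set.range
      (0 : (Fin m → R) [⋀^Fin j]→ₗ[R] ExteriorAlgebra R (Fin m → R))) = ⊥ := by
    rw [Submodule.span_eq_bot]
    rintro _ ⟨v, rfl⟩
    rfl
  rw [hspan, Submodule.bot_mul]

end ExteriorAlgebra

theorem standardPolynomial_matrix_exteriorAlgebra_mem {R M n : Type*} [CommRing R]
    [AddCommGroup M] [Module R M] [Module Rᵐᵒᵖ M] [IsCentralScalar R M] [Fintype n] [DecidableEq n]
    (q : ℕ) (A : Fin (2 * Fintype.card n * q) → Matrix n n (ExteriorAlgebra R M)) :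
    standardPolynomial R _ _ A ∈
      (ExteriorAlgebra.degreeGE_s12 R M (2 * q)).matrix (m := n) (n := n) := by
  induction q with
  | zero =>
    intro i j
    rw [mul_zero, ExteriorAlgebra.degreeGE_s12, ExteriorAlgebra.exteriorPower, pow_zero, one_mul]
    exact Submodule.mem_top
  | succ q ih =>
    refine standardPolynomial_add_mem _ (fun a b i j => ?_) A
    rw [Matrix.mul_apply]
    refine Submodule.sum_mem _ fun c _ => ExteriorAlgebra.mul_mem_degreeGE (ih a i c) ?_
    apply ExteriorAlgebra.mem_degreeGE_two_of_toTrivSqZeroExt_eq_zero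
    let f := (ExteriorAlgebra.toTrivSqZeroExt : ExteriorAlgebra R M →ₐ[R] _).toRingHom
    have h : f.mapMatrix (standardPolynomial R _ _ b) = 0 := by
      rw [map_standardPolynomial R (TrivSqZeroExt R M), standardPolynomial_matrix_eq_zero]
    exact congrFun (congrFun h c) j

/-- The ring of `n × n` matrices over the Grassmann algebra of rank `m` satisfies the
standard identity of degree `k = 2n(⌊m/2⌋ + 1)`. -/
theorem grassmann_matrix_standard_identity
    (R : Type*) [CommRing R] (m n : ℕ) (hn : 1 ≤ n)
    (k : ℕ) (hk : k = 2 * n * (m / 2 + 1))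
    (A : Fin k → Matrix (Fin n) (Fin n) (ExteriorAlgebra R (Fin m → R))) :
    ∑ π : Equiv.Perm (Fin k),
      (Equiv.Perm.sign π : ℤ) • (List.ofFn fun i => A (π i)).prod = 0 := by
  obtain rfl : k = 2 * Fintype.card (Fin n) * (m / 2 + 1) := by rw [hk, Fintype.card_fin]
  rw [← standardPolynomial_apply R]
  have h := standardPolynomial_matrix_exteriorAlgebra_mem (m / 2 + 1) A
  rw [ExteriorAlgebra.degreeGE_eq_bot (by omega)] at h
  ext i j
  exact h i j
end
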